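/- arXiv:2508.18682 — 2 statements merged into one kernel-verified Lean document; each statement's English description precedes it below -/
import Mathlib

section
/- Let (X_t)_{t∈T} be a centered Gaussian process on a countable index set T with natural metric d(t,t') := √(E[(X_t − X_{t'})²]), and let μ be a probability measure on T. Then w(μ) ≥ c · ∫₀^∞ √(i(σ)) dσ ≥ c · ∫₀^{σ_m(μ)} √(R_μ(σ²)) dσ, where c := max_{τ∈(0,4/5)} (4 − 5τ)/(2√2 · (4 − τ) · ln(4/τ)) ≈ 0.0935918. -/
open MeasureTheory ProbabilityTheory Set

noncomputable section

/-- The sub-Gaussian norm `‖X‖_{Ψ₂} = inf {K > 0 : E[exp(X²/K²)] ≤ 2}`. -/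
def sgNorm {Ω : Type*} [MeasurableSpace Ω] (P : Measure Ω) (X : Ω → ℝ) : ℝ :=
  sInf {K : ℝ | 0 < K ∧ ∫ ω, Real.exp (X ω ^ 2 / K ^ 2) ∂P ≤ 2}

/-- Relative entropy (in nats). -/
def klDivR {α : Type*} [MeasurableSpace α] (P Q : Measure α) : ℝ :=
  ∫ x, Real.log ((P.rnDeriv Q x).toReal) ∂P

/-- Mutual information of a joint law: `I(U;Z) = D(P_{UZ} ‖ P_U × P_Z)`. -/
def mutInfoR {α β : Type*} [MeasurableSpace α] [MeasurableSpace β] (ρ : Measure (α × β)) : ℝ :=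
  klDivR ρ (ρ.fst.prod ρ.snd)

/-- The rate-distortion function of `μ` on `(T, d)` at distortion level `D`. -/
def rateDistortion {T : Type*} [MeasurableSpace T] (d : T → T → ℝ) (μ : Measure T) (D : ℝ) : ℝ :=
  sInf {v : ℝ | ∃ ρ : Measure (T × T), IsProbabilityMeasure ρ ∧ ρ.snd = μ ∧
    (∫ p, d p.1 p.2 ^ 2 ∂ρ) ≤ D ∧ v = mutInfoR ρ}

/-- `σ_m(μ) = inf_t sqrt (E_{Z∼μ}[d²(Z,t)])`. -/
def sigmaM {T : Type*} [MeasurableSpace T] (d : T → T → ℝ) (μ : Measure T) : ℝ :=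
  sInf {v : ℝ | ∃ t : T, v = Real.sqrt (∫ z, d z t ^ 2 ∂μ)}

/-- The complexity `w(μ) = sup { E[X_Z] : Z has law μ }`. -/
def complexity {Ω T : Type*} [MeasurableSpace Ω] [MeasurableSpace T]
    (P : Measure Ω) (X : T → Ω → ℝ) (μ : Measure T) : ℝ :=
  sSup {r : ℝ | ∃ Z : Ω → T, Measurable Z ∧ P.map Z = μ ∧ r = ∫ ω, X (Z ω) ω ∂P}


/-- A process is a centered Gaussian process if every finite linear combination of its
coordinates has a centered Gaussian law. -/
def IsCenteredGaussianProcess {Ω T : Type*} [MeasurableSpace Ω]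
    (P : Measure Ω) (X : T → Ω → ℝ) : Prop :=
  ∀ c : T →₀ ℝ, ∃ v : NNReal,
    P.map (fun ω => c.sum fun t a => a * X t ω) = gaussianReal 0 v

/-- `i(σ) = inf { I(Z;Ẑ) : couplings of μ with itself with E[d²(Z,Ẑ)] ≤ σ² }`. -/
def iSelf {T : Type*} [MeasurableSpace T] (d : T → T → ℝ) (μ : Measure T) (σ : ℝ) : ℝ :=
  sInf {v : ℝ | ∃ ρ : Measure (T × T), IsProbabilityMeasure ρ ∧ ρ.fst = μ ∧ ρ.snd = μ ∧
    (∫ p, d p.1 p.2 ^ 2 ∂ρ) ≤ σ ^ 2 ∧ v = mutInfoR ρ}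

/-- The constant `c = max_{τ∈(0,4/5)} (4-5τ)/(2√2 (4-τ) ln(4/τ))`. -/
def cRD : ℝ :=
  sSup {x : ℝ | ∃ τ ∈ Ioo (0 : ℝ) (4 / 5),
    x = (4 - 5 * τ) / (2 * Real.sqrt 2 * (4 - τ) * Real.log (4 / τ))}

/-- Gaussian vector with covariance given by inner products of `φ`. -/
structure GV {T E : Type*} [Fintype T] [NormedAddCommGroup E] [InnerProductSpace ℝ E]
    (γ : Measure (T → ℝ)) (φ : T → E) : Prop where
  prob : IsProbabilityMeasure γ
  mgf : ∀ c : T → ℝ, Integrable (fun x => Real.exp (∑ w, c w * x w)) γ ∧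
    ∫ x, Real.exp (∑ w, c w * x w) ∂γ = Real.exp (‖∑ w, c w • φ w‖ ^ 2 / 2)
  cm : ∀ (s : ℝ) (w : T), γ.map (fun x => x + s • (fun u => inner ℝ (φ w) (φ u))) =
     γ.withDensity (fun x => ENNReal.ofReal (Real.exp (s * x w - s ^ 2 * ‖φ w‖ ^ 2 / 2)))
  rot : ∀ a b c : ℝ, a ^ 2 + b ^ 2 = c ^ 2 →
    (γ.prod γ).map (fun p => a • p.1 + b • p.2) = γ.map (fun x => c • x)
  mean : ∀ w, ∫ x, x w ∂γ = 0

/-- exponential growth class -/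
def Gr {T : Type*} [Fintype T] (f : (T → ℝ) → ℝ) : Prop :=
  Measurable f ∧ ∃ C c : ℝ, 0 ≤ C ∧ 0 ≤ c ∧ ∀ x, |f x| ≤ C * Real.exp (c * ‖x‖)

section
variable {T : Type*} [Fintype T]

lemma Gr.const (a : ℝ) : Gr (fun _ : T → ℝ => a) :=
  ⟨measurable_const, |a|, 0, abs_nonneg _, le_rfl, fun x => by simp⟩

lemma Gr.coord (w : T) : Gr (fun x : T → ℝ => x w) := by
  refine ⟨by fun_prop, 1, 1, by norm_num, by norm_num, fun x => ?_⟩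
  have h1 : |x w| ≤ ‖x‖ := by simpa using norm_le_pi_norm x w
  have h2 := Real.add_one_le_exp ‖x‖
  rw [one_mul, one_mul]; linarith

lemma Gr.mul {f g : (T → ℝ) → ℝ} (hf : Gr f) (hg : Gr g) : Gr (fun x => f x * g x) := by
  obtain ⟨mf, C, c, hC, hc, h⟩ := hf
  obtain ⟨mg, C', c', hC', hc', h'⟩ := hg
  refine ⟨mf.mul mg, C * C', c + c', by positivity, by positivity, fun x => ?_⟩
  rw [abs_mul, add_mul, Real.exp_add]
  calc |f x| * |g x| ≤ (C * Real.exp (c * ‖x‖)) * (C' * Real.exp (c' * ‖x‖)) := by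
        gcongr
        · exact h x
        · exact h' x
    _ = _ := by ring

lemma Gr.add {f g : (T → ℝ) → ℝ} (hf : Gr f) (hg : Gr g) : Gr (fun x => f x + g x) := by
  obtain ⟨mf, C, c, hC, hc, h⟩ := hf
  obtain ⟨mg, C', c', hC', hc', h'⟩ := hg
  refine ⟨mf.add mg, C + C', c + c', by positivity, by positivity, fun x => ?_⟩
  have h1 : Real.exp (c * ‖x‖) ≤ Real.exp ((c + c') * ‖x‖) := by
    apply Real.exp_le_exp.2; nlinarith [norm_nonneg x]
  have h2 : Real.exp (c' * ‖x‖) ≤ Real.exp ((c + c') * ‖x‖) := by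
    apply Real.exp_le_exp.2; nlinarith [norm_nonneg x]
  have h3 := abs_add_le (f x) (g x)
  have := h x
  have := h' x
  nlinarith [mul_le_mul_of_nonneg_left h1 hC, mul_le_mul_of_nonneg_left h2 hC']

lemma Gr.sub {f g : (T → ℝ) → ℝ} (hf : Gr f) (hg : Gr g) : Gr (fun x => f x - g x) := by
  have := hf.add ((Gr.const (-1)).mul hg)
  simpa [sub_eq_add_neg] using this

lemma Gr.sum {ι : Type*} (s : Finset ι) {f : ι → (T → ℝ) → ℝ} (hf : ∀ i ∈ s, Gr (f i)) :
    Gr (fun x => ∑ i ∈ s, f i x) := by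
  classical
  induction s using Finset.induction_on with
  | empty => simpa using Gr.const 0
  | insert a s ha ih =>
    simp only [Finset.sum_insert ha]
    exact (hf a (by simp)).add (ih fun i hi => hf i (by simp [hi]))

lemma Gr.of_le {f g : (T → ℝ) → ℝ} (hf : Measurable f) (hg : Gr g) (h : ∀ x, |f x| ≤ |g x|) :
    Gr f := by
  obtain ⟨mg, C', c', hC', hc', h'⟩ := hg
  exact ⟨hf, C', c', hC', hc', fun x => (h x).trans (h' x)⟩

lemma Gr.abs {f : (T → ℝ) → ℝ} (hf : Gr f) : Gr (fun x => |f x|) := by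
  obtain ⟨mg, C', c', hC', hc', h'⟩ := hf
  exact ⟨mg.abs, C', c', hC', hc', fun x => by simpa using h' x⟩

lemma Gr.shift {f : (T → ℝ) → ℝ} (hf : Gr f) (v : T → ℝ) : Gr (fun x => f (x + v)) := by
  obtain ⟨mf, C, c, hC, hc, h⟩ := hf
  refine ⟨by fun_prop, C * Real.exp (c * ‖v‖), c, by positivity, by positivity, fun x => ?_⟩
  refine (h _).trans ?_
  rw [mul_assoc, ← Real.exp_add]
  gcongr
  nlinarith [norm_add_le x v]

lemma Gr.smul {f : (T → ℝ) → ℝ} (hf : Gr f) (a : ℝ) : Gr (fun x => f (a • x)) := by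
  obtain ⟨mf, C, c, hC, hc, h⟩ := hf
  refine ⟨by fun_prop, C, c * |a|, by positivity, by positivity, fun x => ?_⟩
  refine (h _).trans ?_
  rw [norm_smul, mul_assoc]; simp

lemma Gr.exp_lin (w : T) (s b : ℝ) : Gr (fun x : T → ℝ => Real.exp (s * x w - b)) := by
  refine ⟨by fun_prop, Real.exp (-b), |s|, by positivity, by positivity, fun x => ?_⟩
  rw [abs_of_pos (Real.exp_pos _), ← Real.exp_add]
  apply Real.exp_le_exp.2
  have h1 : |x w| ≤ ‖x‖ := by simpa using norm_le_pi_norm x w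
  have : s * x w ≤ |s| * ‖x‖ := by
    calc s * x w ≤ |s * x w| := le_abs_self _
      _ = |s| * |x w| := abs_mul _ _
      _ ≤ _ := by gcongr
  linarith

variable {E : Type*} [NormedAddCommGroup E] [InnerProductSpace ℝ E]
  {γ : Measure (T → ℝ)} {φ : T → E}

lemma GV.integrable_exp_norm (h : GV γ φ) (c : ℝ) (hc : 0 ≤ c) :
    Integrable (fun x : T → ℝ => Real.exp (c * ‖x‖)) γ := by
  classical
  have := h.prob
  have hi : ∀ (w : T) (a : ℝ), Integrable (fun x : T → ℝ => Real.exp (a * x w)) γ := by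
    intro w a
    have := (h.mgf (fun u => if u = w then a else 0)).1
    simpa using this
  have hb : Integrable (fun x : T → ℝ => 1 + ∑ w, (Real.exp (c * x w) + Real.exp ((-c) * x w))) γ :=
    (integrable_const 1).add (integrable_finsetSum _ fun w _ => (hi w c).add (hi w (-c)))
  refine hb.mono' (by fun_prop) (Filter.Eventually.of_forall fun x => ?_)
  rw [Real.norm_eq_abs, abs_of_pos (Real.exp_pos _)]
  have hpos : ∀ w, 0 ≤ Real.exp (c * x w) + Real.exp ((-c) * x w) := fun w => by positivity
  rcases isEmpty_or_nonempty T with hT | hT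
  · have : x = 0 := Subsingleton.elim _ _
    simp [this]
  · obtain ⟨w, hw⟩ : ∃ w, ‖x‖ = |x w| := by
      obtain ⟨w, -, hw⟩ := Finset.exists_max_image Finset.univ (fun w => |x w|) Finset.univ_nonempty
      refine ⟨w, le_antisymm ?_ (by simpa using norm_le_pi_norm x w)⟩
      exact (pi_norm_le_iff_of_nonneg (abs_nonneg _)).2 fun i => hw i (Finset.mem_univ _)
    have h1 := Finset.single_le_sum (fun i _ => hpos i) (Finset.mem_univ w)
    have h2 : Real.exp (c * ‖x‖) ≤ Real.exp (c * x w) + Real.exp ((-c) * x w) := by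
      rw [hw]
      rcases abs_cases (x w) with ⟨h, _⟩ | ⟨h, _⟩
      · rw [h]; linarith [Real.exp_pos (-c * x w)]
      · rw [h, mul_neg, neg_mul]; linarith [Real.exp_pos (c * x w)]
    linarith

lemma GV.integrable (h : GV γ φ) {f : (T → ℝ) → ℝ} (hf : Gr f) : Integrable f γ := by
  obtain ⟨mf, C, c, hC, hc, hb⟩ := hf
  exact ((h.integrable_exp_norm c hc).const_mul C).mono' mf.aestronglyMeasurable
    (Filter.Eventually.of_forall fun x => by simpa using hb x)

/-- tilt density -/
def eh (φ : T → E) (s : ℝ) (w : T) (x : T → ℝ) : ℝ :=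
  Real.exp (s * x w - s ^ 2 * ‖φ w‖ ^ 2 / 2)

/-- covariance vector -/
def kv (φ : T → E) (w : T) : T → ℝ := fun u => inner ℝ (φ w) (φ u)

lemma eh_pos (φ : T → E) (s : ℝ) (w : T) (x : T → ℝ) : 0 < eh φ s w x := Real.exp_pos _

lemma Gr.of_eh (φ : T → E) (s : ℝ) (w : T) : Gr (eh φ s w) := Gr.exp_lin w s _

lemma GV.cm_int (h : GV γ φ) {f : (T → ℝ) → ℝ} (hf : Measurable f) (s : ℝ) (w : T) :
    ∫ x, f (x + s • kv φ w) ∂γ = ∫ x, eh φ s w x * f x ∂γ := by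
  have h1 := h.cm s w
  have h2 : ∫ x, f (x + s • kv φ w) ∂γ = ∫ x, f x ∂(γ.map (fun x => x + s • kv φ w)) := by
    rw [integral_map (by fun_prop) hf.aestronglyMeasurable]
  rw [h2]
  unfold kv
  rw [h1, integral_withDensity_eq_integral_toReal_smul (by fun_prop) (by simp)]
  refine integral_congr_ae (Filter.Eventually.of_forall fun x => ?_)
  simp only [smul_eq_mul, eh]
  rw [ENNReal.toReal_ofReal (Real.exp_pos _).le]

lemma GV.int_eh (h : GV γ φ) (s : ℝ) (w : T) : ∫ x, eh φ s w x ∂γ = 1 := by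
  have := h.prob
  have := h.cm_int (f := fun _ => 1) measurable_const s w
  simpa using this.symm

lemma GV.int_eh_coord (h : GV γ φ) (s : ℝ) (w u : T) :
    ∫ x, eh φ s w x * x u ∂γ = s * inner ℝ (φ w) (φ u) := by
  have := h.prob
  have := h.cm_int (f := fun x => x u) (by fun_prop) s w
  rw [← this]
  simp only [Pi.add_apply, Pi.smul_apply, kv, smul_eq_mul]
  rw [integral_add (h.integrable (Gr.coord u)) (integrable_const _), h.mean u]
  simp

/-- mixture density -/
def Dn (φ : T → E) (s : ℝ) (q : T → ℝ) (x : T → ℝ) : ℝ := ∑ w, q w * eh φ s w x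

lemma Gr.of_Dn (φ : T → E) (s : ℝ) (q : T → ℝ) : Gr (Dn φ s q) :=
  Gr.sum _ fun w _ => (Gr.const (q w)).mul (Gr.of_eh φ s w)

structure Pmf (q : T → ℝ) : Prop where
  nn : ∀ w, 0 ≤ q w
  sum : ∑ w, q w = 1

lemma Pmf.ex_pos {q : T → ℝ} (hq : Pmf q) : ∃ w, 0 < q w := by
  by_contra hcon
  push Not at hcon
  have : ∑ w, q w ≤ 0 := Finset.sum_nonpos fun w _ => hcon w
  rw [hq.sum] at this; linarith

lemma Dn_ge {q : T → ℝ} (hq : Pmf q) (φ : T → E) (s : ℝ) (x : T → ℝ) (w : T) :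
    q w * eh φ s w x ≤ Dn φ s q x :=
  Finset.single_le_sum (f := fun w => q w * eh φ s w x)
    (fun i _ => mul_nonneg (hq.nn i) (eh_pos φ s i x).le) (Finset.mem_univ w)

lemma Dn_pos {q : T → ℝ} (hq : Pmf q) (φ : T → E) (s : ℝ) (x : T → ℝ) : 0 < Dn φ s q x := by
  obtain ⟨w, hw⟩ := hq.ex_pos
  exact lt_of_lt_of_le (mul_pos hw (eh_pos φ s w x)) (Dn_ge hq φ s x w)

lemma Gr.Dn_inv {q : T → ℝ} (hq : Pmf q) (φ : T → E) (s : ℝ) :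
    Gr (fun x => (Dn φ s q x)⁻¹) := by
  obtain ⟨w, hw⟩ := hq.ex_pos
  have h1 : Gr (fun x : T → ℝ => (q w)⁻¹ * Real.exp ((-s) * x w - (-(s ^ 2 * ‖φ w‖ ^ 2 / 2)))) :=
    (Gr.const _).mul (Gr.exp_lin w _ _)
  refine Gr.of_le (Gr.of_Dn φ s q).1.inv h1 fun x => ?_
  have hD := Dn_pos hq φ s x
  rw [abs_of_pos (inv_pos.2 hD), abs_of_pos (by positivity)]
  have h2 := Dn_ge hq φ s x w
  have h3 : (q w)⁻¹ * Real.exp ((-s) * x w - (-(s ^ 2 * ‖φ w‖ ^ 2 / 2))) = (q w * eh φ s w x)⁻¹ := by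
    rw [mul_inv, eh, ← Real.exp_neg]; congr 2; ring
  rw [h3]
  exact inv_anti₀ (mul_pos hw (eh_pos φ s w x)) h2

lemma Gr.log_of {f : (T → ℝ) → ℝ} (hf : Gr f) (hi : Gr (fun x => (f x)⁻¹)) (hp : ∀ x, 0 < f x) :
    Gr (fun x => Real.log (f x)) := by
  refine Gr.of_le (Real.measurable_log.comp hf.1) (hf.add hi) fun x => ?_
  have h1 := Real.log_le_self (hp x).le
  have h2 := Real.log_le_self (inv_pos.2 (hp x)).le
  rw [Real.log_inv] at h2
  rw [abs_of_pos (add_pos (hp x) (inv_pos.2 (hp x)))]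
  have := hp x
  have := inv_pos.2 (hp x)
  rw [abs_le]; constructor <;> linarith

lemma Gr.logDn {q : T → ℝ} (hq : Pmf q) (φ : T → E) (s : ℝ) :
    Gr (fun x => Real.log (Dn φ s q x)) :=
  Gr.log_of (Gr.of_Dn φ s q) (Gr.Dn_inv hq φ s) (Dn_pos hq φ s)

lemma GV.int_Dn (h : GV γ φ) {q : T → ℝ} (hq : Pmf q) (s : ℝ) : ∫ x, Dn φ s q x ∂γ = 1 := by
  unfold Dn
  rw [integral_finsetSum _ fun w _ => (h.integrable (Gr.of_eh φ s w)).const_mul _]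
  simp [integral_const_mul, h.int_eh, hq.sum]

end

section
variable {T : Type*} [Fintype T]
variable {E : Type*} [NormedAddCommGroup E] [InnerProductSpace ℝ E]
  {γ : Measure (T → ℝ)} {φ : T → E}

def rr (γ : Measure (T → ℝ)) (φ : T → E) (s : ℝ) (q : T → ℝ) (w u : T) : ℝ :=
  ∫ x, eh φ s w x * eh φ s u x * (Dn φ s q x)⁻¹ ∂γ

def MM (γ : Measure (T → ℝ)) (φ : T → E) (s : ℝ) (q : T → ℝ) : ℝ :=
  ∑ w, ∑ u, q w * q u * rr γ φ s q w u * ‖φ w - φ u‖ ^ 2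

def FF (γ : Measure (T → ℝ)) (φ : T → E) (s : ℝ) (q : T → ℝ) : ℝ :=
  s ^ 2 / 2 * ∑ w, q w * ‖φ w‖ ^ 2 - ∫ x, Dn φ s q x * Real.log (Dn φ s q x) ∂γ

lemma rr_symm (γ : Measure (T → ℝ)) (φ : T → E) (s : ℝ) (q : T → ℝ) (w u : T) :
    rr γ φ s q w u = rr γ φ s q u w := by
  unfold rr; congr 1; ext x; ring

lemma rr_nonneg (γ : Measure (T → ℝ)) (φ : T → E) (s : ℝ) {q : T → ℝ} (hq : Pmf q) (w u : T) :
    0 ≤ rr γ φ s q w u :=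
  integral_nonneg fun x => by
    have := eh_pos φ s w x
    have := eh_pos φ s u x
    have := Dn_pos hq φ s x
    simp only [Pi.zero_apply]; positivity

lemma Gr.rr_int {q : T → ℝ} (hq : Pmf q) (φ : T → E) (s : ℝ) (w u : T) :
    Gr (fun x => eh φ s w x * eh φ s u x * (Dn φ s q x)⁻¹) :=
  ((Gr.of_eh φ s w).mul (Gr.of_eh φ s u)).mul (Gr.Dn_inv hq φ s)

lemma GV.sum_rr (h : GV γ φ) (s : ℝ) {q : T → ℝ} (hq : Pmf q) (w : T) :
    ∑ u, q u * rr γ φ s q w u = 1 := by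
  unfold rr
  simp_rw [← integral_const_mul]
  rw [← integral_finsetSum _ fun u _ => ((h.integrable (Gr.rr_int hq φ s w u)).const_mul _)]
  rw [← h.int_eh s w]
  congr 1; ext x
  have := (Dn_pos hq φ s x).ne'
  have h2 : ∀ u, q u * (eh φ s w x * eh φ s u x * (Dn φ s q x)⁻¹) =
     (q u * eh φ s u x) * (eh φ s w x * (Dn φ s q x)⁻¹) := fun u => by ring
  simp_rw [h2]
  rw [← Finset.sum_mul]
  change Dn φ s q x * _ = _
  field_simp

lemma GV.MM_eq (h : GV γ φ) (s : ℝ) {q : T → ℝ} (hq : Pmf q) :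
    MM γ φ s q = 2 * ∑ w, q w * ‖φ w‖ ^ 2 -
      2 * ∑ w, ∑ u, q w * q u * rr γ φ s q w u * inner ℝ (φ w) (φ u) := by
  unfold MM
  have h1 : ∀ w u, q w * q u * rr γ φ s q w u * ‖φ w - φ u‖ ^ 2 =
     (q u * rr γ φ s q w u) * (q w * ‖φ w‖ ^ 2) + (q w * rr γ φ s q u w) * (q u * ‖φ u‖ ^ 2)
      - 2 * (q w * q u * rr γ φ s q w u * inner ℝ (φ w) (φ u)) := fun w u => by
    rw [norm_sub_sq_real, rr_symm γ φ s q u w]; ring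
  simp_rw [h1, Finset.sum_sub_distrib, Finset.sum_add_distrib]
  have e1 : ∑ w, ∑ u, (q u * rr γ φ s q w u) * (q w * ‖φ w‖ ^ 2) = ∑ w, q w * ‖φ w‖ ^ 2 := by
    simp_rw [← Finset.sum_mul, h.sum_rr s hq, one_mul]
  have e2 : ∑ w, ∑ u, (q w * rr γ φ s q u w) * (q u * ‖φ u‖ ^ 2) = ∑ w, q w * ‖φ w‖ ^ 2 := by
    rw [Finset.sum_comm]; exact e1
  rw [e1, e2]
  simp_rw [← Finset.mul_sum]
  ring

lemma GV.FF_zero (h : GV γ φ) {q : T → ℝ} (hq : Pmf q) : FF γ φ 0 q = 0 := by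
  have : ∀ x, Dn φ 0 q x = 1 := fun x => by simp [Dn, eh, hq.sum]
  simp [FF, this]

lemma log_ineq {a : ℝ} (ha : 0 < a) (b : ℝ) : a * b + a - Real.exp b ≤ a * Real.log a := by
  have h1 := Real.add_one_le_exp (b - Real.log a)
  rw [Real.exp_sub, Real.exp_log ha] at h1
  have h2 := mul_le_mul_of_nonneg_left h1 ha.le
  rw [mul_div_cancel₀ _ ha.ne'] at h2
  nlinarith

lemma GV.ent_lower (h : GV γ φ) (s : ℝ) {q : T → ℝ} (hq : Pmf q) :
    s ^ 2 / 2 * ‖∑ w, q w • φ w‖ ^ 2 ≤ ∫ x, Dn φ s q x * Real.log (Dn φ s q x) ∂γ := by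
  have := h.prob
  set m := ∑ w, q w • φ w with hm
  set c := s ^ 2 / 2 * ‖m‖ ^ 2 with hc
  have g1 : Gr (fun x => Dn φ s q x * (s * ∑ u, q u * x u - c)) :=
    (Gr.of_Dn φ s q).mul (((Gr.const s).mul
      (Gr.sum _ fun u _ => (Gr.const _).mul (Gr.coord u))).sub (Gr.const c))
  have i2 : Integrable (fun x => Real.exp (s * ∑ u, q u * x u - c)) γ := by
    have := (h.mgf (fun w => s * q w)).1.mul_const (Real.exp (-c))
    refine this.congr (Filter.Eventually.of_forall fun x => ?_)
    simp only [← Real.exp_add, Finset.mul_sum, mul_assoc]; rfl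
  have e2 : ∫ x, Real.exp (s * ∑ u, q u * x u - c) ∂γ = 1 := by
    have := (h.mgf (fun w => s * q w)).2
    have h3 : ∑ w, (s * q w) • φ w = s • m := by
      rw [hm, Finset.smul_sum]; simp_rw [smul_smul]
    rw [h3, norm_smul, mul_pow, Real.norm_eq_abs, sq_abs] at this
    have h4 : (fun x : T → ℝ => Real.exp (s * ∑ u, q u * x u - c)) =
        fun x => Real.exp (∑ w, s * q w * x w) * Real.exp (-c) := by
      ext x
      simp only [← Real.exp_add, Finset.mul_sum, mul_assoc]; rfl
    rw [h4, integral_mul_const, this, ← Real.exp_add, hc]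
    ring_nf; simp
  have e1 : ∫ x, Dn φ s q x * (s * ∑ u, q u * x u - c) ∂γ = c := by
    have h5 : (fun x : T → ℝ => Dn φ s q x * (s * ∑ u, q u * x u - c)) =
        fun x => (∑ w, ∑ u, (q w * s * q u) * (eh φ s w x * x u)) - c * Dn φ s q x := by
      ext x
      have : ∑ w, ∑ u, (q w * s * q u) * (eh φ s w x * x u) = Dn φ s q x * (s * ∑ u, q u * x u) := by
        unfold Dn
        rw [Finset.sum_mul]
        refine Finset.sum_congr rfl fun w _ => ?_
        rw [Finset.mul_sum, Finset.mul_sum]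
        refine Finset.sum_congr rfl fun u _ => by ring
      rw [this]; ring
    have gi : ∀ w u, Integrable (fun x => (q w * s * q u) * (eh φ s w x * x u)) γ := fun w u =>
      h.integrable ((Gr.const _).mul ((Gr.of_eh φ s w).mul (Gr.coord u)))
    rw [h5, integral_sub (integrable_finsetSum _ fun w _ => integrable_finsetSum _ fun u _ => gi w u)
      ((h.integrable (Gr.of_Dn φ s q)).const_mul c), integral_const_mul, h.int_Dn hq]
    rw [integral_finsetSum _ fun w _ => integrable_finsetSum _ fun u _ => gi w u]
    have h6 : ∀ w, ∫ x, ∑ u, (q w * s * q u) * (eh φ s w x * x u) ∂γ =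
        ∑ u, s ^ 2 * (q w * (q u * inner ℝ (φ w) (φ u))) := fun w => by
      rw [integral_finsetSum _ fun u _ => gi w u]
      refine Finset.sum_congr rfl fun u _ => ?_
      rw [integral_const_mul, h.int_eh_coord]; ring
    simp_rw [h6]
    have h7 : ‖m‖ ^ 2 = ∑ w, ∑ u, q w * (q u * inner ℝ (φ w) (φ u)) := by
      rw [← real_inner_self_eq_norm_sq, hm, sum_inner]
      refine Finset.sum_congr rfl fun w _ => ?_
      rw [inner_sum]
      refine Finset.sum_congr rfl fun u _ => ?_
      rw [real_inner_smul_left, real_inner_smul_right]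
    simp_rw [← Finset.mul_sum] at h7 ⊢
    rw [← h7, hc]; ring
  have iL : Integrable (fun x => Dn φ s q x * (s * ∑ u, q u * x u - c) + Dn φ s q x
      - Real.exp (s * ∑ u, q u * x u - c)) γ :=
    ((h.integrable g1).add (h.integrable (Gr.of_Dn φ s q))).sub i2
  have key := integral_mono iL (h.integrable ((Gr.of_Dn φ s q).mul (Gr.logDn hq φ s)))
    (fun x => log_ineq (Dn_pos hq φ s x) (s * ∑ u, q u * x u - c))
  have i12 : Integrable (fun x => Dn φ s q x * (s * ∑ u, q u * x u - c) + Dn φ s q x) γ :=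
    (h.integrable g1).add (h.integrable (Gr.of_Dn φ s q))
  rw [integral_sub i12 i2,
    integral_add (h.integrable g1) (h.integrable (Gr.of_Dn φ s q)), e1, e2, h.int_Dn hq] at key
  linarith

/-- posterior -/
def pst (φ : T → E) (s : ℝ) (q : T → ℝ) (x : T → ℝ) (w : T) : ℝ :=
  q w * eh φ s w x * (Dn φ s q x)⁻¹

lemma pst_pmf (φ : T → E) (s : ℝ) {q : T → ℝ} (hq : Pmf q) (x : T → ℝ) : Pmf (pst φ s q x) := by
  have := Dn_pos hq φ s x
  refine ⟨fun w => ?_, ?_⟩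
  · have := hq.nn w
    have := eh_pos φ s w x
    unfold pst; positivity
  · unfold pst
    rw [← Finset.sum_mul]
    change Dn φ s q x * _ = 1
    field_simp

lemma Gr.pst {q : T → ℝ} (hq : Pmf q) (φ : T → E) (s : ℝ) (w : T) :
    Gr (fun x => pst φ s q x w) :=
  ((Gr.const _).mul (Gr.of_eh φ s w)).mul (Gr.Dn_inv hq φ s)

lemma GV.FF_inc (h : GV γ φ) {q : T → ℝ} (hq : Pmf q) (s δ s' : ℝ) (hs : s ^ 2 + δ ^ 2 = s' ^ 2) :
    FF γ φ s' q ≤ FF γ φ s q + δ ^ 2 / 4 * MM γ φ s q := by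
  have := h.prob
  -- the function in terms of y = s' x
  set ev : T → (T → ℝ) → ℝ := fun w y => Real.exp (1 * y w - s' ^ 2 * ‖φ w‖ ^ 2 / 2) with hev
  set H : (T → ℝ) → ℝ := fun y => (∑ w, q w * ev w y) * Real.log (∑ w, q w * ev w y) with hH
  have hHm : Measurable H := by
    have : Measurable (fun y => ∑ w, q w * ev w y) := by
      simp only [hev]; fun_prop
    exact this.mul (Real.measurable_log.comp this)
  have hD' : ∀ x, H (s' • x) = Dn φ s' q x * Real.log (Dn φ s' q x) := fun x => by
    simp [hH, hev, Dn, eh]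
  have hI' : Integrable (fun x => H (s' • x)) γ := by
    simp_rw [hD']
    exact h.integrable ((Gr.of_Dn φ s' q).mul (Gr.logDn hq φ s'))
  have hrot := h.rot s δ s' hs
  have hImap : Integrable H ((γ.prod γ).map (fun p => s • p.1 + δ • p.2)) := by
    rw [hrot]
    exact (integrable_map_measure hHm.aestronglyMeasurable (by fun_prop)).2 hI'
  have hIp : Integrable (fun p : (T → ℝ) × (T → ℝ) => H (s • p.1 + δ • p.2)) (γ.prod γ) :=
    (integrable_map_measure hHm.aestronglyMeasurable (by fun_prop)).1 hImap
  have e1 : ∫ x, Dn φ s' q x * Real.log (Dn φ s' q x) ∂γ =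
      ∫ x, ∫ y, H (s • x + δ • y) ∂γ ∂γ := by
    rw [integral_integral (f := fun x y => H (s • x + δ • y)) hIp]
    rw [← integral_map (f := H) (φ := fun p : (T → ℝ) × (T → ℝ) => s • p.1 + δ • p.2)
      (by fun_prop) hHm.aestronglyMeasurable, hrot,
      integral_map (by fun_prop) hHm.aestronglyMeasurable]
    simp_rw [hD']
  have hfac : ∀ x y, (∑ w, q w * ev w (s • x + δ • y)) = Dn φ s q x * Dn φ δ (pst φ s q x) y := by
    intro x y
    have hne := (Dn_pos hq φ s x).ne'
    unfold Dn at hne ⊢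
    rw [Finset.mul_sum]
    refine Finset.sum_congr rfl fun w _ => ?_
    unfold pst Dn
    have : ev w (s • x + δ • y) = eh φ s w x * eh φ δ w y := by
      simp only [hev, eh, ← Real.exp_add, ← hs]
      congr 1; simp; ring
    rw [this]
    field_simp
  have hinner : ∀ x, Dn φ s q x * Real.log (Dn φ s q x) +
      δ ^ 2 / 2 * (Dn φ s q x * ‖∑ w, pst φ s q x w • φ w‖ ^ 2) ≤ ∫ y, H (s • x + δ • y) ∂γ := by
    intro x
    have hp := pst_pmf φ s hq x
    have hx := Dn_pos hq φ s x
    have e : ∀ y, H (s • x + δ • y) = (Dn φ s q x * Real.log (Dn φ s q x)) * Dn φ δ (pst φ s q x) y +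
        Dn φ s q x * (Dn φ δ (pst φ s q x) y * Real.log (Dn φ δ (pst φ s q x) y)) := by
      intro y
      simp only [hH, hfac]
      rw [Real.log_mul hx.ne' (Dn_pos hp φ δ y).ne']; ring
    simp_rw [e]
    rw [integral_add ((h.integrable (Gr.of_Dn φ δ _)).const_mul _)
      ((h.integrable ((Gr.of_Dn φ δ _).mul (Gr.logDn hp φ δ))).const_mul _),
      integral_const_mul, integral_const_mul, h.int_Dn hp]
    have := mul_le_mul_of_nonneg_left (h.ent_lower δ hp) hx.le
    linarith
  have nexp : ∀ x, Dn φ s q x * ‖∑ w, pst φ s q x w • φ w‖ ^ 2 = ∑ w, ∑ u,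
      (q w * q u * inner ℝ (φ w) (φ u)) * (eh φ s w x * eh φ s u x * (Dn φ s q x)⁻¹) := by
    intro x
    have hx := (Dn_pos hq φ s x).ne'
    rw [← real_inner_self_eq_norm_sq, sum_inner, Finset.mul_sum]
    refine Finset.sum_congr rfl fun w _ => ?_
    rw [inner_sum, Finset.mul_sum]
    refine Finset.sum_congr rfl fun u _ => ?_
    rw [real_inner_smul_left, real_inner_smul_right]
    unfold pst
    field_simp
  have gi : ∀ w u, Integrable (fun x => (q w * q u * inner ℝ (φ w) (φ u)) *
      (eh φ s w x * eh φ s u x * (Dn φ s q x)⁻¹)) γ := fun w u =>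
    (h.integrable (Gr.rr_int hq φ s w u)).const_mul _
  have iN : Integrable (fun x => Dn φ s q x * ‖∑ w, pst φ s q x w • φ w‖ ^ 2) γ := by
    simp_rw [nexp]
    exact integrable_finsetSum _ fun w _ => integrable_finsetSum _ fun u _ => gi w u
  have eN : ∫ x, Dn φ s q x * ‖∑ w, pst φ s q x w • φ w‖ ^ 2 ∂γ =
      ∑ w, ∑ u, q w * q u * rr γ φ s q w u * inner ℝ (φ w) (φ u) := by
    simp_rw [nexp]
    rw [integral_finsetSum _ fun w _ => integrable_finsetSum _ fun u _ => gi w u]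
    refine Finset.sum_congr rfl fun w _ => ?_
    rw [integral_finsetSum _ fun u _ => gi w u]
    refine Finset.sum_congr rfl fun u _ => ?_
    rw [integral_const_mul, rr]; ring
  have iE : Integrable (fun x => Dn φ s q x * Real.log (Dn φ s q x)) γ :=
    h.integrable ((Gr.of_Dn φ s q).mul (Gr.logDn hq φ s))
  have key := integral_mono (iE.add (iN.const_mul (δ ^ 2 / 2))) hIp.integral_prod_left hinner
  simp only [Pi.add_apply] at key
  rw [integral_add iE (iN.const_mul _), integral_const_mul, eN, ← e1] at key
  rw [h.MM_eq s hq]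
  unfold FF
  rw [← hs]
  nlinarith

/-- data processing -/
lemma GV.dp (h : GV γ φ) {q : T → ℝ} (hq : Pmf q) (s : ℝ) :
    ∑ w, ∑ u, q w * q u * rr γ φ s q w u * Real.log (rr γ φ s q w u) ≤ FF γ φ s q := by
  have := h.prob
  have step : ∀ w u, rr γ φ s q w u * Real.log (rr γ φ s q w u) ≤
     ∫ x, eh φ s u x * (eh φ s w x * (Dn φ s q x)⁻¹ *
        Real.log (eh φ s w x * (Dn φ s q x)⁻¹)) ∂γ := by
    intro w u
    set a := rr γ φ s q w u with ha
    rcases (rr_nonneg γ φ s hq w u).eq_or_lt with h0 | h0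
    · -- impossible but integral nonneg not clear; show a > 0
      exfalso
      have hint := h.integrable (Gr.rr_int hq φ s w u)
      have hpos : ∀ x, 0 < eh φ s w x * eh φ s u x * (Dn φ s q x)⁻¹ := fun x => by
        have := eh_pos φ s w x
        have := eh_pos φ s u x
        have := Dn_pos hq φ s x
        positivity
      have := (integral_pos_iff_support_of_nonneg (fun x => (hpos x).le) hint).2 (by
        have : Function.support (fun x => eh φ s w x * eh φ s u x * (Dn φ s q x)⁻¹) = univ := by
          ext x; simpa using (hpos x).ne'
        rw [this]; simp)
      unfold rr at h0
      linarith
    have gp : Gr (fun x => eh φ s w x * (Dn φ s q x)⁻¹) := (Gr.of_eh φ s w).mul (Gr.Dn_inv hq φ s)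
    have gpi : Gr (fun x => (eh φ s w x * (Dn φ s q x)⁻¹)⁻¹) := by
      have : Gr (fun x => Real.exp ((-s) * x w - (-(s ^ 2 * ‖φ w‖ ^ 2 / 2))) * Dn φ s q x) :=
        (Gr.exp_lin w _ _).mul (Gr.of_Dn φ s q)
      convert this using 2 with x
      rw [mul_inv, inv_inv, eh, ← Real.exp_neg]; congr 2; ring
    have hpos : ∀ x, 0 < eh φ s w x * (Dn φ s q x)⁻¹ := fun x =>
      mul_pos (eh_pos φ s w x) (inv_pos.2 (Dn_pos hq φ s x))
    have gl := Gr.log_of gp gpi hpos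
    have i1 : Integrable (fun x => (Real.log a + 1) * (eh φ s w x * eh φ s u x * (Dn φ s q x)⁻¹)
        - a * eh φ s u x) γ :=
      ((h.integrable (Gr.rr_int hq φ s w u)).const_mul _).sub
        ((h.integrable (Gr.of_eh φ s u)).const_mul _)
    have key := integral_mono i1 (h.integrable ((Gr.of_eh φ s u).mul (gp.mul gl))) (fun x => by
      have h1 := log_ineq (hpos x) (Real.log a)
      rw [Real.exp_log h0] at h1
      have h2 := mul_le_mul_of_nonneg_left h1 (eh_pos φ s u x).le
      show _ ≤ _
      refine le_trans (le_of_eq ?_) h2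
      ring)
    rw [integral_sub ((h.integrable (Gr.rr_int hq φ s w u)).const_mul _)
        ((h.integrable (Gr.of_eh φ s u)).const_mul _), integral_const_mul, integral_const_mul,
        h.int_eh] at key
    have : ∫ x, eh φ s w x * eh φ s u x * (Dn φ s q x)⁻¹ ∂γ = a := rfl
    rw [this] at key
    linarith
  -- sum
  have gterm : ∀ w u, Gr (fun x => eh φ s u x * (eh φ s w x * (Dn φ s q x)⁻¹ *
        Real.log (eh φ s w x * (Dn φ s q x)⁻¹))) := by
    intro w u
    have : (fun x => eh φ s u x * (eh φ s w x * (Dn φ s q x)⁻¹ *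
        Real.log (eh φ s w x * (Dn φ s q x)⁻¹))) = fun x => eh φ s u x * (eh φ s w x * (Dn φ s q x)⁻¹ *
        ((s * x w - s ^ 2 * ‖φ w‖ ^ 2 / 2) - Real.log (Dn φ s q x))) := by
      ext x
      have h0 : Real.log (eh φ s w x) = s * x w - s ^ 2 * ‖φ w‖ ^ 2 / 2 := by rw [eh, Real.log_exp]
      rw [Real.log_mul (eh_pos φ s w x).ne' (inv_pos.2 (Dn_pos hq φ s x)).ne', Real.log_inv,
        h0, sub_eq_add_neg _ (Real.log _)]
    rw [this]
    exact (Gr.of_eh φ s u).mul (((Gr.of_eh φ s w).mul (Gr.Dn_inv hq φ s)).mul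
      ((((Gr.const s).mul (Gr.coord w)).sub (Gr.const _)).sub (Gr.logDn hq φ s)))
  have e1 : ∑ w, ∑ u, q w * q u * ∫ x, eh φ s u x * (eh φ s w x * (Dn φ s q x)⁻¹ *
        Real.log (eh φ s w x * (Dn φ s q x)⁻¹)) ∂γ = FF γ φ s q := by
    have h1 : ∀ w u, q w * q u * ∫ x, eh φ s u x * (eh φ s w x * (Dn φ s q x)⁻¹ *
        Real.log (eh φ s w x * (Dn φ s q x)⁻¹)) ∂γ = ∫ x, q w * q u * (eh φ s u x *
        (eh φ s w x * (Dn φ s q x)⁻¹ * Real.log (eh φ s w x * (Dn φ s q x)⁻¹))) ∂γ := fun w u => by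
      rw [integral_const_mul]
    simp_rw [h1]
    have gi : ∀ w u, Integrable (fun x => q w * q u * (eh φ s u x *
        (eh φ s w x * (Dn φ s q x)⁻¹ * Real.log (eh φ s w x * (Dn φ s q x)⁻¹)))) γ := fun w u =>
      (h.integrable (gterm w u)).const_mul _
    have h2 : ∀ w, ∑ u, ∫ x, q w * q u * (eh φ s u x *
        (eh φ s w x * (Dn φ s q x)⁻¹ * Real.log (eh φ s w x * (Dn φ s q x)⁻¹))) ∂γ =
        ∫ x, q w * (eh φ s w x * ((s * x w - s ^ 2 * ‖φ w‖ ^ 2 / 2) - Real.log (Dn φ s q x))) ∂γ := by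
      intro w
      rw [← integral_finsetSum _ fun u _ => gi w u]
      congr 1; ext x
      rw [Real.log_mul (eh_pos φ s w x).ne' (inv_pos.2 (Dn_pos hq φ s x)).ne', Real.log_inv]
      have : Real.log (eh φ s w x) = s * x w - s ^ 2 * ‖φ w‖ ^ 2 / 2 := by rw [eh, Real.log_exp]
      rw [this]
      have hne := (Dn_pos hq φ s x).ne'
      have h3 : ∀ u, q w * q u * (eh φ s u x * (eh φ s w x * (Dn φ s q x)⁻¹ *
        (s * x w - s ^ 2 * ‖φ w‖ ^ 2 / 2 + -Real.log (Dn φ s q x)))) = (q u * eh φ s u x) *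
        (q w * (eh φ s w x * (Dn φ s q x)⁻¹ *
        (s * x w - s ^ 2 * ‖φ w‖ ^ 2 / 2 + -Real.log (Dn φ s q x)))) := fun u => by ring
      simp_rw [h3]
      rw [← Finset.sum_mul]
      change Dn φ s q x * _ = _
      field_simp
      ring
    simp_rw [h2]
    have gA : ∀ w, Gr (fun x => eh φ s w x * (s * x w - s ^ 2 * ‖φ w‖ ^ 2 / 2)) := fun w =>
      (Gr.of_eh φ s w).mul (((Gr.const s).mul (Gr.coord w)).sub (Gr.const _))
    have gB : ∀ w, Gr (fun x => eh φ s w x * Real.log (Dn φ s q x)) := fun w =>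
      (Gr.of_eh φ s w).mul (Gr.logDn hq φ s)
    have h4 : ∀ w, ∫ x, q w * (eh φ s w x * ((s * x w - s ^ 2 * ‖φ w‖ ^ 2 / 2) -
        Real.log (Dn φ s q x))) ∂γ = s ^ 2 / 2 * (q w * ‖φ w‖ ^ 2) -
        ∫ x, q w * (eh φ s w x * Real.log (Dn φ s q x)) ∂γ := by
      intro w
      rw [integral_const_mul, integral_const_mul]
      simp_rw [mul_sub (eh φ s w _)]
      have i1 : Integrable (fun x => eh φ s w x * (s * x w)) γ :=
        h.integrable ((Gr.of_eh φ s w).mul ((Gr.const s).mul (Gr.coord w)))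
      have i2 : Integrable (fun x => eh φ s w x * (s ^ 2 * ‖φ w‖ ^ 2 / 2)) γ :=
        (h.integrable (Gr.of_eh φ s w)).mul_const _
      have i12 : Integrable (fun x => eh φ s w x * (s * x w) - eh φ s w x * (s ^ 2 * ‖φ w‖ ^ 2 / 2)) γ :=
        i1.sub i2
      rw [integral_sub i12 (h.integrable (gB w)), integral_sub i1 i2, integral_mul_const, h.int_eh]
      have : ∫ x, eh φ s w x * (s * x w) ∂γ = s * (s * ‖φ w‖ ^ 2) := by
        rw [← real_inner_self_eq_norm_sq, ← h.int_eh_coord s w w, ← integral_const_mul]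
        congr 1; ext x; ring
      rw [this]; ring
    simp_rw [h4]
    rw [Finset.sum_sub_distrib, ← Finset.mul_sum,
      ← integral_finsetSum _ fun w _ => (h.integrable (gB w)).const_mul _]
    unfold FF
    congr 2
    ext x
    simp_rw [← mul_assoc]
    rw [← Finset.sum_mul]; rfl
  rw [← e1]
  refine Finset.sum_le_sum fun w _ => Finset.sum_le_sum fun u _ => ?_
  rw [mul_assoc (q w * q u)]
  exact mul_le_mul_of_nonneg_left (step w u) (mul_nonneg (hq.nn w) (hq.nn u))

end

section
variable {T : Type*} [Fintype T]
variable {E : Type*} [NormedAddCommGroup E] [InnerProductSpace ℝ E]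
  {γ : Measure (T → ℝ)} {φ : T → E}

structure Fz (p : (T → ℝ) → T → ℝ) : Prop where
  meas : ∀ z, Measurable (fun x => p x z)
  pmf : ∀ x, Pmf (p x)

lemma Pmf.le_one {q : T → ℝ} (hq : Pmf q) (w : T) : q w ≤ 1 := by
  rw [← hq.sum]
  exact Finset.single_le_sum (fun i _ => hq.nn i) (Finset.mem_univ w)

lemma Fz.gr {p : (T → ℝ) → T → ℝ} (hp : Fz p) (z : T) : Gr (fun x => p x z) :=
  Gr.of_le (hp.meas z) (Gr.const 1) fun x => by
    rw [abs_of_nonneg ((hp.pmf x).nn z)]; simpa using (hp.pmf x).le_one z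

def kp (γ : Measure (T → ℝ)) (p : (T → ℝ) → T → ℝ) (z : T) : ℝ := ∫ x, p x z ∂γ

def vl (γ : Measure (T → ℝ)) (p : (T → ℝ) → T → ℝ) : ℝ := ∑ z, ∫ x, p x z * x z ∂γ

lemma GV.kp_pmf (h : GV γ φ) {p : (T → ℝ) → T → ℝ} (hp : Fz p) : Pmf (kp γ p) := by
  have := h.prob
  refine ⟨fun z => integral_nonneg fun x => (hp.pmf x).nn z, ?_⟩
  unfold kp
  rw [← integral_finsetSum _ fun z _ => h.integrable (hp.gr z)]
  simp [(hp.pmf _).sum]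

lemma GV.stepA (h : GV γ φ) {p : T → (T → ℝ) → T → ℝ} (hp : ∀ w, Fz (p w)) {q : T → ℝ} (hq : Pmf q)
    (s : ℝ) (hs : 0 ≤ s) : ∃ p' : (T → ℝ) → T → ℝ, Fz p' ∧
      (∀ z, kp γ p' z = ∑ w, q w * kp γ (p w) z) ∧
      ∀ a : ℝ, 0 < a → ∑ w, q w * vl γ (p w) + s * (MM γ φ s q / 2 -
        a / 2 * ∑ w, q w * ∑ z, kp γ (p w) z * ‖φ w - φ z‖ ^ 2 - MM γ φ s q / (2 * a)) ≤ vl γ p' := by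
  have := h.prob
  set g : T → T → (T → ℝ) → ℝ := fun w z y => pst φ s q y w * p w (y - s • kv φ w) z with hg
  have gsh : ∀ w z, Gr (fun y => p w (y - s • kv φ w) z) := fun w z => by
    simpa [sub_eq_add_neg] using ((hp w).gr z).shift (-(s • kv φ w))
  have gg : ∀ w z, Gr (g w z) := fun w z => (Gr.pst hq φ s w).mul (gsh w z)
  have g0 : ∀ w z y, 0 ≤ g w z y := fun w z y =>
    mul_nonneg ((pst_pmf φ s hq y).nn w) (((hp w).pmf _).nn z)
  set p' : (T → ℝ) → T → ℝ := fun x z => ∑ u, q u * ∑ w, g w z (x + s • kv φ u) with hp'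
  have fz : Fz p' := by
    refine ⟨fun z => ?_, fun x => ⟨fun z => ?_, ?_⟩⟩
    · have : ∀ w, Measurable (g w z) := fun w => (gg w z).1
      simp only [hp']; fun_prop
    · exact Finset.sum_nonneg fun u _ => mul_nonneg (hq.nn u) (Finset.sum_nonneg fun w _ => g0 w z _)
    · simp only [hp']
      rw [Finset.sum_comm]
      have : ∀ u, ∑ z, q u * ∑ w, g w z (x + s • kv φ u) = q u := fun u => by
        rw [← Finset.mul_sum, Finset.sum_comm]
        simp only [hg]
        simp_rw [← Finset.mul_sum, ((hp _).pmf _).sum, mul_one, (pst_pmf φ s hq _).sum, mul_one]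
      simp_rw [this, hq.sum]
  -- mixing identity
  have mix : ∀ (w z : T) (f : (T → ℝ) → ℝ), Gr f →
      ∑ u, q u * ∫ x, eh φ s u x * (g w z x * f (x - s • kv φ w)) ∂γ =
      q w * ∫ x, p w x z * f x ∂γ := by
    intro w z f hf
    have gf : Gr (fun y => f (y - s • kv φ w)) := by
      simpa [sub_eq_add_neg] using hf.shift (-(s • kv φ w))
    simp_rw [← integral_const_mul (q _)]
    rw [← integral_finsetSum _ fun u _ =>
      (h.integrable ((Gr.of_eh φ s u).mul ((gg w z).mul gf))).const_mul _]
    have e1 : ∀ x, ∑ u, q u * (eh φ s u x * (g w z x * f (x - s • kv φ w))) =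
        q w * (eh φ s w x * (p w (x - s • kv φ w) z * f (x - s • kv φ w))) := fun x => by
      have hne := (Dn_pos hq φ s x).ne'
      simp_rw [← mul_assoc (q _)]
      rw [← Finset.sum_mul]
      change Dn φ s q x * _ = _
      simp only [hg, pst]
      field_simp
    simp_rw [e1]
    have := h.cm_int (f := fun x => p w (x - s • kv φ w) z * f (x - s • kv φ w))
      ((gsh w z).mul gf).1 s w
    simp only [add_sub_cancel_right] at this
    rw [integral_const_mul, integral_const_mul, this]
  refine ⟨p', fz, fun z => ?_, fun a ha => ?_⟩
  · unfold kp
    simp only [hp']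
    rw [integral_finsetSum _ fun u _ =>
      (integrable_finsetSum _ fun w _ => h.integrable ((gg w z).shift _)).const_mul _]
    simp_rw [integral_const_mul]
    have e2 : ∀ u, ∫ x, ∑ w, g w z (x + s • kv φ u) ∂γ = ∑ w, ∫ x, eh φ s u x * g w z x ∂γ := fun u => by
      rw [integral_finsetSum _ fun w _ => h.integrable ((gg w z).shift _)]
      exact Finset.sum_congr rfl fun w _ => h.cm_int (gg w z).1 s u
    simp_rw [e2, Finset.mul_sum]
    rw [Finset.sum_comm]
    refine Finset.sum_congr rfl fun w _ => ?_
    simpa using mix w z (fun _ => 1) (Gr.const 1)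
  · set θ : T → T → T → ℝ := fun w u z => q u * ∫ x, eh φ s u x * g w z x ∂γ with hθ
    have θ0 : ∀ w u z, 0 ≤ θ w u z := fun w u z => mul_nonneg (hq.nn u)
      (integral_nonneg fun x => mul_nonneg (eh_pos φ s u x).le (g0 w z x))
    have θu : ∀ w z, ∑ u, θ w u z = q w * kp γ (p w) z := fun w z => by
      simpa [kp] using mix w z (fun _ => 1) (Gr.const 1)
    have θz : ∀ w u, ∑ z, θ w u z = q w * q u * rr γ φ s q w u := fun w u => by
      simp only [hθ]
      rw [← Finset.mul_sum, ← integral_finsetSum _ fun z _ =>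
        h.integrable ((Gr.of_eh φ s u).mul (gg w z))]
      have : ∀ x, ∑ z, eh φ s u x * g w z x = q w * (eh φ s w x * eh φ s u x * (Dn φ s q x)⁻¹) :=
        fun x => by
          simp only [hg]
          rw [← Finset.mul_sum, ← Finset.mul_sum, ((hp _).pmf _).sum, pst]; ring
      simp_rw [this]
      rw [integral_const_mul, rr]; ring
    have ev : vl γ p' = ∑ w, q w * vl γ (p w) +
        s * ∑ w, ∑ u, ∑ z, θ w u z * (inner ℝ (φ w) (φ z) - inner ℝ (φ u) (φ z)) := by
      unfold vl
      have e3 : ∀ z, ∫ x, p' x z * x z ∂γ = ∑ w, (q w * ∫ x, p w x z * x z ∂γ +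
          s * ∑ u, θ w u z * (inner ℝ (φ w) (φ z) - inner ℝ (φ u) (φ z))) := by
        intro z
        have gy : ∀ (w u : T), Gr (fun y => g w z y * (y z - s * kv φ u z)) := fun w u =>
          (gg w z).mul ((Gr.coord z).sub (Gr.const _))
        have e4 : ∀ x, p' x z * x z = ∑ u, q u * ∑ w,
            (fun y => g w z y * (y z - s * kv φ u z)) (x + s • kv φ u) := fun x => by
          simp only [hp']
          rw [Finset.sum_mul]
          refine Finset.sum_congr rfl fun u _ => ?_
          rw [mul_assoc, Finset.sum_mul]
          congr 1
          refine Finset.sum_congr rfl fun w _ => ?_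
          simp
        simp_rw [e4]
        rw [integral_finsetSum _ fun u _ =>
          (integrable_finsetSum _ fun w _ => h.integrable ((gy w u).shift _)).const_mul _]
        simp_rw [integral_const_mul]
        have e5 : ∀ u, ∫ x, ∑ w, g w z (x + s • kv φ u) * ((x + s • kv φ u) z - s * kv φ u z) ∂γ =
            ∑ w, ∫ x, eh φ s u x * (g w z x * (x z - s * kv φ u z)) ∂γ := fun u => by
          rw [integral_finsetSum _ fun w _ => h.integrable ((gy w u).shift _)]
          exact Finset.sum_congr rfl fun w _ => h.cm_int (gy w u).1 s u
        simp_rw [e5, Finset.mul_sum]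
        rw [Finset.sum_comm]
        refine Finset.sum_congr rfl fun w _ => ?_
        have e6 : ∀ u, ∫ x, eh φ s u x * (g w z x * (x z - s * kv φ u z)) ∂γ =
           ∫ x, eh φ s u x * (g w z x * ((fun y : T → ℝ => y z) (x - s • kv φ w))) ∂γ +
           s * (inner ℝ (φ w) (φ z) - inner ℝ (φ u) (φ z)) * ∫ x, eh φ s u x * g w z x ∂γ := by
          intro u
          have i1 : Integrable (fun x => eh φ s u x * (g w z x * ((fun y : T → ℝ => y z) (x - s • kv φ w)))) γ :=
            h.integrable ((Gr.of_eh φ s u).mul ((gg w z).mul (by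
              simpa [sub_eq_add_neg] using (Gr.coord z).shift (-(s • kv φ w)))))
          have i2 : Integrable (fun x => s * (inner ℝ (φ w) (φ z) - inner ℝ (φ u) (φ z)) *
             (eh φ s u x * g w z x)) γ := (h.integrable ((Gr.of_eh φ s u).mul (gg w z))).const_mul _
          rw [← integral_const_mul, ← integral_add i1 i2]
          congr 1; ext x
          simp [kv]; ring
        simp_rw [e6, mul_add, Finset.sum_add_distrib]
        rw [mix w z _ (Gr.coord z)]
        congr 1
        refine Finset.sum_congr rfl fun u _ => ?_
        simp only [hθ]; ring
      simp_rw [e3]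
      rw [Finset.sum_comm]
      simp_rw [Finset.sum_add_distrib, ← Finset.mul_sum]
      congr 2
      refine Finset.sum_congr rfl fun w _ => ?_
      rw [Finset.sum_comm]
    rw [ev]
    have half : ∑ w, ∑ u, ∑ z, θ w u z * inner ℝ (φ w - φ u) (φ w) = MM γ φ s q / 2 := by
      simp_rw [← Finset.sum_mul, θz]
      have a1 : ∑ w, ∑ u, q w * q u * rr γ φ s q w u * inner ℝ (φ w - φ u) (φ w) =
          ∑ w, ∑ u, q w * q u * rr γ φ s q w u * inner ℝ (φ u - φ w) (φ u) := by
        rw [Finset.sum_comm]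
        refine Finset.sum_congr rfl fun w _ => Finset.sum_congr rfl fun u _ => ?_
        rw [rr_symm]; ring
      have a2 : ∑ w, ∑ u, q w * q u * rr γ φ s q w u * inner ℝ (φ w - φ u) (φ w) +
          ∑ w, ∑ u, q w * q u * rr γ φ s q w u * inner ℝ (φ u - φ w) (φ u) = MM γ φ s q := by
        unfold MM
        simp_rw [← Finset.sum_add_distrib]
        refine Finset.sum_congr rfl fun w _ => Finset.sum_congr rfl fun u _ => ?_
        rw [← real_inner_self_eq_norm_sq]
        simp only [inner_sub_left, inner_sub_right]
        rw [real_inner_comm (φ u) (φ w)]; ring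
      linarith
    have A1 : ∑ w, ∑ u, ∑ z, θ w u z * ‖φ w - φ z‖ ^ 2 =
        ∑ w, q w * ∑ z, kp γ (p w) z * ‖φ w - φ z‖ ^ 2 := by
      refine Finset.sum_congr rfl fun w _ => ?_
      rw [Finset.sum_comm]
      simp_rw [← Finset.sum_mul, θu, Finset.mul_sum, mul_assoc]
    have A2 : ∑ w, ∑ u, ∑ z, θ w u z * ‖φ w - φ u‖ ^ 2 = MM γ φ s q := by
      simp_rw [← Finset.sum_mul, θz]; rfl
    have hpt : ∀ w u z, θ w u z * inner ℝ (φ w - φ u) (φ w) - a / 2 * (θ w u z * ‖φ w - φ z‖ ^ 2)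
        - 1 / (2 * a) * (θ w u z * ‖φ w - φ u‖ ^ 2) ≤
        θ w u z * (inner ℝ (φ w) (φ z) - inner ℝ (φ u) (φ z)) := by
      intro w u z
      have c1 : inner ℝ (φ w) (φ z) - inner ℝ (φ u) (φ z) = inner ℝ (φ w - φ u) (φ w) -
          inner ℝ (φ w - φ u) (φ w - φ z) := by
        simp only [inner_sub_left, inner_sub_right]; ring
      have c2 := real_inner_le_norm (φ w - φ u) (φ w - φ z)
      have c3 : ‖φ w - φ u‖ * ‖φ w - φ z‖ ≤ a / 2 * ‖φ w - φ z‖ ^ 2 + 1 / (2 * a) * ‖φ w - φ u‖ ^ 2 := by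
        have : 0 ≤ 1 / (2 * a) * (a * ‖φ w - φ z‖ - ‖φ w - φ u‖) ^ 2 := by positivity
        have e : 1 / (2 * a) * (a * ‖φ w - φ z‖ - ‖φ w - φ u‖) ^ 2 = a / 2 * ‖φ w - φ z‖ ^ 2
          + 1 / (2 * a) * ‖φ w - φ u‖ ^ 2 - ‖φ w - φ u‖ * ‖φ w - φ z‖ := by field_simp; ring
        linarith
      have := mul_le_mul_of_nonneg_left (c2.trans c3) (θ0 w u z)
      rw [c1]
      nlinarith
    have hsum := Finset.sum_le_sum (s := Finset.univ) fun w _ => Finset.sum_le_sum (s := Finset.univ)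
      fun u _ => Finset.sum_le_sum (s := Finset.univ) fun z _ => hpt w u z
    simp_rw [Finset.sum_sub_distrib, ← Finset.mul_sum] at hsum
    rw [half, A1, A2] at hsum
    have h9 := mul_le_mul_of_nonneg_left hsum hs
    have h8 : 1 / (2 * a) * MM γ φ s q = MM γ φ s q / (2 * a) := by ring
    rw [h8] at h9
    simp_rw [mul_sub (θ _ _ _)] at h9 ⊢
    linarith

end

section
variable {T : Type*} [Fintype T]
variable {E : Type*} [NormedAddCommGroup E] [InnerProductSpace ℝ E]
  {γ : Measure (T → ℝ)} {φ : T → E}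

lemma logsum {ι : Type*} (s : Finset ι) (a b : ι → ℝ) (ha : ∀ i ∈ s, 0 ≤ a i) (hb : ∀ i ∈ s, 0 ≤ b i)
    (hab : ∀ i ∈ s, b i = 0 → a i = 0) :
    (∑ i ∈ s, a i) * Real.log ((∑ i ∈ s, a i) / ∑ i ∈ s, b i) ≤
      ∑ i ∈ s, a i * Real.log (a i / b i) := by
  set A := ∑ i ∈ s, a i with hA
  set B := ∑ i ∈ s, b i with hB
  rcases (Finset.sum_nonneg ha).eq_or_lt with h0 | h0
  · have hz : ∀ i ∈ s, a i = 0 := (Finset.sum_eq_zero_iff_of_nonneg ha).1 h0.symm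
    rw [Finset.sum_congr rfl fun i hi => by rw [hz i hi]]
    rw [hA, ← h0]; simp
  rw [← hA] at h0
  have hBpos : 0 < B := by
    rcases (Finset.sum_nonneg hb).eq_or_lt with h1 | h1
    · have hz : ∀ i ∈ s, b i = 0 := (Finset.sum_eq_zero_iff_of_nonneg hb).1 h1.symm
      have : A = 0 := Finset.sum_eq_zero fun i hi => hab i hi (hz i hi)
      linarith
    · exact h1
  have key : ∀ i ∈ s, a i * Real.log (A / B) + (a i - b i * (A / B)) ≤ a i * Real.log (a i / b i) := by
    intro i hi
    rcases (ha i hi).eq_or_lt with h2 | h2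
    · rw [← h2]
      have := hb i hi
      have : 0 ≤ b i * (A / B) := by positivity
      simp; linarith
    · have hbi : 0 < b i := lt_of_le_of_ne (hb i hi) fun h => by
        have := hab i hi h.symm; linarith
      have hpos : 0 < b i * A / (a i * B) := by positivity
      have h3 := Real.log_le_sub_one_of_pos hpos
      have h4 : Real.log (b i * A / (a i * B)) = Real.log (A / B) - Real.log (a i / b i) := by
        rw [Real.log_div (by positivity) (by positivity), Real.log_mul hbi.ne' h0.ne',
          Real.log_mul h2.ne' hBpos.ne', Real.log_div h0.ne' hBpos.ne', Real.log_div h2.ne' hbi.ne']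
        ring
      rw [h4] at h3
      have h5 := mul_le_mul_of_nonneg_left h3 h2.le
      have h6 : a i * (b i * A / (a i * B) - 1) = b i * (A / B) - a i := by field_simp
      rw [h6] at h5
      linarith
  have := Finset.sum_le_sum key
  rw [Finset.sum_add_distrib, Finset.sum_sub_distrib, ← Finset.sum_mul, ← Finset.sum_mul, ← hA, ← hB,
    mul_div_cancel₀ _ hBpos.ne'] at this
  linarith

/-- finite self-coupling -/
structure Cpl (m : T → ℝ) (c : T → T → ℝ) : Prop where
  nn : ∀ v w, 0 ≤ c v w
  fst : ∀ v, ∑ w, c v w = m v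
  snd : ∀ w, ∑ v, c v w = m w

def info (m : T → ℝ) (c : T → T → ℝ) : ℝ := ∑ v, ∑ w, c v w * Real.log (c v w / (m v * m w))

def cst (φ : T → E) (c : T → T → ℝ) : ℝ := ∑ v, ∑ w, c v w * ‖φ v - φ w‖ ^ 2

def iF (φ : T → E) (m : T → ℝ) (σ : ℝ) : ℝ := sInf {v | ∃ c, Cpl m c ∧ cst φ c ≤ σ ^ 2 ∧ v = info m c}

lemma info_nonneg {m : T → ℝ} (hm : Pmf m) {c : T → T → ℝ} (hc : Cpl m c) : 0 ≤ info m c := by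
  have hm0 : ∀ v w, m v * m w = 0 → c v w = 0 := by
    intro v w h
    rcases mul_eq_zero.1 h with h | h
    · exact le_antisymm (h ▸ hc.fst v ▸ Finset.single_le_sum (fun i _ => hc.nn v i) (Finset.mem_univ w))
        (hc.nn v w)
    · exact le_antisymm (h ▸ hc.snd w ▸ Finset.single_le_sum (f := fun v => c v w) (fun i _ => hc.nn i w)
        (Finset.mem_univ v)) (hc.nn v w)
  have := logsum (Finset.univ : Finset (T × T)) (fun p => c p.1 p.2) (fun p => m p.1 * m p.2)
    (fun p _ => hc.nn _ _) (fun p _ => mul_nonneg (hm.nn _) (hm.nn _)) (fun p _ => hm0 _ _)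
  rw [Fintype.sum_prod_type, Fintype.sum_prod_type, Fintype.sum_prod_type] at this
  simp only [hc.fst, hm.sum, ← Finset.mul_sum, mul_one] at this
  simpa [info] using this

lemma iF_bdd (φ : T → E) {m : T → ℝ} (hm : Pmf m) (σ : ℝ) :
    BddBelow {v | ∃ c, Cpl m c ∧ cst φ c ≤ σ ^ 2 ∧ v = info m c} :=
  ⟨0, by rintro _ ⟨c, hc, -, rfl⟩; exact info_nonneg hm hc⟩

lemma diag_cpl [DecidableEq T] {m : T → ℝ} (hm : Pmf m) :
    Cpl m (fun v w => if v = w then m v else 0) :=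
  ⟨fun v w => by split_ifs; exacts [hm.nn v, le_rfl], fun v => by simp, fun w => by simp⟩

lemma diag_cst [DecidableEq T] (φ : T → E) (m : T → ℝ) :
    cst φ (fun v w => if v = w then m v else 0) = 0 := by
  unfold cst
  refine Finset.sum_eq_zero fun v _ => Finset.sum_eq_zero fun w _ => ?_
  dsimp only
  split_ifs with h
  · simp [h]
  · simp

lemma iF_ne (φ : T → E) {m : T → ℝ} (hm : Pmf m) (σ : ℝ) :
    {v | ∃ c, Cpl m c ∧ cst φ c ≤ σ ^ 2 ∧ v = info m c}.Nonempty := by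
  classical
  exact ⟨_, _, diag_cpl hm, by rw [diag_cst]; positivity, rfl⟩

lemma iF_nonneg (φ : T → E) {m : T → ℝ} (hm : Pmf m) (σ : ℝ) : 0 ≤ iF φ m σ :=
  le_csInf (iF_ne φ hm σ) (by rintro _ ⟨c, hc, -, rfl⟩; exact info_nonneg hm hc)

lemma iF_le (φ : T → E) {m : T → ℝ} (hm : Pmf m) {σ : ℝ} {c : T → T → ℝ} (hc : Cpl m c)
    (h : cst φ c ≤ σ ^ 2) : iF φ m σ ≤ info m c := csInf_le (iF_bdd φ hm σ) ⟨c, hc, h, rfl⟩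

lemma iF_anti (φ : T → E) {m : T → ℝ} (hm : Pmf m) {σ σ' : ℝ} (h0 : 0 ≤ σ) (h : σ ≤ σ') :
    iF φ m σ' ≤ iF φ m σ :=
  csInf_le_csInf (iF_bdd φ hm σ') (iF_ne φ hm σ) (by
    rintro _ ⟨c, hc, h1, rfl⟩
    exact ⟨c, hc, h1.trans (by gcongr), rfl⟩)

lemma iF_bound (φ : T → E) {m : T → ℝ} (hm : Pmf m) : ∃ C, ∀ σ, iF φ m σ ≤ C := by
  classical
  exact ⟨_, fun σ => iF_le φ hm (diag_cpl hm) (by rw [diag_cst]; positivity)⟩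

lemma iF_large (φ : T → E) {m : T → ℝ} (hm : Pmf m) : ∃ R, 0 < R ∧ ∀ σ, R ≤ σ → iF φ m σ = 0 := by
  have hc : Cpl m (fun v w => m v * m w) :=
    ⟨fun v w => mul_nonneg (hm.nn v) (hm.nn w), fun v => by rw [← Finset.mul_sum, hm.sum, mul_one],
      fun w => by rw [← Finset.sum_mul, hm.sum, one_mul]⟩
  have hz : info m (fun v w => m v * m w) = 0 := by
    unfold info
    refine Finset.sum_eq_zero fun v _ => Finset.sum_eq_zero fun w _ => ?_
    rcases eq_or_ne (m v * m w) 0 with h | h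
    · rw [h]; simp
    · rw [div_self h]; simp
  set C := cst φ (fun v w => m v * m w) with hC
  refine ⟨|C| + 1, by positivity, fun σ hσ => le_antisymm ?_ (iF_nonneg φ hm σ)⟩
  rw [← hz]
  refine iF_le φ hm hc ?_
  rw [← hC]
  nlinarith [le_abs_self C, abs_nonneg C]

/-- kernel -/
def krn (m : T → ℝ) (c : T → T → ℝ) (v w : T) : ℝ := c v w / m v

lemma krn_pmf {m : T → ℝ} (hm : ∀ v, 0 < m v) {c : T → T → ℝ} (hc : Cpl m c) (v : T) : Pmf (krn m c v) :=
  ⟨fun w => div_nonneg (hc.nn v w) (hm v).le, by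
    unfold krn; rw [← Finset.sum_div, hc.fst, div_self (hm v).ne']⟩

lemma krn_mul {m : T → ℝ} (hm : ∀ v, 0 < m v) (c : T → T → ℝ) (v w : T) : m v * krn m c v w = c v w := by
  unfold krn; rw [mul_div_cancel₀ _ (hm v).ne']

lemma GV.info_bound (h : GV γ φ) {m : T → ℝ} (hm : Pmf m) (hm0 : ∀ v, 0 < m v) {c : T → T → ℝ}
    (hc : Cpl m c) (s D : ℝ) (hD : ∑ v, m v * MM γ φ s (krn m c v) ≤ D ^ 2) :
    iF φ m D ≤ info m c + ∑ v, m v * FF γ φ s (krn m c v) := by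
  set q := krn m c with hq
  have hqp : ∀ v, Pmf (q v) := krn_pmf hm0 hc
  have hqm : ∀ v w, m v * q v w = c v w := krn_mul hm0 c
  set a : T → T → T → ℝ := fun v w u => m v * (q v w * q v u * rr γ φ s (q v) w u) with ha
  have a0 : ∀ v w u, 0 ≤ a v w u := fun v w u => mul_nonneg (hm.nn v)
    (mul_nonneg (mul_nonneg ((hqp v).nn w) ((hqp v).nn u)) (rr_nonneg γ φ s (hqp v) w u))
  have a1 : ∀ v w, ∑ u, a v w u = c v w := fun v w => by
    simp only [ha]
    rw [← Finset.mul_sum, ← hqm]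
    congr 1
    simp_rw [mul_assoc, ← Finset.mul_sum, h.sum_rr s (hqp v) w, mul_one]
  have asym : ∀ v w u, a v w u = a v u w := fun v w u => by
    simp only [ha]; rw [rr_symm]; ring
  set R : T → T → ℝ := fun w u => ∑ v, a v w u with hR
  have hRc : Cpl m R := by
    refine ⟨fun w u => Finset.sum_nonneg fun v _ => a0 v w u, fun w => ?_, fun u => ?_⟩
    · simp only [hR]; rw [Finset.sum_comm]; simp_rw [a1]; exact hc.snd w
    · simp only [hR]; rw [Finset.sum_comm]; simp_rw [asym _ _ u, a1]; exact hc.snd u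
  have hcost : cst φ R = ∑ v, m v * MM γ φ s (q v) := by
    unfold cst MM
    simp only [hR, Finset.sum_mul, Finset.mul_sum]
    rw [Finset.sum_congr rfl fun w _ => Finset.sum_comm, Finset.sum_comm]
    refine Finset.sum_congr rfl fun v _ => Finset.sum_congr rfl fun w _ =>
      Finset.sum_congr rfl fun u _ => ?_
    simp only [ha]; ring
  refine (iF_le φ hm hRc (hcost.le.trans hD)).trans ?_
  have step : ∀ w u, R w u * Real.log (R w u / (m w * m u)) ≤
      ∑ v, (a v w u * Real.log (q v w / m w) + a v w u * Real.log (rr γ φ s (q v) w u)) := by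
    intro w u
    have hb0 : ∀ v, c v u * m w = 0 → a v w u = 0 := fun v hv => by
      have : c v u = 0 := by
        rcases mul_eq_zero.1 hv with h | h
        · exact h
        · exact absurd h (hm0 w).ne'
      simp [ha, hq, krn, this]
    have := logsum Finset.univ (fun v => a v w u) (fun v => c v u * m w) (fun v _ => a0 v w u)
      (fun v _ => mul_nonneg (hc.nn _ _) (hm.nn _)) (fun v _ => hb0 v)
    rw [← Finset.sum_mul, hc.snd, mul_comm (m u)] at this
    refine this.trans (Finset.sum_le_sum fun v _ => ?_)
    rcases eq_or_ne (a v w u) 0 with h0 | h0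
    · rw [h0]; simp
    · have hne : m v ≠ 0 ∧ (q v w ≠ 0 ∧ q v u ≠ 0) ∧ rr γ φ s (q v) w u ≠ 0 := by
        simpa [ha, not_or] using h0
      obtain ⟨n1, ⟨n2, n3⟩, n4⟩ := hne
      have e : a v w u / (c v u * m w) = (q v w / m w) * rr γ φ s (q v) w u := by
        rw [← hqm v u]; simp only [ha]
        have := (hm0 w).ne'
        field_simp
      rw [e, Real.log_mul (div_ne_zero n2 (hm0 w).ne') n4, mul_add]
  unfold info
  refine (Finset.sum_le_sum fun w _ => Finset.sum_le_sum fun u _ => step w u).trans ?_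
  simp_rw [Finset.sum_add_distrib]
  refine add_le_add (le_of_eq ?_) ?_
  · rw [Finset.sum_congr rfl fun w _ => Finset.sum_comm, Finset.sum_comm]
    refine Finset.sum_congr rfl fun v _ => Finset.sum_congr rfl fun w _ => ?_
    rw [← Finset.sum_mul, a1]
    congr 2
    simp only [hq, krn]; rw [div_div]
  · rw [Finset.sum_congr rfl fun w _ => Finset.sum_comm, Finset.sum_comm]
    refine Finset.sum_le_sum fun v _ => ?_
    refine le_trans (le_of_eq ?_) (mul_le_mul_of_nonneg_left (h.dp (hqp v) s) (hm.nn v))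
    rw [Finset.mul_sum]
    refine Finset.sum_congr rfl fun w _ => ?_
    rw [Finset.mul_sum]
    refine Finset.sum_congr rfl fun u _ => ?_
    simp only [ha]; ring

end

lemma riem (M F : ℝ → ℝ) (D J B : ℝ) (hD : 0 < D) (hB : 0 ≤ B) (hF0 : F 0 ≤ 0) (hM : ∀ s, 0 ≤ M s)
    (hinc : ∀ s δ s' : ℝ, s ^ 2 + δ ^ 2 = s' ^ 2 → F s' ≤ F s + δ ^ 2 / 4 * M s)
    (hJ : ∀ s, 0 ≤ s → M s ≤ D ^ 2 → J ≤ F s) (hlt : 2 * B ^ 2 < J * D ^ 2) :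
    ∃ s, 0 ≤ s ∧ D ^ 2 < M s ∧ B < s * M s / 2 := by
  by_contra hcon
  push Not at hcon
  have hJ' : 2 * B ^ 2 / D ^ 2 < J := by rw [div_lt_iff₀ (by positivity)]; exact hlt
  have hJ0 : 0 < J := lt_of_le_of_lt (by positivity) hJ'
  obtain ⟨η, hη, hηb⟩ : ∃ η : ℝ, 0 < η ∧ η * M 0 / 4 < J - 2 * B ^ 2 / D ^ 2 := by
    set ε := J - 2 * B ^ 2 / D ^ 2 with hε
    have hε0 : 0 < ε := by linarith
    refine ⟨ε / (M 0 + 1), by have := hM 0; positivity, ?_⟩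
    have := hM 0
    rw [div_mul_eq_mul_div, div_div, div_lt_iff₀ (by positivity)]
    nlinarith
  set t : ℕ → ℝ := fun n => Real.sqrt (n * η) with ht
  have ht0 : ∀ n, 0 ≤ t n := fun n => Real.sqrt_nonneg _
  have hts : ∀ n, t n ^ 2 = n * η := fun n => Real.sq_sqrt (by positivity)
  have hex : ∃ n, M (t n) ≤ D ^ 2 := by
    obtain ⟨n, hn⟩ := exists_nat_gt ((2 * B / D ^ 2 + 1) ^ 2 / η)
    refine ⟨n, ?_⟩
    by_contra h
    push Not at h
    have h1 := hcon _ (ht0 n) h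
    have h2 : 2 * B / D ^ 2 + 1 < t n := by
      rw [ht]; apply Real.lt_sqrt_of_sq_lt
      rwa [div_lt_iff₀ hη] at hn
    have h3 : t n * D ^ 2 ≤ t n * M (t n) := mul_le_mul_of_nonneg_left h.le (ht0 n)
    have h4 : 2 * B / D ^ 2 * D ^ 2 = 2 * B := by field_simp
    nlinarith [sq_nonneg D, pow_pos hD 2]
  classical
  have hN := Nat.find_spec hex
  have hmin : ∀ l, l < Nat.find hex → D ^ 2 < M (t l) := fun l hl => by
    have := Nat.find_min hex hl
    push Not at this; exact this
  set N := Nat.find hex with hNd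
  have hstep : ∀ n, F (t (n + 1)) ≤ F (t n) + η / 4 * M (t n) := fun n => by
    have := hinc (t n) (Real.sqrt η) (t (n + 1)) (by
      rw [hts, hts, Real.sq_sqrt hη.le]; push_cast; ring)
    rwa [Real.sq_sqrt hη.le] at this
  have h0 : t 0 = 0 := by simp [ht]
  have ind : ∀ n, n + 1 ≤ N → F (t (n + 1)) ≤ η * M 0 / 4 + B * t n := by
    intro n
    induction n with
    | zero =>
      intro _
      have := hstep 0
      rw [h0] at this ⊢
      linarith
    | succ n ih =>
      intro hn
      have h1 := ih (by omega)
      have h2 := hstep (n + 1)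
      have h3 := hcon _ (ht0 (n + 1)) (hmin (n + 1) (by omega))
      have hb : 0 < t (n + 1) := Real.sqrt_pos.2 (by positivity)
      have h4 : η = t (n + 1) ^ 2 - t n ^ 2 := by rw [hts, hts]; push_cast; ring
      have hle : t n ≤ t (n + 1) := by
        apply Real.sqrt_le_sqrt; push_cast; nlinarith
      have h5 : M (t (n + 1)) ≤ 2 * B / t (n + 1) := by
        rw [le_div_iff₀ hb]; linarith
      have h6 : η / 4 * M (t (n + 1)) ≤ B * (t (n + 1) - t n) := by
        calc η / 4 * M (t (n + 1)) ≤ η / 4 * (2 * B / t (n + 1)) := by gcongr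
          _ = B * ((t (n + 1) - t n) * ((t (n + 1) + t n) / (2 * t (n + 1)))) := by
            rw [h4]; field_simp; ring
          _ ≤ B * ((t (n + 1) - t n) * 1) := by
            have : (t (n + 1) + t n) / (2 * t (n + 1)) ≤ 1 := by
              rw [div_le_one (by positivity)]; linarith
            have : 0 ≤ t (n + 1) - t n := by linarith
            gcongr
          _ = _ := by ring
      linarith
  rcases hNn : N with _ | n
  · rw [hNn, h0] at hN
    have := hJ 0 le_rfl hN
    linarith
  · have h1 := ind n (by omega)
    have h2 := hJ _ (ht0 _) hN
    rw [hNn] at h2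
    have h3 := hcon _ (ht0 n) (hmin n (by omega))
    have h4 : t n * D ^ 2 ≤ t n * M (t n) := mul_le_mul_of_nonneg_left (hmin n (by omega)).le (ht0 n)
    have h5 : t n ≤ 2 * B / D ^ 2 := by rw [le_div_iff₀ (by positivity)]; linarith
    have h6 : B * t n ≤ B * (2 * B / D ^ 2) := mul_le_mul_of_nonneg_left h5 hB
    have h7 : B * (2 * B / D ^ 2) = 2 * B ^ 2 / D ^ 2 := by ring
    linarith

section
variable {T : Type*} [Fintype T]
variable {E : Type*} [NormedAddCommGroup E] [InnerProductSpace ℝ E]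
  {γ : Measure (T → ℝ)} {φ : T → E}

/-- achievable value and displacement -/
def Ach (γ : Measure (T → ℝ)) (φ : T → E) (m : T → ℝ) (V ρ : ℝ) : Prop :=
  ∃ p : T → (T → ℝ) → T → ℝ, (∀ w, Fz (p w)) ∧ (∀ z, ∑ w, m w * kp γ (p w) z = m z) ∧
    V ≤ ∑ w, m w * vl γ (p w) ∧ ∑ w, m w * ∑ z, kp γ (p w) z * ‖φ w - φ z‖ ^ 2 ≤ ρ ^ 2

lemma MM_nonneg (γ : Measure (T → ℝ)) (φ : T → E) (s : ℝ) {q : T → ℝ} (hq : Pmf q) :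
    0 ≤ MM γ φ s q :=
  Finset.sum_nonneg fun w _ => Finset.sum_nonneg fun u _ => mul_nonneg
    (mul_nonneg (mul_nonneg (hq.nn w) (hq.nn u)) (rr_nonneg γ φ s hq w u)) (by positivity)

lemma GV.ach_step (h : GV γ φ) {m : T → ℝ} (hm : Pmf m) (hm0 : ∀ v, 0 < m v) {V ρ D σ B : ℝ}
    (hA : Ach γ φ m V ρ) (hρ : 0 < ρ) (hρD : 2 * ρ ≤ D) (hσ : 0 < σ)
    (hB : B ≤ 0 ∨ 0 ≤ B ∧ 2 * B ^ 2 < (iF φ m D - iF φ m σ) * D ^ 2) :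
    Ach γ φ m (V + B * (1 - 2 * ρ / D)) (σ + ρ) := by
  obtain ⟨p, hp, hpm, hV, hd⟩ := hA
  have hD : 0 < D := by linarith
  have hfac : 0 ≤ 1 - 2 * ρ / D := by
    rw [sub_nonneg, div_le_one hD]; exact hρD
  -- choose coupling and s
  obtain ⟨c, hc, hcst, s, hs, hgain⟩ : ∃ c, Cpl m c ∧ cst φ c ≤ σ ^ 2 ∧ ∃ s, 0 ≤ s ∧
      B * (1 - 2 * ρ / D) ≤ s * ((∑ v, m v * MM γ φ s (krn m c v)) / 2 - (D / ρ) / 2 * ρ ^ 2 -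
        (∑ v, m v * MM γ φ s (krn m c v)) / (2 * (D / ρ))) := by
    rcases hB with hB | ⟨hB0, hB⟩
    · classical
      refine ⟨_, diag_cpl hm, by rw [diag_cst]; positivity, 0, le_rfl, ?_⟩
      rw [zero_mul]; exact mul_nonpos_of_nonpos_of_nonneg hB hfac
    · obtain ⟨i, ⟨c, hc, hcst, rfl⟩, hlt⟩ : ∃ i ∈ {v | ∃ c, Cpl m c ∧ cst φ c ≤ σ ^ 2 ∧ v = info m c},
          i < iF φ m D - 2 * B ^ 2 / D ^ 2 := by
        apply exists_lt_of_csInf_lt (iF_ne φ hm σ)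
        change iF φ m σ < _
        have : 2 * B ^ 2 / D ^ 2 < iF φ m D - iF φ m σ := by
          rw [div_lt_iff₀ (by positivity)]; exact hB
        linarith
      refine ⟨c, hc, hcst, ?_⟩
      have hqp := krn_pmf hm0 hc
      obtain ⟨s, hs, h1, h2⟩ := riem (fun s => ∑ v, m v * MM γ φ s (krn m c v))
        (fun s => ∑ v, m v * FF γ φ s (krn m c v)) D (iF φ m D - info m c) B hD hB0
        (by simp [fun v => h.FF_zero (hqp v)])
        (fun s => Finset.sum_nonneg fun v _ => mul_nonneg (hm.nn v) (MM_nonneg γ φ s (hqp v)))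
        (fun s δ s' hs => by
          rw [Finset.mul_sum, ← Finset.sum_add_distrib]
          refine Finset.sum_le_sum fun v _ => ?_
          have := mul_le_mul_of_nonneg_left (h.FF_inc (hqp v) s δ s' hs) (hm.nn v)
          linarith)
        (fun s _ hM => by
          have := h.info_bound hm hm0 hc s D hM
          linarith)
        (by
          have : 2 * B ^ 2 / D ^ 2 < iF φ m D - info m c := by linarith
          rwa [div_lt_iff₀ (by positivity)] at this)
      refine ⟨s, hs, ?_⟩
      set M := ∑ v, m v * MM γ φ s (krn m c v) with hM
      have e1 : D / ρ / 2 * ρ ^ 2 = D * ρ / 2 := by field_simp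
      have e2 : M / (2 * (D / ρ)) = M * ρ / (2 * D) := by field_simp
      have e3 : D * ρ / 2 ≤ M * ρ / (2 * D) := by
        rw [div_le_div_iff₀ (by positivity) (by positivity)]; nlinarith
      have e4 : M / 2 * (1 - 2 * ρ / D) = M / 2 - M * ρ / (2 * D) - M * ρ / (2 * D) := by
        field_simp; ring
      rw [e1, e2]
      calc B * (1 - 2 * ρ / D) ≤ (s * M / 2) * (1 - 2 * ρ / D) :=
            mul_le_mul_of_nonneg_right h2.le hfac
        _ = s * (M / 2 * (1 - 2 * ρ / D)) := by ring
        _ ≤ _ := by rw [e4]; apply mul_le_mul_of_nonneg_left _ hs; linarith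
  have hqp := krn_pmf hm0 hc
  have hqm := krn_mul hm0 c
  choose p' hp' hk hv using fun v => h.stepA hp (hqp v) s hs
  have hmix : ∀ f : T → ℝ, ∑ v, m v * ∑ w, krn m c v w * f w = ∑ w, m w * f w := fun f => by
    simp_rw [Finset.mul_sum, ← mul_assoc, hqm]
    rw [Finset.sum_comm]
    simp_rw [← Finset.sum_mul, hc.snd]
  refine ⟨p', hp', fun z => ?_, ?_, ?_⟩
  · simp_rw [hk, hmix fun w => kp γ (p w) z]; exact hpm z
  · have h1 := Finset.sum_le_sum (s := Finset.univ) fun v _ =>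
      mul_le_mul_of_nonneg_left (hv v (D / ρ) (by positivity)) (hm.nn v)
    refine le_trans ?_ h1
    have e : ∑ v, m v * (∑ w, krn m c v w * vl γ (p w) + s * (MM γ φ s (krn m c v) / 2 -
        D / ρ / 2 * ∑ w, krn m c v w * ∑ z, kp γ (p w) z * ‖φ w - φ z‖ ^ 2 -
        MM γ φ s (krn m c v) / (2 * (D / ρ)))) = ∑ w, m w * vl γ (p w) +
        s * ((∑ v, m v * MM γ φ s (krn m c v)) / 2 - D / ρ / 2 *
          ∑ w, m w * ∑ z, kp γ (p w) z * ‖φ w - φ z‖ ^ 2 -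
        (∑ v, m v * MM γ φ s (krn m c v)) / (2 * (D / ρ))) := by
      rw [← hmix fun w => vl γ (p w), ← hmix fun w => ∑ z, kp γ (p w) z * ‖φ w - φ z‖ ^ 2]
      rw [Finset.sum_div, Finset.sum_div, Finset.mul_sum (a := D / ρ / 2), ← Finset.sum_sub_distrib,
        ← Finset.sum_sub_distrib,
        Finset.mul_sum (a := s), ← Finset.sum_add_distrib]
      refine Finset.sum_congr rfl fun v _ => ?_
      ring
    rw [e]
    refine add_le_add hV (hgain.trans (mul_le_mul_of_nonneg_left ?_ hs))
    have := mul_le_mul_of_nonneg_left hd (show 0 ≤ D / ρ / 2 by positivity)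
    linarith
  · have hpt : ∀ v w z, ‖φ v - φ z‖ ^ 2 ≤ (1 + ρ / σ) * ‖φ v - φ w‖ ^ 2 + (1 + σ / ρ) * ‖φ w - φ z‖ ^ 2 := by
      intro v w z
      have h1 : ‖φ v - φ z‖ ≤ ‖φ v - φ w‖ + ‖φ w - φ z‖ := norm_sub_le_norm_sub_add_norm_sub _ _ _
      have h2 : ‖φ v - φ z‖ ^ 2 ≤ (‖φ v - φ w‖ + ‖φ w - φ z‖) ^ 2 := by gcongr
      have h3 : 0 ≤ 1 / (ρ * σ) * (ρ * ‖φ v - φ w‖ - σ * ‖φ w - φ z‖) ^ 2 := by positivity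
      have h4 : 1 / (ρ * σ) * (ρ * ‖φ v - φ w‖ - σ * ‖φ w - φ z‖) ^ 2 =
        ρ / σ * ‖φ v - φ w‖ ^ 2 + σ / ρ * ‖φ w - φ z‖ ^ 2 - 2 * ‖φ v - φ w‖ * ‖φ w - φ z‖ := by
        field_simp
        ring
      nlinarith
    have hkp := fun w => h.kp_pmf (hp w)
    have hle : ∀ v, m v * ∑ z, kp γ (p' v) z * ‖φ v - φ z‖ ^ 2 ≤
        (1 + ρ / σ) * ∑ w, c v w * ‖φ v - φ w‖ ^ 2 +
        (1 + σ / ρ) * (m v * ∑ w, krn m c v w * ∑ z, kp γ (p w) z * ‖φ w - φ z‖ ^ 2) := by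
      intro v
      have e : ∑ z, kp γ (p' v) z * ‖φ v - φ z‖ ^ 2 =
          ∑ w, krn m c v w * ∑ z, kp γ (p w) z * ‖φ v - φ z‖ ^ 2 := by
        simp_rw [hk, Finset.sum_mul, Finset.mul_sum]
        rw [Finset.sum_comm]
        exact Finset.sum_congr rfl fun w _ => Finset.sum_congr rfl fun z _ => by ring
      rw [e]
      have e2 : ∑ w, c v w * ‖φ v - φ w‖ ^ 2 = m v * ∑ w, krn m c v w * ‖φ v - φ w‖ ^ 2 := by
        rw [Finset.mul_sum]; simp_rw [← mul_assoc, hqm]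
      rw [e2, mul_left_comm _ (m v), mul_left_comm _ (m v), ← mul_add]
      apply mul_le_mul_of_nonneg_left _ (hm.nn v)
      rw [Finset.mul_sum, Finset.mul_sum, ← Finset.sum_add_distrib]
      refine Finset.sum_le_sum fun w _ => ?_
      rw [mul_left_comm _ (krn m c v w), mul_left_comm _ (krn m c v w), ← mul_add]
      apply mul_le_mul_of_nonneg_left _ ((hqp v).nn w)
      have := Finset.sum_le_sum (s := Finset.univ) fun z _ =>
        mul_le_mul_of_nonneg_left (hpt v w z) ((hkp w).nn z)
      refine this.trans (le_of_eq ?_)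
      simp_rw [mul_add, Finset.sum_add_distrib]
      rw [← Finset.sum_mul, (hkp w).sum, one_mul, Finset.mul_sum]
      congr 1
      exact Finset.sum_congr rfl fun w _ => by ring
    refine (Finset.sum_le_sum fun v _ => hle v).trans ?_
    rw [Finset.sum_add_distrib, ← Finset.mul_sum, ← Finset.mul_sum,
      hmix fun w => ∑ z, kp γ (p w) z * ‖φ w - φ z‖ ^ 2]
    have hcst' : ∑ v, ∑ w, c v w * ‖φ v - φ w‖ ^ 2 ≤ σ ^ 2 := hcst
    have l1 := mul_le_mul_of_nonneg_left hcst' (show 0 ≤ 1 + ρ / σ by positivity)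
    have l2 := mul_le_mul_of_nonneg_left hd (show 0 ≤ 1 + σ / ρ by positivity)
    have e5 : (1 + ρ / σ) * σ ^ 2 + (1 + σ / ρ) * ρ ^ 2 = (σ + ρ) ^ 2 := by field_simp; ring
    linarith

lemma GV.ach_base (h : GV γ φ) {m : T → ℝ} (ρ : ℝ) : Ach γ φ m 0 ρ := by
  classical
  have := h.prob
  have hk : ∀ w z, kp γ (fun _ : T → ℝ => fun z => if w = z then (1 : ℝ) else 0) z = if w = z then 1 else 0 := by
    intro w z; unfold kp; simp
  refine ⟨fun w _ z => if w = z then 1 else 0, fun w => ⟨fun z => measurable_const, fun x =>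
    ⟨fun z => by dsimp only; split_ifs <;> norm_num, by simp⟩⟩, fun z => ?_, ?_, ?_⟩
  · simp_rw [hk]; simp
  · refine le_of_eq (Finset.sum_eq_zero fun w _ => ?_).symm
    unfold vl
    rw [Finset.sum_eq_zero, mul_zero]
    intro z _
    dsimp only
    split_ifs
    · simp [h.mean z]
    · simp
  · refine le_trans (le_of_eq (Finset.sum_eq_zero fun w _ => ?_)) (sq_nonneg ρ)
    simp_rw [hk]; simp

def Ach' (γ : Measure (T → ℝ)) (φ : T → E) (m : T → ℝ) (V ρ : ℝ) : Prop := ∀ V' < V, Ach γ φ m V' ρ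

lemma GV.ach'_step (h : GV γ φ) {m : T → ℝ} (hm : Pmf m) (hm0 : ∀ v, 0 < m v) {V ρ D σ : ℝ}
    (hA : Ach' γ φ m V ρ) (hρ : 0 < ρ) (hρD : 2 * ρ ≤ D) (hDσ : D ≤ σ) :
    Ach' γ φ m (V + D * (Real.sqrt (iF φ m D) - Real.sqrt (iF φ m σ)) / Real.sqrt 2 * (1 - 2 * ρ / D))
      (σ + ρ) := by
  intro V' hV'
  have hD : 0 < D := by linarith
  have hfac : 0 ≤ 1 - 2 * ρ / D := by
    rw [sub_nonneg, div_le_one hD]; exact hρD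
  have hfac1 : 1 - 2 * ρ / D ≤ 1 := by
    have : 0 ≤ 2 * ρ / D := by positivity
    linarith
  have hii := iF_anti φ hm hD.le hDσ
  have hss := Real.sqrt_le_sqrt hii
  set G := D * (Real.sqrt (iF φ m D) - Real.sqrt (iF φ m σ)) / Real.sqrt 2 with hG
  set ε := V + G * (1 - 2 * ρ / D) - V' with hε
  have hε0 : 0 < ε := by linarith
  have := h.ach_step hm hm0 (hA (V - ε / 2) (by linarith)) hρ hρD (lt_of_lt_of_le hD hDσ)
    (B := G - ε / 2) (D := D) (by
      rcases le_or_gt (G - ε / 2) 0 with h0 | h0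
      · exact Or.inl h0
      · refine Or.inr ⟨h0.le, ?_⟩
        have h1 : (G - ε / 2) ^ 2 < G ^ 2 := by nlinarith
        have h2 : G ^ 2 = D ^ 2 * (Real.sqrt (iF φ m D) - Real.sqrt (iF φ m σ)) ^ 2 / 2 := by
          rw [hG, div_pow, mul_pow, Real.sq_sqrt (by norm_num)]
        have h3 := Real.sq_sqrt (iF_nonneg φ hm D)
        have h4 := Real.sq_sqrt (iF_nonneg φ hm σ)
        have h5 := Real.sqrt_nonneg (iF φ m σ)
        have h6 : (Real.sqrt (iF φ m D) - Real.sqrt (iF φ m σ)) ^ 2 ≤ iF φ m D - iF φ m σ := by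
          nlinarith
        have h7 := mul_le_mul_of_nonneg_left h6 (sq_nonneg D)
        linarith)
  obtain ⟨p, hp, hpm, hV, hd⟩ := this
  refine ⟨p, hp, hpm, le_trans ?_ hV, hd⟩
  nlinarith

lemma GV.ach_multi (h : GV γ φ) {m : T → ℝ} (hm : Pmf m) (hm0 : ∀ v, 0 < m v) (n : ℕ) :
    ∀ D : ℝ, 0 < D → Ach' γ φ m (∑ k ∈ Finset.range n, 53 / 63 / Real.sqrt 2 * (D * (1 / 64) ^ k *
      (Real.sqrt (iF φ m (D * (1 / 64) ^ k)) - Real.sqrt (iF φ m (5 * (D * (1 / 64) ^ k))))))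
      (5 / 63 * (64 * D)) := by
  induction n with
  | zero =>
    intro D hD V' hV'
    obtain ⟨p, hp, hpm, hV, hd⟩ := h.ach_base (m := m) (5 / 63 * (64 * D))
    exact ⟨p, hp, hpm, by simp at hV'; linarith, hd⟩
  | succ n ih =>
    intro D hD
    have h1 := h.ach'_step hm hm0 (ih (D * (1 / 64)) (by positivity)) (D := D) (σ := 5 * D)
      (by positivity) (by linarith) (by linarith)
    rw [Finset.sum_range_succ']
    have e1 : 5 * D + 5 / 63 * (64 * (D * (1 / 64))) = 5 / 63 * (64 * D) := by ring
    have e2 : 1 - 2 * (5 / 63 * (64 * (D * (1 / 64)))) / D = 53 / 63 := by field_simp; norm_num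
    rw [e1, e2] at h1
    convert h1 using 2
    · refine Finset.sum_congr rfl fun k _ => ?_
      rw [pow_succ']; ring_nf
    · simp; ring

lemma GV.grid (h : GV γ φ) {m : T → ℝ} (hm : Pmf m) (hm0 : ∀ v, 0 < m v) {W : ℝ}
    (hW : ∀ p, Fz p → (∀ z, kp γ p z = m z) → vl γ p ≤ W) (n : ℕ) (D : ℝ) (hD : 0 < D) :
    ∑ k ∈ Finset.range n, 53 / 63 / Real.sqrt 2 * (D * (1 / 64) ^ k *
      (Real.sqrt (iF φ m (D * (1 / 64) ^ k)) - Real.sqrt (iF φ m (5 * (D * (1 / 64) ^ k))))) ≤ W := by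
  apply le_of_forall_lt
  intro V hV
  obtain ⟨V', h1, h2⟩ := exists_between hV
  obtain ⟨p, hp, hpm, hV', -⟩ := h.ach_multi hm hm0 n D hD V' h2
  obtain ⟨p', hp', hk, hv⟩ := h.stepA hp hm 0 le_rfl
  have := hv 1 one_pos
  rw [zero_mul, add_zero] at this
  have := hW p' hp' fun z => by rw [hk, hpm]
  linarith

end

lemma grid_int (h : ℝ → ℝ) (ha : AntitoneOn h (Ici 0)) (h0 : ∀ t, 0 ≤ h t) (C R : ℝ) (hC : ∀ t, h t ≤ C)
    (hR : 0 < R) (hz : ∀ t, R ≤ t → h t = 0) (A W : ℝ) (hA : 0 ≤ A)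
    (hg : ∀ (n : ℕ) (D : ℝ), 0 < D → ∑ k ∈ Finset.range n, A * (D * (1 / 64) ^ k *
      (h (D * (1 / 64) ^ k) - h (5 * (D * (1 / 64) ^ k)))) ≤ W) :
    A * (4 / 5) * ∫ t in Ioi (0 : ℝ), h t ≤ W * Real.log 64 := by
  have hii : ∀ a b, 0 ≤ a → 0 ≤ b → IntervalIntegrable h volume a b := fun a b h1 h2 =>
    (ha.mono (fun x hx => by
      rcases le_total a b with hab | hab
      · rw [uIcc_of_le hab] at hx; exact h1.trans hx.1
      · rw [uIcc_of_ge hab] at hx; exact h2.trans hx.1)).intervalIntegrable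
  have ha5 : AntitoneOn (fun t => h (5 * t)) (Ici 0) := fun x hx y hy hxy =>
    ha (by simp at hx ⊢; exact hx) (by simp at hy ⊢; exact hy) (by linarith)
  have hii5 : ∀ a b, 0 ≤ a → 0 ≤ b → IntervalIntegrable (fun t => h (5 * t)) volume a b := fun a b h1 h2 =>
    (ha5.mono (fun x hx => by
      rcases le_total a b with hab | hab
      · rw [uIcc_of_le hab] at hx; exact h1.trans hx.1
      · rw [uIcc_of_ge hab] at hx; exact h2.trans hx.1)).intervalIntegrable
  set u : ℝ → ℝ := fun t => h t - h (5 * t) with hu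
  have hui : ∀ a b, 0 ≤ a → 0 ≤ b → IntervalIntegrable u volume a b := fun a b h1 h2 =>
    (hii a b h1 h2).sub (hii5 a b h1 h2)
  -- total over the half line
  have htot : ∫ t in Ioi (0 : ℝ), h t = ∫ t in (0 : ℝ)..R, h t := by
    rw [intervalIntegral.integral_of_le hR.le]
    refine setIntegral_eq_of_subset_of_forall_diff_eq_zero measurableSet_Ioi Ioc_subset_Ioi_self ?_
    intro x hx
    apply hz
    by_contra hlt
    exact hx.2 ⟨hx.1, (not_le.1 hlt).le⟩
  rw [htot]
  have main : ∀ n : ℕ, A * (∫ t in (R * (1 / 64) ^ n)..R, u t) ≤ W * Real.log 64 := by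
    intro n
    have hR64 : R * (1 / 64) ≤ R := by linarith
    have e1 : ∀ k : ℕ, ∫ D in (R * (1 / 64))..R, (1 / 64 : ℝ) ^ k * u (D * (1 / 64) ^ k) =
        ∫ t in (R * (1 / 64) ^ (k + 1))..(R * (1 / 64) ^ k), u t := by
      intro k
      rw [intervalIntegral.integral_const_mul, intervalIntegral.mul_integral_comp_mul_right]
      congr 1; ring
    have hik : ∀ k : ℕ, IntervalIntegrable (fun D => (1 / 64 : ℝ) ^ k * u (D * (1 / 64) ^ k)) volume
        (R * (1 / 64)) R := by
      intro k
      apply IntervalIntegrable.const_mul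
      have := (hui (R * (1 / 64) * (1 / 64) ^ k) (R * (1 / 64) ^ k) (by positivity) (by positivity)).comp_mul_right (c := (1 / 64 : ℝ) ^ k)
      rwa [mul_div_cancel_right₀ _ (by positivity), mul_div_cancel_right₀ _ (by positivity)] at this
    have e2 : ∑ k ∈ Finset.range n, ∫ t in (R * (1 / 64) ^ (k + 1))..(R * (1 / 64) ^ k), u t =
        ∫ t in (R * (1 / 64) ^ n)..R, u t := by
      have := intervalIntegral.sum_integral_adjacent_intervals (f := u) (μ := volume)
        (a := fun k : ℕ => R * (1 / 64) ^ k) (n := n) (fun k _ => hui _ _ (by positivity) (by positivity))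
      rw [pow_zero, mul_one] at this
      rw [intervalIntegral.integral_symm R, ← this, ← Finset.sum_neg_distrib]
      refine Finset.sum_congr rfl fun k _ => ?_
      rw [intervalIntegral.integral_symm]
    have e3 : ∫ D in (R * (1 / 64))..R, W * D⁻¹ = W * Real.log 64 := by
      rw [intervalIntegral.integral_const_mul, integral_inv_of_pos (by positivity) hR]
      congr 2; field_simp
    rw [← e2, ← e3, Finset.mul_sum]
    simp_rw [← e1, ← intervalIntegral.integral_const_mul A]
    rw [← intervalIntegral.integral_finset_sum fun k _ => (hik k).const_mul A]
    have hpos : ∀ D ∈ Icc (R * (1 / 64)) R, 0 < D := fun D hD => lt_of_lt_of_le (by positivity) hD.1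
    apply intervalIntegral.integral_mono_on hR64
    · have := IntervalIntegrable.sum (Finset.range n) (f := fun k D => A * ((1 / 64 : ℝ) ^ k * u (D * (1 / 64) ^ k)))
        (fun k _ => (hik k).const_mul A)
      have e : (fun D => ∑ k ∈ Finset.range n, A * ((1 / 64 : ℝ) ^ k * u (D * (1 / 64) ^ k))) =
        ∑ k ∈ Finset.range n, (fun D => A * ((1 / 64 : ℝ) ^ k * u (D * (1 / 64) ^ k))) := by
        ext D; simp
      rw [e]; exact this
    · apply IntervalIntegrable.const_mul
      apply intervalIntegral.intervalIntegrable_inv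
      · intro x hx; rw [uIcc_of_le hR64] at hx; exact (hpos x hx).ne'
      · exact continuousOn_id
    · intro D hD
      have hDp := hpos D hD
      have := hg n D hDp
      have e4 : ∑ k ∈ Finset.range n, A * (D * (1 / 64) ^ k *
         (h (D * (1 / 64) ^ k) - h (5 * (D * (1 / 64) ^ k)))) =
         (∑ k ∈ Finset.range n, A * ((1 / 64) ^ k * u (D * (1 / 64) ^ k))) * D := by
        rw [Finset.sum_mul]; refine Finset.sum_congr rfl fun k _ => ?_
        simp only [hu]; ring
      rw [e4, ← le_div_iff₀ hDp] at this
      rwa [← div_eq_mul_inv]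
  have low : ∀ n : ℕ, A * (4 / 5) * ((∫ t in (0 : ℝ)..R, h t) - C * (R * (1 / 64) ^ n)) ≤ W * Real.log 64 := by
    intro n
    refine le_trans ?_ (main n)
    rw [mul_assoc]
    apply mul_le_mul_of_nonneg_left _ hA
    set a := R * (1 / 64 : ℝ) ^ n with hadef
    have ha0 : 0 < a := by positivity
    have haR : a ≤ R := by
      rw [hadef]; apply mul_le_of_le_one_right hR.le; apply pow_le_one₀ <;> norm_num
    have f1 : ∫ t in a..R, u t = (∫ t in a..R, h t) - ∫ t in a..R, h (5 * t) :=
      intervalIntegral.integral_sub (hii _ _ ha0.le hR.le) (hii5 _ _ ha0.le hR.le)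
    have f2 : ∫ t in a..R, h (5 * t) = (1 / 5) * ∫ t in (5 * a)..(5 * R), h t := by
      rw [intervalIntegral.integral_comp_mul_left _ (by norm_num : (5 : ℝ) ≠ 0)]; simp
    have f3 : ∫ t in (5 * a)..(5 * R), h t ≤ ∫ t in a..R, h t := by
      have g1 := intervalIntegral.integral_add_adjacent_intervals (hii a (5 * a) ha0.le (by positivity))
        (hii (5 * a) (5 * R) (by positivity) (by positivity))
      have g2 := intervalIntegral.integral_add_adjacent_intervals (hii a R ha0.le hR.le)
        (hii R (5 * R) hR.le (by positivity))
      have g3 : 0 ≤ ∫ t in a..(5 * a), h t :=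
        intervalIntegral.integral_nonneg (by linarith) fun t _ => h0 t
      have g4 : ∫ t in R..(5 * R), h t = 0 := by
        rw [intervalIntegral.integral_congr (g := fun _ => 0)]
        · simp
        · intro t ht
          rw [uIcc_of_le (by linarith)] at ht
          exact hz t ht.1
      linarith
    have f4 := intervalIntegral.integral_add_adjacent_intervals (hii 0 a le_rfl ha0.le) (hii a R ha0.le hR.le)
    have f5 : ∫ t in (0 : ℝ)..a, h t ≤ C * a := by
      have := intervalIntegral.integral_mono_on ha0.le (hii 0 a le_rfl ha0.le)
        (intervalIntegrable_const (c := C)) (fun t _ => hC t)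
      simpa [mul_comm] using this
    linarith
  have hlim : Filter.Tendsto (fun n : ℕ => A * (4 / 5) * ((∫ t in (0 : ℝ)..R, h t) - C * (R * (1 / 64) ^ n)))
      Filter.atTop (nhds (A * (4 / 5) * ((∫ t in (0 : ℝ)..R, h t) - C * (R * 0)))) := by
    apply Filter.Tendsto.const_mul
    apply Filter.Tendsto.const_sub
    apply Filter.Tendsto.const_mul
    apply Filter.Tendsto.const_mul
    exact tendsto_pow_atTop_nhds_zero_of_lt_one (by norm_num) (by norm_num)
  have := le_of_tendsto hlim (Filter.Eventually.of_forall low)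
  simpa using this

section
variable {T : Type*} [Fintype T]
variable {E : Type*} [NormedAddCommGroup E] [InnerProductSpace ℝ E]
  {γ : Measure (T → ℝ)} {φ : T → E}

/-- finite core -/
lemma GV.core (h : GV γ φ) {m : T → ℝ} (hm : Pmf m) (hm0 : ∀ v, 0 < m v) {W : ℝ}
    (hW : ∀ p, Fz p → (∀ z, kp γ p z = m z) → vl γ p ≤ W) :
    53 / 63 / Real.sqrt 2 * (4 / 5) * ∫ t in Ioi (0 : ℝ), Real.sqrt (iF φ m t) ≤ W * Real.log 64 := by
  obtain ⟨C, hC⟩ := iF_bound φ hm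
  obtain ⟨R, hR, hz⟩ := iF_large φ hm
  exact grid_int _ (fun x hx y _ hxy => Real.sqrt_le_sqrt (iF_anti φ hm hx hxy))
    (fun t => Real.sqrt_nonneg _) (Real.sqrt C) R (fun t => Real.sqrt_le_sqrt (hC t)) hR
    (fun t ht => by rw [hz t ht, Real.sqrt_zero]) _ W (by positivity) (h.grid hm hm0 hW)
end

lemma cRD_nonneg : 0 ≤ cRD := by
  apply Real.sSup_nonneg
  rintro x ⟨τ, ⟨h1, h2⟩, rfl⟩
  have : 0 < Real.log (4 / τ) := Real.log_pos (by rw [lt_div_iff₀ h1]; linarith)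
  apply div_nonneg (by linarith)
  have : 0 < 4 - τ := by linarith
  positivity

lemma cRD_le : cRD * Real.log 64 ≤ 53 / 63 / Real.sqrt 2 * (4 / 5) := by
  have hl : Real.log 64 = 6 * Real.log 2 := by
    rw [show (64 : ℝ) = 2 ^ 6 by norm_num, Real.log_pow]; norm_num
  have l1 := Real.log_two_gt_d9
  have l2 := Real.log_two_lt_d9
  have hlp : 0 < Real.log 64 := by rw [hl]; linarith
  have hs : 0 < Real.sqrt 2 := by positivity
  rw [← le_div_iff₀ hlp]
  apply csSup_le
  · exact ⟨_, 1 / 2, ⟨by norm_num, by norm_num⟩, rfl⟩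
  rintro x ⟨τ, ⟨h1, h2⟩, rfl⟩
  have hlt : 0 < Real.log (4 / τ) := Real.log_pos (by rw [lt_div_iff₀ h1]; linarith)
  have h4 : 0 < 4 - τ := by linarith
  rw [div_le_div_iff₀ (by positivity) hlp]
  have hlog : 4 * Real.log 2 + 1 - 4 * τ ≤ Real.log (4 / τ) := by
    have h3 : Real.log (4 / τ) = 4 * Real.log 2 - Real.log (4 * τ) := by
      rw [show 4 / τ = 2 ^ 4 / (4 * τ) by field_simp; norm_num, Real.log_div (by positivity) (by positivity),
        Real.log_pow]; norm_num
    have := Real.log_le_sub_one_of_pos (show 0 < 4 * τ by linarith)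
    rw [h3]; linarith
  have e : 53 / 63 / Real.sqrt 2 * (4 / 5) * (2 * Real.sqrt 2 * (4 - τ) * Real.log (4 / τ)) =
      424 / 315 * (4 - τ) * Real.log (4 / τ) := by field_simp; norm_num
  rw [e, hl]
  have h5 := mul_le_mul_of_nonneg_left hlog (show 0 ≤ 424 / 315 * (4 - τ) by positivity)
  refine le_trans ?_ h5
  nlinarith [sq_nonneg (τ - 1/2), sq_nonneg (τ - 1 / 4)]

lemma mexp {S : Type*} [Fintype S] (c : S → ℝ) : Measurable (fun x : S → ℝ => Real.exp (∑ w, c w * x w)) := by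
  fun_prop

lemma law_ext {S : Type*} [Fintype S] {μ ν : Measure (S → ℝ)} [IsProbabilityMeasure μ] [IsProbabilityMeasure ν]
    (hμ : ∀ c : S → ℝ, Integrable (fun x => Real.exp (∑ w, c w * x w)) μ)
    (h : ∀ c : S → ℝ, ∫ x, Real.exp (∑ w, c w * x w) ∂μ = ∫ x, Real.exp (∑ w, c w * x w) ∂ν) : μ = ν := by
  classical
  apply Measure.ext_of_charFunDual
  ext L
  rw [charFunDual_eq_charFun_map_one, charFunDual_eq_charFun_map_one]
  have hL : ∀ x : S → ℝ, L x = ∑ w, L (Pi.single w 1) * x w := by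
    intro x
    conv_lhs => rw [← Finset.univ_sum_single x, map_sum]
    refine Finset.sum_congr rfl fun w _ => ?_
    have : (Pi.single w (x w) : S → ℝ) = x w • Pi.single w 1 := by
      rw [← Pi.single_smul]; simp
    rw [this, map_smul, smul_eq_mul, mul_comm]
  have hmul : ∀ (t : ℝ) (x : S → ℝ), t * L x = ∑ w, (t * L (Pi.single w 1)) * x w := by
    intro t x; rw [hL x, Finset.mul_sum]; simp only [mul_assoc]
  have hm : mgf L μ = mgf L ν := by
    ext t
    rw [mgf, mgf, integral_congr_ae (Filter.Eventually.of_forall fun x => congrArg Real.exp (hmul t x)), h,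
      integral_congr_ae (Filter.Eventually.of_forall fun x => congrArg Real.exp (hmul t x))]
  have hs : integrableExpSet L μ = univ := by
    ext t
    simp only [integrableExpSet, mem_setOf_eq, mem_univ, iff_true]
    exact (hμ _).congr (Filter.Eventually.of_forall fun x => congrArg Real.exp (hmul t x).symm)
  have key := eqOn_complexMGF_of_mgf hm
  have := key (x := ((1 : ℝ) : ℂ) * Complex.I) (by simp [hs])
  rwa [complexMGF_mul_I (by fun_prop), complexMGF_mul_I (by fun_prop)] at this

section
variable {Ω S : Type*} [MeasurableSpace Ω] [Fintype S] {P : Measure Ω} [IsProbabilityMeasure P] {X : S → Ω → ℝ}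

lemma gp_lin (hG : IsCenteredGaussianProcess P X) (c : S → ℝ) :
    ∃ v : NNReal, P.map (fun ω => ∑ w, c w * X w ω) = gaussianReal 0 v := by
  classical
  obtain ⟨v, hv⟩ := hG (Finsupp.equivFunOnFinite.symm c)
  refine ⟨v, ?_⟩
  rw [← hv]
  congr 1
  ext ω
  rw [Finsupp.sum_fintype _ _ (by simp)]
  simp

lemma gp_lin' (hm : ∀ t, Measurable (X t)) (hG : IsCenteredGaussianProcess P X) (c : S → ℝ) :
    P.map (fun ω => ∑ w, c w * X w ω) =
      gaussianReal 0 (∫ ω, (∑ w, c w * X w ω) ^ 2 ∂P).toNNReal ∧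
     MemLp (fun ω => ∑ w, c w * X w ω) 2 P := by
  obtain ⟨v, hv⟩ := gp_lin hG c
  have hmY : Measurable (fun ω => ∑ w, c w * X w ω) := by fun_prop
  have h1 : ∫ ω, (∑ w, c w * X w ω) ^ 2 ∂P = v := by
    have : ∫ x, x ^ 2 ∂(gaussianReal 0 v) = v := by
      have := variance_id_gaussianReal (μ := 0) (v := v)
      rw [variance_eq_integral (by fun_prop)] at this
      simpa using this
    rw [← this, ← hv, integral_map hmY.aemeasurable (by fun_prop)]
  refine ⟨by rw [h1, Real.toNNReal_coe]; exact hv, ?_⟩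
  have := memLp_id_gaussianReal (μ := 0) (v := v) 2
  rw [← hv] at this
  exact (memLp_map_measure_iff (by fun_prop) hmY.aemeasurable).1 this

lemma gp_memLp (hm : ∀ t, Measurable (X t)) (hG : IsCenteredGaussianProcess P X) (w : S) : MemLp (X w) 2 P := by
  classical
  simpa using (gp_lin' hm hG (Pi.single w 1)).2.congr_norm (by fun_prop) (f := fun ω => ∑ u, (Pi.single w 1 : S → ℝ) u * X u ω)
    (g := X w) (by filter_upwards with ω; simp [Pi.single_apply])

/-- embedding into L2 -/
def pe (hm : ∀ t, Measurable (X t)) (hG : IsCenteredGaussianProcess P X) (w : S) : Lp ℝ 2 P :=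
  (gp_memLp hm hG w).toLp (X w)

lemma pe_inner (hm : ∀ t, Measurable (X t)) (hG : IsCenteredGaussianProcess P X) (v w : S) :
    inner ℝ (pe hm hG v) (pe hm hG w) = ∫ ω, X v ω * X w ω ∂P := by
  rw [MeasureTheory.L2.inner_def]
  apply integral_congr_ae
  filter_upwards [(gp_memLp hm hG v).coeFn_toLp, (gp_memLp hm hG w).coeFn_toLp] with ω h1 h2
  rw [pe, pe, h1, h2]; simp [mul_comm]

lemma pe_sum (hm : ∀ t, Measurable (X t)) (hG : IsCenteredGaussianProcess P X) (c : S → ℝ) :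
    ‖∑ w, c w • pe hm hG w‖ ^ 2 = ∫ ω, (∑ w, c w * X w ω) ^ 2 ∂P := by
  rw [← real_inner_self_eq_norm_sq, sum_inner]
  simp_rw [inner_sum, real_inner_smul_left, real_inner_smul_right, pe_inner]
  have hi : ∀ v w, Integrable (fun ω => c v * (c w * (X v ω * X w ω))) P := fun v w =>
    (((gp_memLp hm hG v).integrable_mul (gp_memLp hm hG w)).const_mul _).const_mul _
  have : ∀ ω, (∑ w, c w * X w ω) ^ 2 = ∑ v, ∑ w, c v * (c w * (X v ω * X w ω)) := by
    intro ω
    rw [sq, Finset.sum_mul_sum]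
    refine Finset.sum_congr rfl fun v _ => Finset.sum_congr rfl fun w _ => by ring
  simp_rw [this]
  rw [integral_finsetSum _ (fun v _ => integrable_finsetSum _ (fun w _ => hi v w))]
  refine Finset.sum_congr rfl fun v _ => ?_
  rw [integral_finsetSum _ (fun w _ => hi v w)]
  refine Finset.sum_congr rfl fun w _ => ?_
  rw [integral_const_mul, integral_const_mul]

lemma pe_dist (hm : ∀ t, Measurable (X t)) (hG : IsCenteredGaussianProcess P X) (v w : S) :
    ‖pe hm hG v - pe hm hG w‖ ^ 2 = ∫ ω, (X v ω - X w ω) ^ 2 ∂P := by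
  classical
  have := pe_sum hm hG (Pi.single v 1 - Pi.single w 1)
  simpa [sub_smul, sub_mul, Pi.single_apply, Finset.sum_sub_distrib] using this

lemma gv_mgf (hm : ∀ t, Measurable (X t)) (hG : IsCenteredGaussianProcess P X) (c : S → ℝ) :
    Integrable (fun x => Real.exp (∑ w, c w * x w)) (P.map (fun ω s => X s ω)) ∧
    ∫ x, Real.exp (∑ w, c w * x w) ∂(P.map (fun ω s => X s ω)) = Real.exp (‖∑ w, c w • pe hm hG w‖ ^ 2 / 2) := by
  have hmX : Measurable (fun ω s => X s ω) := by fun_prop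
  have hmY : Measurable (fun ω => ∑ w, c w * X w ω) := by fun_prop
  obtain ⟨hl, -⟩ := gp_lin' hm hG c
  rw [integrable_map_measure (mexp c).aestronglyMeasurable hmX.aemeasurable, integral_map hmX.aemeasurable (mexp c).aestronglyMeasurable]
  constructor
  · have := integrable_exp_mul_gaussianReal (μ := 0) (v := (∫ ω, (∑ w, c w * X w ω) ^ 2 ∂P).toNNReal) 1
    rw [← hl, integrable_map_measure (by fun_prop) hmY.aemeasurable] at this
    simpa [Function.comp_def] using this
  · have := congrFun (mgf_id_gaussianReal (μ := 0) (v := (∫ ω, (∑ w, c w * X w ω) ^ 2 ∂P).toNNReal)) 1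
    rw [← hl, mgf, integral_map hmY.aemeasurable (by fun_prop)] at this
    rw [pe_sum]
    have h0 : 0 ≤ ∫ ω, (∑ w, c w * X w ω) ^ 2 ∂P := integral_nonneg fun _ => sq_nonneg _
    simpa [Real.coe_toNNReal _ h0] using this

lemma gp_mean (hm : ∀ t, Measurable (X t)) (hG : IsCenteredGaussianProcess P X) (w : S) : ∫ ω, X w ω ∂P = 0 := by
  classical
  obtain ⟨hl, -⟩ := gp_lin' hm hG (Pi.single w 1)
  have h : (fun ω => ∑ u, (Pi.single w 1 : S → ℝ) u * X u ω) = X w := by ext ω; simp [Pi.single_apply]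
  have := integral_id_gaussianReal (μ := 0) (v := (∫ ω, (∑ u, (Pi.single w 1 : S → ℝ) u * X u ω) ^ 2 ∂P).toNNReal)
  rw [← hl, h, integral_map (hm w).aemeasurable (by fun_prop)] at this
  exact this

lemma gv_of (hm : ∀ t, Measurable (X t)) (hG : IsCenteredGaussianProcess P X) :
    GV (P.map (fun ω s => X s ω)) (pe hm hG) := by
  have hmX : Measurable (fun ω s => X s ω) := by fun_prop
  have hp : IsProbabilityMeasure (P.map (fun ω s => X s ω)) := Measure.isProbabilityMeasure_map hmX.aemeasurable
  have M := gv_mgf hm hG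
  set γ := P.map (fun ω s => X s ω) with hγ
  set φ := pe hm hG with hφ
  classical
  refine ⟨hp, M, ?_, ?_, ?_⟩
  · intro s w
    set kv : S → ℝ := fun u => inner ℝ (φ w) (φ u) with hk
    have hc : ∀ x : S → ℝ, s * x w - s ^ 2 * ‖φ w‖ ^ 2 / 2 = (∑ u, (Pi.single w s : S → ℝ) u * x u) - s ^ 2 * ‖φ w‖ ^ 2 / 2 := by
      intro x; simp [Pi.single_apply]
    have hsum : ∀ c : S → ℝ, ∀ x : S → ℝ, (∑ u, c u * (x + s • kv) u) = (∑ u, c u * x u) + s * inner ℝ (φ w) (∑ u, c u • φ u) := by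
      intro c x
      simp only [Pi.add_apply, Pi.smul_apply, smul_eq_mul, mul_add, Finset.sum_add_distrib, inner_sum,
        real_inner_smul_right, Finset.mul_sum, hk]
      congr 1
      exact Finset.sum_congr rfl fun u _ => by ring
    have i1 : Integrable (fun x : S → ℝ => Real.exp (s * x w - s ^ 2 * ‖φ w‖ ^ 2 / 2)) γ := by
      simp_rw [hc, Real.exp_sub]
      exact (M _).1.div_const _
    have i2 : ∫ x : S → ℝ, Real.exp (s * x w - s ^ 2 * ‖φ w‖ ^ 2 / 2) ∂γ = 1 := by
      simp_rw [hc, Real.exp_sub]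
      rw [integral_div, (M _).2]
      have : ‖∑ u, (Pi.single w s : S → ℝ) u • φ u‖ ^ 2 = s ^ 2 * ‖φ w‖ ^ 2 := by
        simp [Pi.single_apply, norm_smul, mul_pow]
      rw [this, div_self (Real.exp_pos _).ne']
    have mm : Measurable (fun x : S → ℝ => x + s • kv) := by fun_prop
    haveI : IsProbabilityMeasure (γ.map (fun x => x + s • kv)) := Measure.isProbabilityMeasure_map mm.aemeasurable
    haveI : IsProbabilityMeasure (γ.withDensity (fun x => ENNReal.ofReal (Real.exp (s * x w - s ^ 2 * ‖φ w‖ ^ 2 / 2)))) := by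
      constructor
      rw [withDensity_apply _ MeasurableSet.univ, Measure.restrict_univ,
        ← ofReal_integral_eq_lintegral_ofReal i1 (by filter_upwards with x; positivity), i2]
      simp
    apply law_ext
    · intro c
      rw [integrable_map_measure (mexp c).aestronglyMeasurable mm.aemeasurable]
      simp only [Function.comp_def, hsum, Real.exp_add]
      exact (M c).1.mul_const _
    · intro c
      rw [integral_map mm.aemeasurable (mexp c).aestronglyMeasurable]
      simp_rw [hsum, Real.exp_add]
      rw [integral_mul_const, (M c).2, integral_withDensity_eq_integral_toReal_smul (by fun_prop) (by simp)]
      have : ∀ x : S → ℝ, (ENNReal.ofReal (Real.exp (s * x w - s ^ 2 * ‖φ w‖ ^ 2 / 2))).toReal • Real.exp (∑ u, c u * x u)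
          = Real.exp (∑ u, (c + (Pi.single w s : S → ℝ)) u * x u) * (Real.exp (s ^ 2 * ‖φ w‖ ^ 2 / 2))⁻¹ := by
        intro x
        rw [ENNReal.toReal_ofReal (Real.exp_pos _).le, smul_eq_mul, ← Real.exp_add, ← Real.exp_neg, ← Real.exp_add, hc]
        congr 1
        simp only [Pi.add_apply, add_mul, Finset.sum_add_distrib]
        ring
      simp_rw [this]
      rw [integral_mul_const, (M _).2, ← Real.exp_neg, ← Real.exp_add, ← Real.exp_add]
      congr 1
      have : ∑ u, (c + (Pi.single w s : S → ℝ)) u • φ u = ∑ u, c u • φ u + s • φ w := by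
        simp [add_smul, Finset.sum_add_distrib, Pi.single_apply]
      rw [this, norm_add_sq_real, real_inner_smul_right, norm_smul, mul_pow, Real.norm_eq_abs, sq_abs, real_inner_comm]
      ring
  · intro a b c habc
    have m1 : Measurable (fun p : (S → ℝ) × (S → ℝ) => a • p.1 + b • p.2) := by fun_prop
    have m2 : Measurable (fun x : S → ℝ => c • x) := by fun_prop
    haveI : IsProbabilityMeasure ((γ.prod γ).map (fun p => a • p.1 + b • p.2)) := Measure.isProbabilityMeasure_map m1.aemeasurable
    haveI : IsProbabilityMeasure (γ.map (fun x => c • x)) := Measure.isProbabilityMeasure_map m2.aemeasurable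
    have e1 : ∀ (e : S → ℝ) (p : (S → ℝ) × (S → ℝ)), Real.exp (∑ w, e w * (a • p.1 + b • p.2) w) =
        Real.exp (∑ w, (a • e) w * p.1 w) * Real.exp (∑ w, (b • e) w * p.2 w) := by
      intro e p
      rw [← Real.exp_add, ← Finset.sum_add_distrib]
      congr 1
      refine Finset.sum_congr rfl fun w _ => ?_
      simp only [Pi.add_apply, Pi.smul_apply, smul_eq_mul]; ring
    have e2 : ∀ (e : S → ℝ) (x : S → ℝ), Real.exp (∑ w, e w * (c • x) w) = Real.exp (∑ w, (c • e) w * x w) := by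
      intro e x
      congr 1
      refine Finset.sum_congr rfl fun w _ => ?_
      simp only [Pi.smul_apply, smul_eq_mul]; ring
    have e3 : ∀ (r : ℝ) (e : S → ℝ), ‖∑ w, (r • e) w • φ w‖ ^ 2 = r ^ 2 * ‖∑ w, e w • φ w‖ ^ 2 := by
      intro r e
      have : ∑ w, (r • e) w • φ w = r • ∑ w, e w • φ w := by
        simp [Finset.smul_sum, mul_smul]
      rw [this, norm_smul, mul_pow, Real.norm_eq_abs, sq_abs]
    apply law_ext
    · intro e
      rw [integrable_map_measure (mexp e).aestronglyMeasurable m1.aemeasurable]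
      simp only [Function.comp_def, e1]
      exact (M _).1.mul_prod (M _).1
    · intro e
      rw [integral_map m1.aemeasurable (mexp e).aestronglyMeasurable, integral_map m2.aemeasurable (mexp e).aestronglyMeasurable]
      simp_rw [e1, e2]
      rw [integral_prod_mul (fun x : S → ℝ => Real.exp (∑ w, (a • e) w * x w)) (fun x : S → ℝ => Real.exp (∑ w, (b • e) w * x w)),
        (M _).2, (M _).2, (M _).2, ← Real.exp_add, e3, e3, e3, ← habc]
      congr 1; ring
  · intro w
    rw [hγ, integral_map hmX.aemeasurable (measurable_pi_apply w).aestronglyMeasurable]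
    exact gp_mean hm hG w

end

lemma gp_restrict {Ω S T : Type*} [MeasurableSpace Ω] {P : Measure Ω} {X : T → Ω → ℝ}
    (hG : IsCenteredGaussianProcess P X) (j : S → T) : IsCenteredGaussianProcess P (fun s => X (j s)) := by
  classical
  intro c
  obtain ⟨v, hv⟩ := hG (c.mapDomain j)
  refine ⟨v, ?_⟩
  rw [← hv]
  congr 1
  ext ω
  rw [Finsupp.sum_mapDomain_index (by simp) (by intros; ring)]

lemma cdf_cont (ν : Measure ℝ) [IsProbabilityMeasure ν] [NullSingletonClass ν] : Continuous (cdf ν) := by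
  rw [continuous_iff_continuousAt]
  intro a
  rw [(cdf ν).mono.continuousAt_iff_leftLim_eq_rightLim, StieltjesFunction.rightLim_eq]
  have := StieltjesFunction.measure_singleton (cdf ν) a
  rw [measure_cdf, measure_singleton] at this
  have h2 := ENNReal.ofReal_eq_zero.1 this.symm
  have h3 := (cdf ν).mono.leftLim_le (le_refl a)
  linarith

/-- cdf as a map to the unit interval -/
def uc (ν : Measure ℝ) (x : ℝ) : unitInterval := ⟨cdf ν x, ⟨cdf_nonneg ν x, cdf_le_one ν x⟩⟩

lemma pit (ν : Measure ℝ) [IsProbabilityMeasure ν] [NullSingletonClass ν] :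
    ν.map (uc ν) = volume := by
  have hc := cdf_cont ν
  have hm : Measurable (uc ν) :=
    hc.measurable.subtype_mk
  have hprob : IsProbabilityMeasure (ν.map (uc ν)) :=
    Measure.isProbabilityMeasure_map hm.aemeasurable
  have hex : ∀ u : ℝ, 0 < u → u < 1 → ∃ x, cdf ν x = u := by
    intro u h0 h1
    obtain ⟨a, ha⟩ := ((tendsto_cdf_atBot ν).eventually (gt_mem_nhds h0)).exists
    obtain ⟨b, hb⟩ := ((tendsto_cdf_atTop ν).eventually (lt_mem_nhds h1)).exists
    exact mem_range_of_exists_le_of_exists_ge hc ⟨a, ha.le⟩ ⟨b, hb.le⟩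
  refine Measure.ext_of_Iic _ _ fun u => ?_
  rw [Measure.map_apply hm measurableSet_Iic, unitInterval.volume_Iic]
  obtain ⟨u, hu0, hu1⟩ := u
  have hpre : ((uc ν) ⁻¹' Iic ⟨u, hu0, hu1⟩) = {x | cdf ν x ≤ u} := by
    ext x; rfl
  rw [hpre]
  apply le_antisymm
  · rcases hu1.lt_or_eq with h | h
    · refine le_of_forall_gt_imp_ge_of_dense fun b hb => ?_
      by_cases hb1 : b < 1
      · have hbt : b ≠ ⊤ := (hb1.trans ENNReal.one_lt_top).ne
        have h1 : u < b.toReal := (ENNReal.ofReal_lt_iff_lt_toReal hu0 hbt).1 hb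
        have h2 : b.toReal < 1 := by
          have := (ENNReal.toReal_lt_toReal hbt ENNReal.one_ne_top).2 hb1
          simpa using this
        obtain ⟨x, hx⟩ := hex b.toReal (hu0.trans_lt h1) h2
        calc ν {x | cdf ν x ≤ u} ≤ ν (Iic x) := by
              refine measure_mono fun y hy => ?_
              by_contra hxy
              simp only [mem_Iic, not_le] at hxy
              have := monotone_cdf ν hxy.le
              simp only [mem_setOf_eq] at hy
              linarith
          _ = b := by rw [← ofReal_cdf, hx, ENNReal.ofReal_toReal hbt]
      · exact prob_le_one.trans (not_lt.1 hb1)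
    · simp only [h, ENNReal.ofReal_one]; exact prob_le_one
  · rcases hu1.lt_or_eq with h | h
    · rcases hu0.lt_or_eq with h' | h'
      · obtain ⟨x, hx⟩ := hex u h' h
        calc ENNReal.ofReal u = ν (Iic x) := by rw [← ofReal_cdf, hx]
          _ ≤ _ := measure_mono fun y hy => by
            have := monotone_cdf ν (show y ≤ x from hy)
            simp only [mem_setOf_eq]; linarith
      · simp [← h']
    · have : {x | cdf ν x ≤ u} = univ := by
        ext x; simp [h, cdf_le_one]
      rw [this]; simp [h]

lemma atomless_map {T : Type*} [MeasurableSpace T] [MeasurableSingletonClass T] [Countable T]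
    (ν : Measure ℝ) [IsProbabilityMeasure ν] [NullSingletonClass ν] (κ : Measure T) [IsProbabilityMeasure κ] :
    ∃ h : ℝ → T, Measurable h ∧ ν.map h = κ := by
  haveI : Nonempty T := by
    by_contra hn
    rw [not_nonempty_iff] at hn
    have := measure_univ (μ := κ)
    simp [Set.univ_eq_empty_iff.2 hn] at this
  have hu : Measurable (uc ν) := (cdf_cont ν).measurable.subtype_mk
  obtain ⟨f, hf, hf'⟩ := Measure.exists_measurable_map_eq κ
  refine ⟨fun x => f (uc ν x), hf.comp hu, ?_⟩
  rw [← hf', ← pit ν, Measure.map_map hf hu]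
  rfl

lemma split {Ω K T : Type*} [MeasurableSpace Ω] [MeasurableSpace T] [MeasurableSingletonClass T] [Countable T]
    [MeasurableSpace K] [MeasurableSingletonClass K] [Countable K] (P : Measure Ω) [IsProbabilityMeasure P]
    (g : Ω → ℝ) (hg : Measurable g) (hga : ∀ x, P (g ⁻¹' {x}) = 0) (k : Ω → K) (hk : Measurable k)
    (J : Measure (K × T)) [IsProbabilityMeasure J] (hJ : J.fst = P.map k) :
    ∃ Z : Ω → T, Measurable Z ∧ P.map (fun ω => (k ω, Z ω)) = J := by
  classical
  have hne : Nonempty (K × T) := by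
    by_contra hn
    rw [not_nonempty_iff] at hn
    have := measure_univ (μ := J)
    simp [Set.univ_eq_empty_iff.2 hn] at this
  obtain ⟨_, t0⟩ := hne.some
  have key : ∀ k0 : K, ∃ h : ℝ → T, Measurable h ∧ ∀ t, P (k ⁻¹' {k0} ∩ (fun ω => h (g ω)) ⁻¹' {t}) = J {(k0, t)} := by
    intro k0
    have hB : MeasurableSet (k ⁻¹' {k0}) := hk (measurableSet_singleton _)
    have hA : MeasurableSet (Prod.fst ⁻¹' {k0} : Set (K × T)) := measurable_fst (measurableSet_singleton _)
    have hPJ : P (k ⁻¹' {k0}) = J (Prod.fst ⁻¹' {k0}) := by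
      rw [← Measure.map_apply hk (measurableSet_singleton _), ← hJ, Measure.fst_apply (measurableSet_singleton _)]
    by_cases h0 : P (k ⁻¹' {k0}) = 0
    · refine ⟨fun _ => t0, measurable_const, fun t => ?_⟩
      rw [measure_mono_null inter_subset_left h0]
      symm
      rw [hPJ] at h0
      refine measure_mono_null ?_ h0
      rintro x rfl
      simp
    · have h0' : J (Prod.fst ⁻¹' {k0}) ≠ 0 := hPJ ▸ h0
      haveI : IsProbabilityMeasure (P[|k ⁻¹' {k0}]) := cond_isProbabilityMeasure h0
      haveI : IsProbabilityMeasure (J[|Prod.fst ⁻¹' {k0}]) := cond_isProbabilityMeasure h0'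
      haveI : IsProbabilityMeasure ((P[|k ⁻¹' {k0}]).map g) := Measure.isProbabilityMeasure_map hg.aemeasurable
      haveI : IsProbabilityMeasure ((J[|Prod.fst ⁻¹' {k0}]).map Prod.snd) := Measure.isProbabilityMeasure_map measurable_snd.aemeasurable
      haveI : NullSingletonClass ((P[|k ⁻¹' {k0}]).map g) := ⟨fun x => by
        rw [Measure.map_apply hg (measurableSet_singleton _)]
        exact cond_absolutelyContinuous (hga x)⟩
      obtain ⟨h, hh, hmap⟩ := atomless_map ((P[|k ⁻¹' {k0}]).map g) ((J[|Prod.fst ⁻¹' {k0}]).map Prod.snd)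
      refine ⟨h, hh, fun t => ?_⟩
      have := congrArg (fun m => m {t}) hmap
      rw [Measure.map_map hh hg, Measure.map_apply (hh.comp hg) (measurableSet_singleton _),
        Measure.map_apply measurable_snd (measurableSet_singleton _), cond_apply hB, cond_apply hA, hPJ] at this
      have h3 := (ENNReal.mul_right_inj (ENNReal.inv_ne_zero.2 (measure_ne_top _ _)) (ENNReal.inv_ne_top.2 h0')).1 this
      refine h3.trans ?_
      congr 1
      ext ⟨a, b⟩
      simp
  choose h hh hv using key
  have hZ : Measurable (fun ω => h (k ω) (g ω)) := by
    have : Measurable (fun p : K × ℝ => h p.1 p.2) := measurable_from_prod_countable_right hh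
    exact this.comp (hk.prodMk hg)
  refine ⟨fun ω => h (k ω) (g ω), hZ, ?_⟩
  refine Measure.ext_of_singleton fun ⟨k0, t⟩ => ?_
  rw [Measure.map_apply (hk.prodMk hZ) (measurableSet_singleton _), ← hv k0 t]
  congr 1
  ext ω
  simp only [mem_preimage, mem_singleton_iff, Prod.mk.injEq, mem_inter_iff]
  constructor
  · rintro ⟨rfl, rfl⟩; exact ⟨rfl, rfl⟩
  · rintro ⟨rfl, rfl⟩; exact ⟨rfl, rfl⟩

lemma derand {Ω S T : Type*} [MeasurableSpace Ω] [Fintype S] [MeasurableSpace T] [MeasurableSingletonClass T] [Countable T]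
    {P : Measure Ω} [IsProbabilityMeasure P] {X : S → Ω → ℝ} (hm : ∀ t, Measurable (X t)) (hG : IsCenteredGaussianProcess P X)
    (g : Ω → ℝ) (hg : Measurable g) (hga : ∀ x, P (g ⁻¹' {x}) = 0) (f : T → S) (μ : Measure T) [IsProbabilityMeasure μ]
    (hf : ∀ z, μ (f ⁻¹' {z}) ≠ 0) {p : (S → ℝ) → S → ℝ} (hp : Fz p)
    (hk : ∀ z, kp (P.map (fun ω s => X s ω)) p z = μ.real (f ⁻¹' {z})) (δ : ℝ) (hδ : 0 < δ) :
    ∃ Z : Ω → T, Measurable Z ∧ P.map Z = μ ∧ vl (P.map (fun ω s => X s ω)) p - δ ≤ ∫ ω, X (f (Z ω)) ω ∂P := by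
  classical
  have hmX : Measurable (fun ω s => X s ω) := by fun_prop
  have hpm : ∀ z, Measurable (fun ω => p (fun s => X s ω) z) := fun z => (hp.meas z).comp hmX
  have hp0 : ∀ ω z, 0 ≤ p (fun s => X s ω) z := fun ω z => (hp.pmf _).nn z
  have hp1 : ∀ ω z, p (fun s => X s ω) z ≤ 1 := fun ω z => (hp.pmf _).le_one z
  have hXi : ∀ z, Integrable (X z) P := fun z => (gp_memLp hm hG z).integrable (by norm_num)
  have hpi : ∀ z, Integrable (fun ω => p (fun s => X s ω) z) P := fun z =>
    (integrable_const (1 : ℝ)).mono' (hpm z).aestronglyMeasurable (by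
      filter_upwards with ω; rw [Real.norm_eq_abs, abs_of_nonneg (hp0 ω z)]; exact hp1 ω z)
  set k : Ω → S → ℤ := fun ω z => ⌊X z ω / δ⌋ with hkdef
  have hkm : Measurable k := measurable_pi_lambda _ fun z => Int.measurable_floor.comp ((hm z).div_const δ)
  have hk1 : ∀ ω z, δ * (k ω z : ℝ) ≤ X z ω := fun ω z => by
    have := Int.floor_le (X z ω / δ)
    rw [le_div_iff₀ hδ] at this; linarith
  have hk2 : ∀ ω z, X z ω - δ ≤ δ * (k ω z : ℝ) := fun ω z => by
    have := (Int.sub_one_lt_floor (X z ω / δ)).le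
    have h2 := mul_le_mul_of_nonneg_left this hδ.le
    rw [mul_sub, mul_div_cancel₀ _ hδ.ne', mul_one] at h2
    exact h2
  have hka : ∀ ω z, |δ * (k ω z : ℝ)| ≤ |X z ω| + δ := fun ω z => by
    have h1 := hk1 ω z
    have h2 := hk2 ω z
    have h3 := le_abs_self (X z ω)
    have h4 := neg_abs_le (X z ω)
    rw [abs_le]; constructor <;> linarith
  set Q : S → Measure Ω := fun z => P.withDensity (fun ω => ENNReal.ofReal (p (fun s => X s ω) z)) with hQ
  have hQu : ∀ z, Q z univ = μ (f ⁻¹' {z}) := by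
    intro z
    simp only [hQ]
    rw [withDensity_apply _ MeasurableSet.univ, Measure.restrict_univ,
      ← ofReal_integral_eq_lintegral_ofReal (hpi z) (by filter_upwards with ω; exact hp0 ω z)]
    have := hk z
    rw [kp, integral_map hmX.aemeasurable (hp.meas z).aestronglyMeasurable] at this
    rw [this, ofReal_measureReal]
  haveI : ∀ z, IsFiniteMeasure (Q z) := fun z => ⟨by rw [hQu]; exact measure_lt_top _ _⟩
  haveI : ∀ z, IsProbabilityMeasure (μ[|f ⁻¹' {z}]) := fun z => cond_isProbabilityMeasure (hf z)
  set J : Measure ((S → ℤ) × T) := ∑ z, ((Q z).map k).prod (μ[|f ⁻¹' {z}]) with hJ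
  have hfst : J.fst = P.map k := by
    refine Measure.ext_of_singleton fun k0 => ?_
    have hB : MeasurableSet (k ⁻¹' {k0}) := hkm (measurableSet_singleton _)
    rw [Measure.fst_apply (measurableSet_singleton _), Measure.map_apply hkm (measurableSet_singleton _), hJ,
      Measure.finsetSum_apply]
    have : ∀ z, ((Q z).map k).prod (μ[|f ⁻¹' {z}]) (Prod.fst ⁻¹' {k0}) =
        ∫⁻ ω in k ⁻¹' {k0}, ENNReal.ofReal (p (fun s => X s ω) z) ∂P := by
      intro z
      rw [← Set.prod_univ, Measure.prod_prod, measure_univ, mul_one, Measure.map_apply hkm (measurableSet_singleton _)]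
      simp only [hQ]
      rw [withDensity_apply _ hB]
    simp_rw [this]
    rw [← lintegral_finsetSum _ (fun z _ => (hpm z).ennreal_ofReal)]
    have h1 : ∀ ω, ∑ z, ENNReal.ofReal (p (fun s => X s ω) z) = 1 := by
      intro ω
      rw [← ENNReal.ofReal_sum_of_nonneg (fun z _ => hp0 ω z), (hp.pmf _).sum]; simp
    simp_rw [h1]
    simp
  have hsnd : J.snd = μ := by
    refine Measure.ext_of_singleton fun t => ?_
    rw [Measure.snd_apply (measurableSet_singleton _), hJ, Measure.finsetSum_apply]
    have : ∀ z, ((Q z).map k).prod (μ[|f ⁻¹' {z}]) (Prod.snd ⁻¹' {t}) = μ (f ⁻¹' {z} ∩ {t}) := by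
      intro z
      rw [← Set.univ_prod, Measure.prod_prod, Measure.map_apply hkm MeasurableSet.univ, preimage_univ, hQu,
        cond_apply (Set.to_countable _).measurableSet, ← mul_assoc, ENNReal.mul_inv_cancel (hf z) (measure_ne_top _ _), one_mul]
    simp_rw [this]
    rw [Finset.sum_eq_single (f t)]
    · congr 1; ext x; simp +contextual
    · intro z _ hz
      have : f ⁻¹' {z} ∩ {t} = ∅ := by
        ext x; simp; rintro hx rfl; exact hz hx.symm
      rw [this, measure_empty]
    · simp
  haveI hJp : IsProbabilityMeasure J := by
    constructor
    haveI : IsProbabilityMeasure (P.map k) := Measure.isProbabilityMeasure_map hkm.aemeasurable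
    rw [← Measure.fst_univ, hfst, measure_univ]
  obtain ⟨Z, hZ, hZJ⟩ := split P g hg hga k hkm J hfst
  have hkZ : Measurable (fun ω => (k ω, Z ω)) := hkm.prodMk hZ
  refine ⟨Z, hZ, ?_, ?_⟩
  · rw [← hsnd, ← hZJ, Measure.snd, Measure.map_map measurable_snd hkZ]; rfl
  set F : (S → ℤ) × T → ℝ := fun x => δ * (x.1 (f x.2) : ℝ) with hF
  have hFm : Measurable F := Measurable.of_discrete
  have mXZ : Measurable (fun ω => X (f (Z ω)) ω) := by
    have : Measurable (fun q : T × Ω => X (f q.1) q.2) := measurable_from_prod_countable_right fun t => hm (f t)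
    exact this.comp (hZ.prodMk measurable_id)
  have iB : Integrable (fun ω => ∑ z, |X z ω| + δ) P :=
    (integrable_finsetSum _ fun z _ => (hXi z).abs).add (integrable_const _)
  have leS : ∀ ω z, |X z ω| ≤ ∑ z, |X z ω| := fun ω z =>
    Finset.single_le_sum (f := fun z => |X z ω|) (fun _ _ => abs_nonneg _) (Finset.mem_univ z)
  have iXZ : Integrable (fun ω => X (f (Z ω)) ω) P := iB.mono' mXZ.aestronglyMeasurable (by
    filter_upwards with ω; rw [Real.norm_eq_abs]; linarith [leS ω (f (Z ω))])
  have iF' : Integrable (fun ω => F (k ω, Z ω)) P := iB.mono' (hFm.comp hkZ).aestronglyMeasurable (by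
    filter_upwards with ω; rw [Real.norm_eq_abs]
    exact (hka ω _).trans (by linarith [leS ω (f (Z ω))]))
  have iFJ : Integrable F J := by
    rw [← hZJ, integrable_map_measure hFm.aestronglyMeasurable hkZ.aemeasurable]; exact iF'
  have hval : ∫ ω, F (k ω, Z ω) ∂P = ∑ z, ∫ ω, p (fun s => X s ω) z * (δ * (k ω z : ℝ)) ∂P := by
    rw [← integral_map (f := F) hkZ.aemeasurable hFm.aestronglyMeasurable, hZJ]
    have hle : ∀ z, ((Q z).map k).prod (μ[|f ⁻¹' {z}]) ≤ J := fun z => by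
      rw [hJ, Measure.le_iff]
      intro A _
      rw [Measure.finsetSum_apply]
      exact Finset.single_le_sum (f := fun z => ((Q z).map k).prod (μ[|f ⁻¹' {z}]) A) (fun _ _ => zero_le) (Finset.mem_univ z)
    rw [hJ, integral_finsetSum_measure (fun z _ => iFJ.mono_measure (hle z))]
    refine Finset.sum_congr rfl fun z _ => ?_
    rw [integral_prod _ (iFJ.mono_measure (hle z))]
    have : ∀ x : S → ℤ, ∫ t, F (x, t) ∂(μ[|f ⁻¹' {z}]) = δ * (x z : ℝ) := by
      intro x
      have : ∫ t, F (x, t) ∂(μ[|f ⁻¹' {z}]) = ∫ t, δ * (x z : ℝ) ∂(μ[|f ⁻¹' {z}]) := by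
        apply integral_congr_ae
        filter_upwards [ae_cond_mem (μ := μ) (s := f ⁻¹' {z}) (Set.to_countable _).measurableSet] with t ht
        simp only [hF]; rw [show f t = z from ht]
      rw [this]; simp
    simp_rw [this]
    rw [integral_map hkm.aemeasurable Measurable.of_discrete.aestronglyMeasurable]
    simp only [hQ]
    rw [integral_withDensity_eq_integral_toReal_smul (hpm z).ennreal_ofReal (by simp)]
    apply integral_congr_ae
    filter_upwards with ω
    rw [ENNReal.toReal_ofReal (hp0 ω z), smul_eq_mul]
  have hvl : vl (P.map (fun ω s => X s ω)) p = ∑ z, ∫ ω, p (fun s => X s ω) z * X z ω ∂P := by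
    rw [vl]
    refine Finset.sum_congr rfl fun z _ => ?_
    have mm : Measurable (fun x : S → ℝ => p x z * x z) := (hp.meas z).mul (measurable_pi_apply z)
    rw [integral_map hmX.aemeasurable mm.aestronglyMeasurable]
  have h1 : ∫ ω, F (k ω, Z ω) ∂P ≤ ∫ ω, X (f (Z ω)) ω ∂P := integral_mono iF' iXZ fun ω => hk1 ω _
  refine le_trans ?_ h1
  rw [hval, hvl]
  have hsum1 : ∑ z, ∫ ω, p (fun s => X s ω) z ∂P = 1 := by
    rw [← integral_finsetSum _ (fun z _ => hpi z)]
    simp_rw [(hp.pmf _).sum]; simp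
  have hb : ∀ (Y : Ω → ℝ) z, Measurable Y → (∀ ω, |Y ω| ≤ |X z ω| + δ) → Integrable (fun ω => p (fun s => X s ω) z * Y ω) P := by
    intro Y z hY hYb
    refine iB.mono' ((hpm z).mul hY).aestronglyMeasurable ?_
    filter_upwards with ω
    rw [Real.norm_eq_abs, abs_mul, abs_of_nonneg (hp0 ω z)]
    have := leS ω z
    nlinarith [hYb ω, hp0 ω z, hp1 ω z, abs_nonneg (Y ω)]
  have hst : ∀ z, ∫ ω, p (fun s => X s ω) z * X z ω ∂P - δ * ∫ ω, p (fun s => X s ω) z ∂P ≤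
      ∫ ω, p (fun s => X s ω) z * (δ * (k ω z : ℝ)) ∂P := by
    intro z
    have i1 := hb (X z) z (hm z) (fun ω => by linarith)
    have i2 := hb (fun ω => δ * (k ω z : ℝ)) z (by
      have : Measurable (fun x : S → ℤ => δ * (x z : ℝ)) := Measurable.of_discrete
      exact this.comp hkm) (fun ω => hka ω z)
    rw [← integral_const_mul, ← integral_sub i1 ((hpi z).const_mul δ)]
    refine integral_mono (i1.sub ((hpi z).const_mul δ)) i2 fun ω => ?_
    have := mul_le_mul_of_nonneg_left (hk2 ω z) (hp0 ω z)
    simp only [Pi.sub_apply]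
    linarith
  calc _ = ∑ z, (∫ ω, p (fun s => X s ω) z * X z ω ∂P - δ * ∫ ω, p (fun s => X s ω) z ∂P) := by
        rw [Finset.sum_sub_distrib, ← Finset.mul_sum, hsum1, mul_one]
    _ ≤ _ := Finset.sum_le_sum fun z _ => hst z

lemma gp_pair {Ω T : Type*} [MeasurableSpace Ω] {P : Measure Ω} [IsProbabilityMeasure P] {X : T → Ω → ℝ}
    (hm : ∀ t, Measurable (X t)) (hG : IsCenteredGaussianProcess P X) (t t' : T) :
    P.map (fun ω => X t ω - X t' ω) = (gaussianReal 0 1).map (fun x => Real.sqrt (∫ ω, (X t ω - X t' ω) ^ 2 ∂P) * x) := by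
  have h := (gp_lin' (X := fun b : Bool => X (if b then t else t')) (fun b => hm _) (gp_restrict hG _)
    (fun b => if b then 1 else -1)).1
  simp only [Fintype.sum_bool, if_true, one_mul, Bool.false_eq_true, if_false, neg_mul, ← sub_eq_add_neg] at h
  rw [h, gaussianReal_map_const_mul]
  congr 1
  · simp
  · rw [mul_one]
    ext
    have h0 : 0 ≤ ∫ ω, (X t ω - X t' ω) ^ 2 ∂P := integral_nonneg fun _ => sq_nonneg _
    simp [Real.sq_sqrt h0, Real.coe_toNNReal _ h0]

lemma exp_sq_const : ∃ C : ℝ, 0 < C ∧ Integrable (fun x : ℝ => Real.exp (C * x ^ 2)) (gaussianReal 0 1) := by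
  obtain ⟨C, hC, h⟩ := IsGaussian.exists_integrable_exp_sq (gaussianReal 0 1)
  exact ⟨C, hC, by simpa using h⟩

/-- tail weights -/
def bt {T : Type*} [MeasurableSpace T] (C c0 : ℝ) (d : T → T → ℝ) (μ : Measure T) (t0 t : T) : ℝ :=
  μ.real {t} * (d t t0 ^ 2 / (4 * C) - Real.log (μ.real {t}) + c0)

lemma bt_nonneg {T : Type*} [MeasurableSpace T] {C c0 : ℝ} (hC : 0 < C) (hc0 : 0 ≤ c0) (d : T → T → ℝ) (μ : Measure T)
    [IsProbabilityMeasure μ] (t0 t : T) : 0 ≤ bt C c0 d μ t0 t := by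
  have : Real.log (μ.real {t}) ≤ 0 := Real.log_nonpos measureReal_nonneg measureReal_le_one
  have h2 : 0 ≤ d t t0 ^ 2 / (4 * C) := by positivity
  exact mul_nonneg measureReal_nonneg (by linarith)

section
variable {Ω T : Type*} [MeasurableSpace Ω] [MeasurableSpace T] [MeasurableSingletonClass T] [Countable T]
  {P : Measure Ω} [IsProbabilityMeasure P] {X : T → Ω → ℝ} {d : T → T → ℝ} {μ : Measure T} [IsProbabilityMeasure μ]

lemma one_tail (hm : ∀ t, Measurable (X t)) (hG : IsCenteredGaussianProcess P X)
    (hd : ∀ t t', d t t' = Real.sqrt (∫ ω, (X t ω - X t' ω) ^ 2 ∂P))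
    {C : ℝ} (hC : 0 < C) (hCi : Integrable (fun x : ℝ => Real.exp (C * x ^ 2)) (gaussianReal 0 1))
    (t t0 : T) (A : Set Ω) (hA : MeasurableSet A) (hPA : P A = μ {t}) :
    ∫⁻ ω in A, ENNReal.ofReal |X t ω - X t0 ω| ∂P ≤ 
      ENNReal.ofReal (bt C (∫ x, Real.exp (C * x ^ 2) ∂(gaussianReal 0 1)) d μ t0 t) := by
  set a := μ.real {t} with ha
  set c0 := ∫ x, Real.exp (C * x ^ 2) ∂(gaussianReal 0 1) with hc0
  set D := d t t0 with hD
  by_cases h0 : μ {t} = 0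
  · rw [h0] at hPA
    rw [Measure.restrict_eq_zero.2 hPA]; simp
  have hapos : 0 < a := by
    rw [ha, measureReal_def]; exact ENNReal.toReal_pos h0 (measure_ne_top _ _)
  have hlog : Real.log a ≤ 0 := Real.log_nonpos measureReal_nonneg measureReal_le_one
  have hpt : ∀ u : ℝ, u ≤ D ^ 2 / (4 * C) - Real.log a + a * Real.exp (u - D ^ 2 / (4 * C)) := by
    intro u
    have h1 := Real.add_one_le_exp (u - D ^ 2 / (4 * C) + Real.log a)
    rw [Real.exp_add, Real.exp_log hapos] at h1
    linarith
  have hE : ∫⁻ ω, ENNReal.ofReal (Real.exp (|X t ω - X t0 ω| - D ^ 2 / (4 * C))) ∂P ≤ ENNReal.ofReal c0 := by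
    have hmm : Measurable (fun ω => X t ω - X t0 ω) := (hm t).sub (hm t0)
    have hF : Measurable (fun y : ℝ => ENNReal.ofReal (Real.exp (|y| - D ^ 2 / (4 * C)))) := by
      have : Continuous (fun y : ℝ => Real.exp (|y| - D ^ 2 / (4 * C))) := by fun_prop
      exact this.measurable.ennreal_ofReal
    rw [← lintegral_map (f := fun y : ℝ => ENNReal.ofReal (Real.exp (|y| - D ^ 2 / (4 * C)))) hF hmm,
      gp_pair hm hG, ← hd t t0, ← hD, lintegral_map hF (by fun_prop), hc0,
      ofReal_integral_eq_lintegral_ofReal hCi (by filter_upwards with x; positivity)]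
    refine lintegral_mono fun x => ENNReal.ofReal_le_ofReal (Real.exp_le_exp.2 ?_)
    rw [abs_mul]
    have h1 : |D| * |x| - D ^ 2 / (4 * C) = C * x ^ 2 - C * (|x| - |D| / (2 * C)) ^ 2 := by
      rw [← sq_abs x, ← sq_abs D]; field_simp; ring
    rw [h1]
    nlinarith [mul_nonneg hC.le (sq_nonneg (|x| - |D| / (2 * C)))]
  have hB0 : 0 ≤ D ^ 2 / (4 * C) - Real.log a := by
    have : 0 ≤ D ^ 2 / (4 * C) := by positivity
    linarith
  calc ∫⁻ ω in A, ENNReal.ofReal |X t ω - X t0 ω| ∂P 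
      ≤ ∫⁻ ω in A, (ENNReal.ofReal (D ^ 2 / (4 * C) - Real.log a) + ENNReal.ofReal a * ENNReal.ofReal (Real.exp (|X t ω - X t0 ω| - D ^ 2 / (4 * C)))) ∂P := by
        refine lintegral_mono fun ω => ?_
        rw [← ENNReal.ofReal_mul hapos.le, ← ENNReal.ofReal_add hB0 (by positivity)]
        exact ENNReal.ofReal_le_ofReal (hpt _)
    _ = ENNReal.ofReal (D ^ 2 / (4 * C) - Real.log a) * P A + ENNReal.ofReal a * ∫⁻ ω in A, ENNReal.ofReal (Real.exp (|X t ω - X t0 ω| - D ^ 2 / (4 * C))) ∂P := by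
        rw [lintegral_add_left measurable_const, lintegral_const, Measure.restrict_apply_univ, lintegral_const_mul' _ _ ENNReal.ofReal_ne_top]
    _ ≤ ENNReal.ofReal (D ^ 2 / (4 * C) - Real.log a) * ENNReal.ofReal a + ENNReal.ofReal a * ENNReal.ofReal c0 := by
        gcongr
        · rw [hPA, ha, ofReal_measureReal]
        · exact (setLIntegral_le_lintegral _ _).trans hE
    _ = _ := by
        have : 0 ≤ c0 := integral_nonneg fun _ => (Real.exp_pos _).le
        rw [← ENNReal.ofReal_mul hB0, ← ENNReal.ofReal_mul hapos.le, ← ENNReal.ofReal_add (by positivity) (by positivity), bt]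
        congr 1; ring

lemma mXZ (hm : ∀ t, Measurable (X t)) {Z : Ω → T} (hZ : Measurable Z) (f : T → T) : Measurable (fun ω => X (f (Z ω)) ω) := by
  have : Measurable (fun q : T × Ω => X (f q.1) q.2) := measurable_from_prod_countable_right fun t => hm (f t)
  exact this.comp (hZ.prodMk measurable_id)

/-- main tail estimate -/
lemma tail (hm : ∀ t, Measurable (X t)) (hG : IsCenteredGaussianProcess P X)
    (hd : ∀ t t', d t t' = Real.sqrt (∫ ω, (X t ω - X t' ω) ^ 2 ∂P))
    {C : ℝ} (hC : 0 < C) (hCi : Integrable (fun x : ℝ => Real.exp (C * x ^ 2)) (gaussianReal 0 1)) (t0 : T)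
    (hs : Summable (bt C (∫ x, Real.exp (C * x ^ 2) ∂(gaussianReal 0 1)) d μ t0)) 
    (f : T → T) (s : Set T) (hf : ∀ t ∈ s, f t = t) (hf' : ∀ t ∉ s, f t = t0) {Z : Ω → T} (hZ : Measurable Z) (hZμ : P.map Z = μ) :
    Integrable (fun ω => X (Z ω) ω - X (f (Z ω)) ω) P ∧ 
    |∫ ω, (X (Z ω) ω - X (f (Z ω)) ω) ∂P| ≤ ∑' t, sᶜ.indicator (bt C (∫ x, Real.exp (C * x ^ 2) ∂(gaussianReal 0 1)) d μ t0) t := by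
  set c0 := ∫ x, Real.exp (C * x ^ 2) ∂(gaussianReal 0 1) with hc0
  have hc00 : 0 ≤ c0 := integral_nonneg fun _ => (Real.exp_pos _).le
  have hs' := hs.indicator sᶜ
  have hb0 : ∀ t, 0 ≤ sᶜ.indicator (bt C c0 d μ t0) t := fun t => indicator_nonneg (fun t _ => bt_nonneg hC hc00 d μ t0 t) t
  have hle : ∫⁻ ω, ENNReal.ofReal |X (Z ω) ω - X (f (Z ω)) ω| ∂P ≤ ENNReal.ofReal (∑' t, sᶜ.indicator (bt C c0 d μ t0) t) := by
    have hun : (⋃ t, Z ⁻¹' {t}) = univ := by ext ω; simp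
    rw [← setLIntegral_univ, ← hun, lintegral_iUnion (fun t => hZ (measurableSet_singleton t)) (by
      intro a b hab
      simp only [Function.onFun]
      exact Disjoint.preimage _ (by simpa using hab)), ENNReal.ofReal_tsum_of_nonneg hb0 hs']
    refine ENNReal.tsum_le_tsum fun t => ?_
    have hAm : MeasurableSet (Z ⁻¹' {t}) := hZ (measurableSet_singleton t)
    have e1 : ∫⁻ ω in Z ⁻¹' {t}, ENNReal.ofReal |X (Z ω) ω - X (f (Z ω)) ω| ∂P = 
        ∫⁻ ω in Z ⁻¹' {t}, ENNReal.ofReal |X t ω - X (f t) ω| ∂P := by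
      refine setLIntegral_congr_fun hAm fun ω hω => ?_
      have : Z ω = t := hω
      rw [this]
    rw [e1]
    by_cases hts : t ∈ s
    · rw [hf t hts]; simp
    · rw [hf' t hts, indicator_of_mem (show t ∈ sᶜ from hts)]
      exact one_tail hm hG hd hC hCi t t0 _ hAm (by rw [← Measure.map_apply hZ (measurableSet_singleton t), hZμ])
  have hmm : Measurable (fun ω => X (Z ω) ω - X (f (Z ω)) ω) := (mXZ hm hZ id).sub (mXZ hm hZ f)
  have hI : Integrable (fun ω => X (Z ω) ω - X (f (Z ω)) ω) P := by
    refine ⟨hmm.aestronglyMeasurable, ?_⟩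
    rw [HasFiniteIntegral]
    simp_rw [← ofReal_norm_eq_enorm, Real.norm_eq_abs]
    exact hle.trans_lt ENNReal.ofReal_lt_top
  refine ⟨hI, ?_⟩
  refine (abs_integral_le_integral_abs).trans ?_
  rw [integral_eq_lintegral_of_nonneg_ae (by filter_upwards with ω; positivity) hmm.abs.aestronglyMeasurable]
  exact ENNReal.toReal_le_of_le_ofReal (tsum_nonneg hb0) hle
end

section
variable {T : Type*} [MeasurableSpace T] [MeasurableSingletonClass T] [Countable T]

lemma int_summable {μ : Measure T} [IsProbabilityMeasure μ] {g : T → ℝ} (hg : Integrable g μ) :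
    Summable (fun t => μ.real {t} * g t) := by
  have h := hg.2
  rw [HasFiniteIntegral, lintegral_countable'] at h
  have h2 := ENNReal.summable_toReal h.ne
  refine Summable.of_norm ?_
  refine h2.congr fun t => ?_
  rw [ENNReal.toReal_mul, toReal_enorm, norm_mul, Real.norm_of_nonneg measureReal_nonneg, mul_comm]; rfl

lemma ac_marg (ρ : Measure (T × T)) [IsProbabilityMeasure ρ] : ρ ≪ ρ.fst.prod ρ.snd := by
  intro A hA
  rw [← biUnion_of_singleton A, measure_biUnion_null_iff (to_countable A)]
  rintro ⟨x, y⟩ hxy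
  have h1 : (ρ.fst.prod ρ.snd) {(x, y)} = 0 := measure_mono_null (singleton_subset_iff.2 hxy) hA
  rw [← singleton_prod_singleton, Measure.prod_prod, mul_eq_zero, Measure.fst_apply (measurableSet_singleton _),
    Measure.snd_apply (measurableSet_singleton _)] at h1
  rcases h1 with h1 | h1 <;> refine measure_mono_null ?_ h1 <;> simp

lemma mi_nonneg (ρ : Measure (T × T)) [IsProbabilityMeasure ρ] : 0 ≤ mutInfoR ρ := by
  haveI : IsProbabilityMeasure ρ.fst := ⟨by rw [Measure.fst_univ, measure_univ]⟩
  haveI : IsProbabilityMeasure ρ.snd := ⟨by rw [Measure.snd_univ, measure_univ]⟩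
  have := InformationTheory.toReal_klDiv_of_measure_eq (ac_marg ρ) (by simp)
  rw [mutInfoR, klDivR]
  have h2 : ∫ x, llr ρ (ρ.fst.prod ρ.snd) x ∂ρ = ∫ x, Real.log ((ρ.rnDeriv (ρ.fst.prod ρ.snd) x).toReal) ∂ρ := rfl
  rw [← h2, ← this]
  exact ENNReal.toReal_nonneg

lemma rn_single (ρ : Measure (T × T)) [IsProbabilityMeasure ρ] (μ : Measure T) [IsProbabilityMeasure μ]
    (h1 : ρ.fst = μ) (h2 : ρ.snd = μ) (x y : T) :
    (ρ.rnDeriv (ρ.fst.prod ρ.snd) (x, y)).toReal * (μ.real {x} * μ.real {y}) = ρ.real {(x, y)} := by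
  haveI : IsProbabilityMeasure ρ.fst := ⟨by rw [Measure.fst_univ, measure_univ]⟩
  haveI : IsProbabilityMeasure ρ.snd := ⟨by rw [Measure.snd_univ, measure_univ]⟩
  have h := Measure.withDensity_rnDeriv_eq _ _ (ac_marg ρ)
  have h3 := congrArg (fun m => m {(x, y)}) h
  rw [withDensity_apply _ (measurableSet_singleton _), lintegral_singleton, ← singleton_prod_singleton, Measure.prod_prod,
    h1, h2] at h3
  rw [measureReal_def, measureReal_def, measureReal_def, ← singleton_prod_singleton, ← ENNReal.toReal_mul, ← ENNReal.toReal_mul, h1, h2, h3]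

lemma prod_mi (μ : Measure T) [IsProbabilityMeasure μ] : mutInfoR (μ.prod μ) = 0 := by
  rw [mutInfoR, klDivR, Measure.fst_prod, Measure.snd_prod]
  rw [integral_eq_zero_of_ae]
  filter_upwards [Measure.rnDeriv_self (μ.prod μ)] with x hx
  rw [hx]; simp

lemma diag_props (μ : Measure T) [IsProbabilityMeasure μ] : IsProbabilityMeasure (μ.map (fun t => (t, t))) ∧ 
    (μ.map (fun t => (t, t))).fst = μ ∧ (μ.map (fun t => (t, t))).snd = μ := by
  have hm : Measurable (fun t : T => (t, t)) := by fun_prop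
  refine ⟨Measure.isProbabilityMeasure_map hm.aemeasurable, ?_, ?_⟩
  · rw [Measure.fst, Measure.map_map measurable_fst hm]; exact Measure.map_id
  · rw [Measure.snd, Measure.map_map measurable_snd hm]; exact Measure.map_id

lemma diag_mi (μ : Measure T) [IsProbabilityMeasure μ] :
    mutInfoR (μ.map (fun t => (t, t))) = ∫ t, - Real.log (μ.real {t}) ∂μ := by
  obtain ⟨h0, h1, h2⟩ := diag_props μ
  have hm : Measurable (fun t : T => (t, t)) := by fun_prop
  rw [mutInfoR, klDivR, integral_map hm.aemeasurable (Measurable.of_discrete).aestronglyMeasurable]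
  apply integral_congr_ae
  rw [Filter.EventuallyEq, ae_iff_of_countable]
  intro t ht
  have ht' : μ.real {t} ≠ 0 := by
    rw [measureReal_def]; exact (ENNReal.toReal_pos ht (measure_ne_top _ _)).ne'
  have h3 := rn_single _ μ h1 h2 t t
  have h4 : (μ.map (fun t => (t, t))).real {(t, t)} = μ.real {t} := by
    rw [measureReal_def, measureReal_def, Measure.map_apply hm (measurableSet_singleton _)]
    congr 2; ext x; simp
  rw [h4] at h3
  have h5 : ((μ.map (fun t => (t, t))).rnDeriv ((μ.map (fun t => (t, t))).fst.prod (μ.map (fun t => (t, t))).snd) (t, t)).toReal = (μ.real {t})⁻¹ := by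
    field_simp
    rw [← mul_assoc] at h3
    have := mul_right_cancel₀ ht' (h3.trans (one_mul _).symm)
    linarith
  rw [h5, Real.log_inv]

variable {d : T → T → ℝ} {μ : Measure T} [IsProbabilityMeasure μ]

lemma iS_bdd (d : T → T → ℝ) (μ : Measure T) (σ : ℝ) : BddBelow {v : ℝ | ∃ ρ : Measure (T × T), IsProbabilityMeasure ρ ∧ ρ.fst = μ ∧ ρ.snd = μ ∧
    (∫ p, d p.1 p.2 ^ 2 ∂ρ) ≤ σ ^ 2 ∧ v = mutInfoR ρ} :=
  ⟨0, by rintro v ⟨ρ, h, -, -, -, rfl⟩; exact mi_nonneg ρ⟩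

lemma diag_mem (hd0 : ∀ t, d t t = 0) (σ : ℝ) : ∫ t, - Real.log (μ.real {t}) ∂μ ∈ {v : ℝ | ∃ ρ : Measure (T × T), IsProbabilityMeasure ρ ∧ ρ.fst = μ ∧ ρ.snd = μ ∧
    (∫ p, d p.1 p.2 ^ 2 ∂ρ) ≤ σ ^ 2 ∧ v = mutInfoR ρ} := by
  obtain ⟨h0, h1, h2⟩ := diag_props μ
  refine ⟨_, h0, h1, h2, ?_, (diag_mi μ).symm⟩
  rw [integral_map (by fun_prop) (Measurable.of_discrete).aestronglyMeasurable]
  simp only [hd0]; simp; positivity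

lemma iS_nonneg (σ : ℝ) : 0 ≤ iSelf d μ σ := 
  Real.sInf_nonneg (by rintro v ⟨ρ, h, -, -, -, rfl⟩; exact mi_nonneg ρ)

lemma iS_le_diag (hd0 : ∀ t, d t t = 0) (σ : ℝ) : iSelf d μ σ ≤ ∫ t, - Real.log (μ.real {t}) ∂μ :=
  csInf_le (iS_bdd d μ σ) (diag_mem hd0 σ)

lemma iS_anti (hd0 : ∀ t, d t t = 0) : AntitoneOn (iSelf d μ) (Ici 0) := by
  intro a ha b hb hab
  refine csInf_le_csInf (iS_bdd d μ b) ⟨_, diag_mem hd0 a⟩ ?_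
  rintro v ⟨ρ, h, h1, h2, h3, h4⟩
  exact ⟨ρ, h, h1, h2, h3.trans (pow_le_pow_left₀ ha hab 2), h4⟩

lemma iS_zero {σ : ℝ} (hσ : ∫ p, d p.1 p.2 ^ 2 ∂(μ.prod μ) ≤ σ ^ 2) : iSelf d μ σ = 0 := by
  refine le_antisymm (csInf_le (iS_bdd d μ σ) ⟨μ.prod μ, inferInstance, Measure.fst_prod, Measure.snd_prod, hσ, (prod_mi μ).symm⟩) (iS_nonneg σ)

lemma rd_le (hd0 : ∀ t, d t t = 0) (σ : ℝ) : rateDistortion d μ (σ ^ 2) ≤ iSelf d μ σ := by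
  refine csInf_le_csInf ⟨0, by rintro v ⟨ρ, h, -, -, rfl⟩; exact mi_nonneg ρ⟩ ⟨_, diag_mem hd0 σ⟩ ?_
  rintro v ⟨ρ, h, h1, h2, h3, h4⟩
  exact ⟨ρ, h, h2, h3, h4⟩

lemma iS_large : ∃ R : ℝ, 0 < R ∧ ∀ σ, R ≤ σ → iSelf d μ σ = 0 := by
  set V := ∫ p, d p.1 p.2 ^ 2 ∂(μ.prod μ)
  have hV : 0 ≤ V := integral_nonneg fun _ => sq_nonneg _
  refine ⟨V + 1, by positivity, fun σ hσ => iS_zero ?_⟩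
  change V ≤ _
  nlinarith

lemma iS_int (hd0 : ∀ t, d t t = 0) : IntegrableOn (fun σ => Real.sqrt (iSelf d μ σ)) (Ioi 0) := by
  obtain ⟨R, hR, hz⟩ := iS_large (d := d) (μ := μ)
  have ha : AntitoneOn (fun σ => Real.sqrt (iSelf d μ σ)) (Icc 0 R) := fun a ha b hb hab =>
    Real.sqrt_le_sqrt (iS_anti hd0 ha.1 hb.1 hab)
  have h1 : IntegrableOn (fun σ => Real.sqrt (iSelf d μ σ)) (Icc 0 R) := ha.integrableOn_isCompact isCompact_Icc
  have h2 : IntegrableOn (fun σ => Real.sqrt (iSelf d μ σ)) (Ioi R) := by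
    refine (integrableOn_zero (ε' := ℝ)).congr_fun (fun x hx => ?_) measurableSet_Ioi
    simp [hz x (le_of_lt hx)]
  refine (h1.union h2).mono_set fun x hx => ?_
  rcases le_or_gt x R with h | h
  · exact Or.inl ⟨le_of_lt hx, h⟩
  · exact Or.inr h

lemma second_ineq (hd0 : ∀ t, d t t = 0) : cRD * ∫ σ in Ioc 0 (sigmaM d μ), Real.sqrt (rateDistortion d μ (σ ^ 2)) ≤
      cRD * ∫ σ in Ioi (0 : ℝ), Real.sqrt (iSelf d μ σ) := by
  refine mul_le_mul_of_nonneg_left ?_ cRD_nonneg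
  have hi := iS_int (d := d) (μ := μ) hd0
  calc _ ≤ ∫ σ in Ioc 0 (sigmaM d μ), Real.sqrt (iSelf d μ σ) := by
        refine integral_mono_of_nonneg (Filter.Eventually.of_forall fun _ => Real.sqrt_nonneg _) (hi.mono_set Ioc_subset_Ioi_self)
          (Filter.Eventually.of_forall fun σ => Real.sqrt_le_sqrt (rd_le hd0 σ))
    _ ≤ _ := setIntegral_mono_set hi (Filter.Eventually.of_forall fun _ => Real.sqrt_nonneg _) (Filter.Eventually.of_forall Ioc_subset_Ioi_self)
end

lemma cs3 {ε σ : ℝ} (hε : 0 < ε) (hσ : 0 < σ) (a b c : ℝ) :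
    (a + b + c) ^ 2 ≤ (σ + 2 * ε) * (a ^ 2 / ε + b ^ 2 / σ + c ^ 2 / ε) := by
  obtain ⟨a, rfl⟩ : ∃ a', a = ε * a' := ⟨a / ε, by field_simp⟩
  obtain ⟨b, rfl⟩ : ∃ b', b = σ * b' := ⟨b / σ, by field_simp⟩
  obtain ⟨c, rfl⟩ : ∃ c', c = ε * c' := ⟨c / ε, by field_simp⟩
  have e : (ε * a) ^ 2 / ε + (σ * b) ^ 2 / σ + (ε * c) ^ 2 / ε = ε * a ^ 2 + σ * b ^ 2 + ε * c ^ 2 := by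
    field_simp
  rw [e]
  nlinarith [mul_nonneg (mul_pos hε hσ).le (sq_nonneg (a - b)), mul_nonneg (mul_pos hε hε).le (sq_nonneg (a - c)),
    mul_nonneg (mul_pos hε hσ).le (sq_nonneg (b - c))]

section
variable {T S E : Type*} [MeasurableSpace T] [MeasurableSingletonClass T] [Countable T] [Fintype S]
  [NormedAddCommGroup E] [InnerProductSpace ℝ E]
  {d : T → T → ℝ} {μ : Measure T} [IsProbabilityMeasure μ]

lemma int_ff (μ : Measure T) [IsProbabilityMeasure μ] (f : T → S) (G : S → S → ℝ) :
    Integrable (fun q : T × T => G (f q.1) (f q.2)) (μ.prod μ) ∧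
    ∫ q : T × T, G (f q.1) (f q.2) ∂(μ.prod μ) = ∑ v, ∑ w, μ.real (f ⁻¹' {v}) * μ.real (f ⁻¹' {w}) * G v w := by
  letI : MeasurableSpace S := ⊤
  haveI : DiscreteMeasurableSpace S := ⟨fun _ => trivial⟩
  have hf : Measurable f := Measurable.of_discrete
  have hI : Integrable (fun q : S × S => G q.1 q.2) ((μ.prod μ).map (Prod.map f f)) := by
    haveI : IsProbabilityMeasure ((μ.prod μ).map (Prod.map f f)) := Measure.isProbabilityMeasure_map (by fun_prop)
    exact Integrable.of_finite
  have hmm : Measurable (fun q : S × S => G q.1 q.2) := Measurable.of_discrete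
  constructor
  · exact (integrable_map_measure hmm.aestronglyMeasurable (by fun_prop)).1 hI
  · have h := integral_map (μ := μ.prod μ) (φ := Prod.map f f) (by fun_prop) (f := fun q : S × S => G q.1 q.2) hmm.aestronglyMeasurable
    refine h.symm.trans ?_
    rw [integral_fintype hI, Fintype.sum_prod_type]
    refine Finset.sum_congr rfl fun v _ => Finset.sum_congr rfl fun w _ => ?_
    rw [measureReal_def, Measure.map_apply (by fun_prop) (measurableSet_singleton _), ← singleton_prod_singleton, preimage_prod_map_prod,
      Measure.prod_prod, ENNReal.toReal_mul]
    rfl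

lemma int_f (μ : Measure T) [IsProbabilityMeasure μ] (f : T → S) (G : S → ℝ) (hG : ∀ v, 0 ≤ G v) :
    ∫⁻ y, ENNReal.ofReal (G (f y)) ∂μ = ENNReal.ofReal (∑ v, μ.real (f ⁻¹' {v}) * G v) := by
  letI : MeasurableSpace S := ⊤
  haveI : DiscreteMeasurableSpace S := ⟨fun _ => trivial⟩
  have hf : Measurable f := Measurable.of_discrete
  have hmm : Measurable (fun q : S => ENNReal.ofReal (G q)) := Measurable.of_discrete
  rw [← lintegral_map (f := fun q : S => ENNReal.ofReal (G q)) hmm hf, lintegral_fintype,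
    ENNReal.ofReal_sum_of_nonneg (fun v _ => mul_nonneg measureReal_nonneg (hG v))]
  refine Finset.sum_congr rfl fun v _ => ?_
  rw [Measure.map_apply hf (measurableSet_singleton _), ENNReal.ofReal_mul measureReal_nonneg, ofReal_measureReal, mul_comm]

lemma lift_cpl (f : T → S) (hf : ∀ z, μ (f ⁻¹' {z}) ≠ 0) {c : S → S → ℝ} (hc : Cpl (fun z => μ.real (f ⁻¹' {z})) c) :
    ∃ ρ : Measure (T × T), IsProbabilityMeasure ρ ∧ ρ.fst = μ ∧ ρ.snd = μ ∧ 
      mutInfoR ρ = info (fun z => μ.real (f ⁻¹' {z})) c ∧ 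
      ∀ G : S → S → ℝ, Integrable (fun q : T × T => G (f q.1) (f q.2)) ρ ∧ 
        ∫ q : T × T, G (f q.1) (f q.2) ∂ρ = ∑ v, ∑ w, c v w * G v w := by
  set m : S → ℝ := fun z => μ.real (f ⁻¹' {z}) with hm
  have hm0 : ∀ z, 0 < m z := fun z => ENNReal.toReal_pos (hf z) (measure_ne_top _ _)
  set r : S → S → ℝ := fun v w => c v w / (m v * m w) with hr
  have hr0 : ∀ v w, 0 ≤ r v w := fun v w => div_nonneg (hc.nn v w) (mul_pos (hm0 v) (hm0 w)).le
  have hrc : ∀ v w, m v * m w * r v w = c v w := fun v w => by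
    have := (mul_pos (hm0 v) (hm0 w)).ne'
    simp only [hr]; exact mul_div_cancel₀ _ this
  set D : T × T → ENNReal := fun q => ENNReal.ofReal (r (f q.1) (f q.2)) with hD
  have hDm : Measurable D := Measurable.of_discrete
  set ρ := (μ.prod μ).withDensity D with hρ
  have hs1 : ∀ v, ∑ w, m w * r v w = 1 := fun v => by
    have : m v * ∑ w, m w * r v w = m v * 1 := by
      rw [Finset.mul_sum, mul_one]
      refine Eq.trans ?_ (hc.fst v)
      exact Finset.sum_congr rfl fun w _ => by rw [← hrc v w]; ring
    exact mul_left_cancel₀ (hm0 v).ne' this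
  have hs2 : ∀ w, ∑ v, m v * r v w = 1 := fun w => by
    have : m w * ∑ v, m v * r v w = m w * 1 := by
      rw [Finset.mul_sum, mul_one]
      refine Eq.trans ?_ (hc.snd w)
      exact Finset.sum_congr rfl fun v _ => by rw [← hrc v w]; ring
    exact mul_left_cancel₀ (hm0 w).ne' this
  have hfst : ρ.fst = μ := by
    refine Measure.ext_of_singleton fun x => ?_
    rw [Measure.fst_apply (measurableSet_singleton _), hρ, withDensity_apply _ (measurable_fst (measurableSet_singleton _)),
      ← prod_univ, ← Measure.prod_restrict, lintegral_prod _ hDm.aemeasurable, lintegral_singleton]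
    simp only [hD, Measure.restrict_univ]
    rw [int_f μ f (fun w => r (f x) w) (hr0 _), hs1]; simp
  have hsnd : ρ.snd = μ := by
    refine Measure.ext_of_singleton fun x => ?_
    rw [Measure.snd_apply (measurableSet_singleton _), hρ, withDensity_apply _ (measurable_snd (measurableSet_singleton _)),
      ← univ_prod, ← Measure.prod_restrict, lintegral_prod_symm _ hDm.aemeasurable, lintegral_singleton]
    simp only [hD, Measure.restrict_univ]
    rw [int_f μ f (fun w => r w (f x)) (fun w => hr0 w _), hs2]; simp
  have hprob : IsProbabilityMeasure ρ := ⟨by rw [← Measure.fst_univ, hfst, measure_univ]⟩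
  have hG : ∀ G : S → S → ℝ, Integrable (fun q : T × T => G (f q.1) (f q.2)) ρ ∧ 
        ∫ q : T × T, G (f q.1) (f q.2) ∂ρ = ∑ v, ∑ w, c v w * G v w := by
    intro G
    obtain ⟨h1, h2⟩ := int_ff μ f (fun v w => r v w * G v w)
    have e : ∀ q : T × T, (D q).toReal = r (f q.1) (f q.2) := fun q => ENNReal.toReal_ofReal (hr0 _ _)
    have hlt : ∀ᵐ x ∂(μ.prod μ), D x < ⊤ := Filter.Eventually.of_forall fun _ => ENNReal.ofReal_lt_top
    constructor
    · rw [hρ, integrable_withDensity_iff_integrable_smul₀' hDm.aemeasurable hlt]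
      simpa only [e, smul_eq_mul] using h1
    · rw [hρ, integral_withDensity_eq_integral_toReal_smul hDm hlt]
      simp only [e, smul_eq_mul]
      rw [h2]
      refine Finset.sum_congr rfl fun v _ => Finset.sum_congr rfl fun w _ => ?_
      rw [← mul_assoc]; change m v * m w * r v w * _ = _
      rw [hrc]
  refine ⟨ρ, hprob, hfst, hsnd, ?_, hG⟩
  rw [mutInfoR, klDivR, hfst, hsnd, info, ← (hG (fun v w => Real.log (r v w))).2]
  apply integral_congr_ae
  have h1 : ρ.rnDeriv (μ.prod μ) =ᵐ[μ.prod μ] D := Measure.rnDeriv_withDensity _ hDm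
  have h2 : ρ ≪ μ.prod μ := withDensity_absolutelyContinuous _ _
  filter_upwards [h2.ae_le h1] with q hq
  rw [hq]
  simp only [hD]
  rw [ENNReal.toReal_ofReal (hr0 _ _)]

lemma iS_le_iF (hd0 : ∀ t t', 0 ≤ d t t') (hds : ∀ t t', d t t' = d t' t) (hdt : ∀ a b c, d a c ≤ d a b + d b c)
    (f : T → S) (j : S → T) (hf : ∀ z, μ (f ⁻¹' {z}) ≠ 0) (hpm : Pmf (fun z => μ.real (f ⁻¹' {z})))
    {φ : S → E} (hφ : ∀ v w, ‖φ v - φ w‖ ^ 2 = d (j v) (j w) ^ 2)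
    {ε σ : ℝ} (hε : 0 < ε) (hσ : 0 < σ) (hi : Integrable (fun t => d t (j (f t)) ^ 2) μ) 
    (hle : ∫ t, d t (j (f t)) ^ 2 ∂μ ≤ ε ^ 2) :
    iSelf d μ (σ + 2 * ε) ≤ iF φ (fun z => μ.real (f ⁻¹' {z})) σ := by
  refine le_csInf (iF_ne φ hpm σ) ?_
  rintro _ ⟨c, hc, hcost, rfl⟩
  obtain ⟨ρ, hρ, h1, h2, h3, h4⟩ := lift_cpl f hf hc
  refine csInf_le (iS_bdd d μ _) ⟨ρ, hρ, h1, h2, ?_, h3.symm⟩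
  obtain ⟨i2, e2⟩ := h4 (fun v w => d (j v) (j w) ^ 2)
  have mg : Measurable (fun t => d t (j (f t)) ^ 2) := Measurable.of_discrete
  have i1 : Integrable (fun q : T × T => d q.1 (j (f q.1)) ^ 2) ρ := by
    rw [← h1, Measure.fst] at hi
    exact (integrable_map_measure mg.aestronglyMeasurable measurable_fst.aemeasurable).1 hi
  have e1 : ∫ q : T × T, d q.1 (j (f q.1)) ^ 2 ∂ρ ≤ ε ^ 2 := by
    refine le_trans (le_of_eq ?_) hle
    conv_rhs => rw [← h1, Measure.fst]
    exact (integral_map (f := fun t => d t (j (f t)) ^ 2) measurable_fst.aemeasurable mg.aestronglyMeasurable).symm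
  have i3 : Integrable (fun q : T × T => d q.2 (j (f q.2)) ^ 2) ρ := by
    rw [← h2, Measure.snd] at hi
    exact (integrable_map_measure mg.aestronglyMeasurable measurable_snd.aemeasurable).1 hi
  have e3 : ∫ q : T × T, d q.2 (j (f q.2)) ^ 2 ∂ρ ≤ ε ^ 2 := by
    refine le_trans (le_of_eq ?_) hle
    conv_rhs => rw [← h2, Measure.snd]
    exact (integral_map (f := fun t => d t (j (f t)) ^ 2) measurable_snd.aemeasurable mg.aestronglyMeasurable).symm
  have e2' : ∫ q : T × T, d (j (f q.1)) (j (f q.2)) ^ 2 ∂ρ ≤ σ ^ 2 := by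
    rw [e2]; refine le_trans (le_of_eq ?_) hcost
    simp only [cst, hφ]
  have iA : Integrable (fun q : T × T => d q.1 (j (f q.1)) ^ 2 / ε + d (j (f q.1)) (j (f q.2)) ^ 2 / σ) ρ :=
    (i1.div_const _).add (i2.div_const _)
  have iB : Integrable (fun q : T × T => d q.1 (j (f q.1)) ^ 2 / ε + d (j (f q.1)) (j (f q.2)) ^ 2 / σ + d q.2 (j (f q.2)) ^ 2 / ε) ρ :=
    iA.add (i3.div_const _)
  calc ∫ q : T × T, d q.1 q.2 ^ 2 ∂ρ 
      ≤ ∫ q : T × T, (σ + 2 * ε) * (d q.1 (j (f q.1)) ^ 2 / ε + d (j (f q.1)) (j (f q.2)) ^ 2 / σ + d q.2 (j (f q.2)) ^ 2 / ε) ∂ρ := by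
        refine integral_mono_of_nonneg (Filter.Eventually.of_forall fun _ => sq_nonneg _) (iB.const_mul _)
          (Filter.Eventually.of_forall fun q => ?_)
        refine le_trans (pow_le_pow_left₀ (hd0 _ _) ?_ 2) (cs3 hε hσ _ _ _)
        have a1 := hdt q.1 (j (f q.1)) q.2
        have a2 := hdt (j (f q.1)) (j (f q.2)) q.2
        rw [hds (j (f q.2)) q.2] at a2
        linarith
    _ = (σ + 2 * ε) * ((∫ q : T × T, d q.1 (j (f q.1)) ^ 2 ∂ρ) / ε + (∫ q : T × T, d (j (f q.1)) (j (f q.2)) ^ 2 ∂ρ) / σ + 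
          (∫ q : T × T, d q.2 (j (f q.2)) ^ 2 ∂ρ) / ε) := by
        rw [integral_const_mul, integral_add iA (i3.div_const _), integral_add (i1.div_const _) (i2.div_const _),
          integral_div, integral_div, integral_div]
    _ ≤ (σ + 2 * ε) * (ε ^ 2 / ε + σ ^ 2 / σ + ε ^ 2 / ε) := by gcongr
    _ = _ := by field_simp; ring

lemma int_shift (hd0 : ∀ t, d t t = 0) {ε : ℝ} (hε : 0 < ε) {φ : S → E} {m : S → ℝ} (hpm : Pmf m)
    (h : ∀ σ, 0 < σ → iSelf d μ (σ + 2 * ε) ≤ iF φ m σ) :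
    ∫ σ in Ioi (0 : ℝ), √(iSelf d μ σ) ≤ 2 * ε * √(∫ t, - Real.log (μ.real {t}) ∂μ) + ∫ σ in Ioi (0 : ℝ), √(iF φ m σ) := by
  have hi := iS_int (d := d) (μ := μ) hd0
  have hiF : IntegrableOn (fun σ => √(iF φ m σ)) (Ioi 0) := by
    obtain ⟨R, hR, hz⟩ := iF_large φ hpm
    have ha : AntitoneOn (fun σ => √(iF φ m σ)) (Icc 0 R) := fun a ha b hb hab =>
      Real.sqrt_le_sqrt (iF_anti φ hpm ha.1 hab)
    have h1 : IntegrableOn (fun σ => √(iF φ m σ)) (Icc 0 R) := ha.integrableOn_isCompact isCompact_Icc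
    have h2 : IntegrableOn (fun σ => √(iF φ m σ)) (Ioi R) := by
      refine (integrableOn_zero (ε' := ℝ)).congr_fun (fun x hx => ?_) measurableSet_Ioi
      simp [hz x (le_of_lt hx)]
    refine (h1.union h2).mono_set fun x hx => ?_
    rcases le_or_gt x R with h | h
    · exact Or.inl ⟨le_of_lt hx, h⟩
    · exact Or.inr h
  have hun : Ioi (0 : ℝ) = Ioc 0 (2 * ε) ∪ Ioi (2 * ε) := (Ioc_union_Ioi_eq_Ioi (by positivity)).symm
  have i1 : IntegrableOn (fun σ => √(iSelf d μ σ)) (Ioc 0 (2 * ε)) := hi.mono_set Ioc_subset_Ioi_self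
  have i2 : IntegrableOn (fun σ => √(iSelf d μ σ)) (Ioi (2 * ε)) := hi.mono_set (Ioi_subset_Ioi (by positivity))
  have e : ∫ σ in Ioi (0 : ℝ), √(iSelf d μ σ) = (∫ σ in Ioc 0 (2 * ε), √(iSelf d μ σ)) + ∫ σ in Ioi (2 * ε), √(iSelf d μ σ) := by
    conv_lhs => rw [hun]
    exact setIntegral_union (Ioc_disjoint_Ioi le_rfl) measurableSet_Ioi i1 i2
  rw [e]
  refine add_le_add ?_ ?_
  · calc _ ≤ ∫ σ in Ioc 0 (2 * ε), √(∫ t, - Real.log (μ.real {t}) ∂μ) := by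
          refine integral_mono i1 (integrable_const _) fun σ => Real.sqrt_le_sqrt (iS_le_diag hd0 σ)
      _ = _ := by
          rw [setIntegral_const, smul_eq_mul]; simp [hε.le]
  · have := (measurePreserving_add_right volume (2 * ε)).setIntegral_preimage_emb 
      (measurableEmbedding_addRight (2 * ε)) (fun σ => √(iSelf d μ σ)) (Ioi (2 * ε))
    have hp : (fun x : ℝ => x + 2 * ε) ⁻¹' Ioi (2 * ε) = Ioi 0 := by ext x; simp
    rw [hp] at this
    rw [← this]
    refine integral_mono_of_nonneg (Filter.Eventually.of_forall fun _ => Real.sqrt_nonneg _) hiF ?_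
    filter_upwards [ae_restrict_mem measurableSet_Ioi] with σ hσ
    exact Real.sqrt_le_sqrt (h σ hσ)
end

section
variable {Ω T : Type*} [MeasurableSpace Ω] {P : Measure Ω} [IsProbabilityMeasure P] {X : T → Ω → ℝ} {d : T → T → ℝ}

lemma d_pe {S : Type*} [Fintype S] (hm : ∀ t, Measurable (X t)) (hG : IsCenteredGaussianProcess P X)
    (hd : ∀ t t', d t t' = Real.sqrt (∫ ω, (X t ω - X t' ω) ^ 2 ∂P)) (j : S → T) (v w : S) :
    ‖pe (X := fun s => X (j s)) (fun s => hm (j s)) (gp_restrict hG j) v - pe (X := fun s => X (j s)) (fun s => hm (j s)) (gp_restrict hG j) w‖ = d (j v) (j w) := by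
  rw [hd, ← pe_dist (X := fun s => X (j s)) (fun s => hm (j s)) (gp_restrict hG j) v w, Real.sqrt_sq (norm_nonneg _)]

lemma d_tri (hm : ∀ t, Measurable (X t)) (hG : IsCenteredGaussianProcess P X)
    (hd : ∀ t t', d t t' = Real.sqrt (∫ ω, (X t ω - X t' ω) ^ 2 ∂P)) (a b c : T) : d a c ≤ d a b + d b c := by
  have h := d_pe hm hG hd ![a, b, c]
  have h1 := h 0 2
  have h2 := h 0 1
  have h3 := h 1 2
  simp only [Matrix.cons_val] at h1 h2 h3
  rw [← h1, ← h2, ← h3]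
  exact norm_sub_le_norm_sub_add_norm_sub _ _ _

lemma d_sym (hd : ∀ t t', d t t' = Real.sqrt (∫ ω, (X t ω - X t' ω) ^ 2 ∂P)) (a b : T) : d a b = d b a := by
  rw [hd, hd]; congr 1; refine integral_congr_ae (Filter.Eventually.of_forall fun ω => ?_); dsimp only; ring

lemma d_self (hd : ∀ t t', d t t' = Real.sqrt (∫ ω, (X t ω - X t' ω) ^ 2 ∂P)) (a : T) : d a a = 0 := by
  rw [hd]; simp

lemma X_mean (hm : ∀ t, Measurable (X t)) (hG : IsCenteredGaussianProcess P X) (t : T) : Integrable (X t) P ∧ ∫ ω, X t ω ∂P = 0 :=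
  ⟨(gp_memLp (S := Unit) (X := fun _ => X t) (fun _ => hm t) (gp_restrict hG fun _ => t) ()).integrable (by norm_num), 
    gp_mean (S := Unit) (X := fun _ => X t) (fun _ => hm t) (gp_restrict hG fun _ => t) ()⟩

lemma nondeg (hm : ∀ t, Measurable (X t)) (hG : IsCenteredGaussianProcess P X) :
    (∀ t, X t =ᵐ[P] 0) ∨ ∃ t1, ∀ x, P (X t1 ⁻¹' {x}) = 0 := by
  by_cases h : ∃ t1, ∀ x, P (X t1 ⁻¹' {x}) = 0
  · exact Or.inr h
  left
  intro t
  push Not at h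
  obtain ⟨v, hv⟩ := hG (Finsupp.single t 1)
  have e : (fun ω => (Finsupp.single t (1 : ℝ)).sum fun t a => a * X t ω) = X t := by ext ω; simp
  rw [e] at hv
  have hv0 : v = 0 := by
    by_contra hne
    obtain ⟨x, hx⟩ := h t
    haveI := nullSingletonClass_gaussianReal (μ := 0) hne
    refine hx ?_
    rw [← Measure.map_apply (hm t) (measurableSet_singleton _), hv, measure_singleton]
  rw [hv0, gaussianReal_zero_var] at hv
  have : ∀ᵐ x ∂(P.map (X t)), x = 0 := by rw [hv]; simp
  exact ae_of_ae_map (hm t).aemeasurable this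

lemma pair_symm (hm : ∀ t, Measurable (X t)) (hG : IsCenteredGaussianProcess P X) (t t1 : T) (A : Set ℝ) (hA : MeasurableSet A) :
    ∫ ω in (fun ω => |X t1 ω|) ⁻¹' A, X t ω ∂P = 0 := by
  set j : Bool → T := fun b => if b then t else t1 with hj
  have gv := gv_of (X := fun s => X (j s)) (fun s => hm (j s)) (gp_restrict hG j)
  have hmX : Measurable (fun ω s => X (j s) ω) := measurable_pi_lambda _ fun s => hm _
  set γ := P.map (fun ω s => X (j s) ω) with hγ
  haveI := gv.prob
  have mn : Measurable (fun x : Bool → ℝ => -x) := measurable_neg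
  have hsym : γ = γ.map (fun x => -x) := by
    haveI : IsProbabilityMeasure (γ.map (fun x => -x)) := Measure.isProbabilityMeasure_map mn.aemeasurable
    refine law_ext (fun c => (gv.mgf c).1) fun c => ?_
    rw [integral_map mn.aemeasurable (mexp c).aestronglyMeasurable, (gv.mgf c).2]
    have e : ∀ x : Bool → ℝ, ∑ w, c w * (-x) w = ∑ w, (-c) w * x w := fun x => by simp
    simp_rw [e]
    rw [(gv.mgf (-c)).2]
    congr 3
    simp only [Pi.neg_apply, neg_smul, Finset.sum_neg_distrib, norm_neg]
  set F : (Bool → ℝ) → ℝ := fun x => A.indicator (fun _ => x true) |x false| with hF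
  have hFm : Measurable F := by
    have : F = fun x => ((fun x : Bool → ℝ => |x false|) ⁻¹' A).indicator (fun x => x true) x := by
      ext x; rfl
    rw [this]
    exact Measurable.indicator (by fun_prop) ((show Measurable (fun x : Bool → ℝ => |x false|) by fun_prop) hA)
  have h1 : ∫ x, F x ∂γ = - ∫ x, F x ∂γ := by
    conv_lhs => rw [hsym]
    rw [integral_map mn.aemeasurable hFm.aestronglyMeasurable, ← integral_neg]
    refine integral_congr_ae (Filter.Eventually.of_forall fun x => ?_)
    have e : |(-x) false| = |x false| := abs_neg _
    simp only [hF]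
    rw [e]
    by_cases hx : |x false| ∈ A
    · rw [indicator_of_mem hx, indicator_of_mem hx]; rfl
    · rw [indicator_of_notMem hx, indicator_of_notMem hx, neg_zero]
  have h2 : ∫ x, F x ∂γ = ∫ ω in (fun ω => |X t1 ω|) ⁻¹' A, X t ω ∂P := by
    rw [hγ, integral_map hmX.aemeasurable hFm.aestronglyMeasurable, ← integral_indicator ((hm t1).abs hA)]
    refine integral_congr_ae (Filter.Eventually.of_forall fun x => ?_)
    rfl
  rw [← h2]; linarith

variable [MeasurableSpace T] [MeasurableSingletonClass T] [Countable T] {μ : Measure T} [IsProbabilityMeasure μ]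

lemma cx_nonneg (hm : ∀ t, Measurable (X t)) (hG : IsCenteredGaussianProcess P X) : 0 ≤ complexity P X μ := by
  rw [complexity]
  by_cases hb : BddAbove {r : ℝ | ∃ Z : Ω → T, Measurable Z ∧ P.map Z = μ ∧ r = ∫ ω, X (Z ω) ω ∂P}
  swap
  · rw [Real.sSup_of_not_bddAbove hb]
  rcases nondeg hm hG with h | ⟨t1, h⟩
  · apply Real.sSup_nonneg
    rintro r ⟨Z, hZ, -, rfl⟩
    rw [integral_eq_zero_of_ae]
    filter_upwards [ae_all_iff.2 h] with ω hω
    exact hω _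
  · refine le_csSup hb ?_
    have ma : Measurable (fun ω => |X t1 ω|) := (hm t1).abs
    haveI : IsProbabilityMeasure (P.map (fun ω => |X t1 ω|)) := Measure.isProbabilityMeasure_map ma.aemeasurable
    haveI : NullSingletonClass (P.map (fun ω => |X t1 ω|)) := ⟨fun x => by
      rw [Measure.map_apply ma (measurableSet_singleton _)]
      refine measure_mono_null (t := X t1 ⁻¹' {x} ∪ X t1 ⁻¹' {-x}) ?_ (measure_union_null (h x) (h (-x)))
      intro ω hω
      have : |X t1 ω| = x := hω
      rcases abs_choice (X t1 ω) with h | h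
      · left; change X t1 ω = x; linarith
      · right; change X t1 ω = -x; linarith⟩
    obtain ⟨φ, hφ, hφμ⟩ := atomless_map (P.map (fun ω => |X t1 ω|)) μ
    have hZ : Measurable (fun ω => φ |X t1 ω|) := hφ.comp ma
    refine ⟨fun ω => φ |X t1 ω|, hZ, ?_, ?_⟩
    · rw [← hφμ, Measure.map_map hφ ma]; rfl
    by_cases hI : Integrable (fun ω => X (φ |X t1 ω|) ω) P
    swap
    · rw [integral_undef hI]
    have hun : (⋃ t, (fun ω => φ |X t1 ω|) ⁻¹' {t}) = univ := by ext ω; simp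
    rw [← setIntegral_univ, ← hun, integral_iUnion (fun t => hZ (measurableSet_singleton t)) (by
      intro a b hab
      simp only [Function.onFun]
      exact Disjoint.preimage _ (by simpa using hab)) hI.integrableOn]
    have : ∀ t, ∫ ω in (fun ω => φ |X t1 ω|) ⁻¹' {t}, X (φ |X t1 ω|) ω ∂P = 0 := by
      intro t
      rw [← pair_symm hm hG t t1 (φ ⁻¹' {t}) (hφ (measurableSet_singleton _))]
      refine setIntegral_congr_fun (hZ (measurableSet_singleton t)) fun ω hω => ?_
      have : φ |X t1 ω| = t := hω
      simp only [this]
    simp_rw [this]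
    simp

lemma triv_case (hm : ∀ t, Measurable (X t)) (hG : IsCenteredGaussianProcess P X) (h : ∀ σ, iSelf d μ σ = 0) : 
    cRD * ∫ σ in Ioi (0 : ℝ), Real.sqrt (iSelf d μ σ) ≤ complexity P X μ := by
  simp only [h]
  simpa using cx_nonneg hm hG
end

section
variable {Ω T : Type*} [MeasurableSpace Ω] {P : Measure Ω} [IsProbabilityMeasure P] {X : T → Ω → ℝ} {d : T → T → ℝ}
 [MeasurableSpace T] [MeasurableSingletonClass T] [Countable T] {μ : Measure T} [IsProbabilityMeasure μ]

lemma pmf_f {S : Type*} [Fintype S] (μ : Measure T) [IsProbabilityMeasure μ] (f : T → S) : Pmf (fun z => μ.real (f ⁻¹' {z})) := by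
  refine ⟨fun z => measureReal_nonneg, ?_⟩
  have := int_f μ f (fun _ => 1) (fun _ => zero_le_one)
  simp only [ENNReal.ofReal_one, lintegral_const, measure_univ, mul_one] at this
  exact (ENNReal.ofReal_eq_one.1 this.symm)

lemma main_case (hm : ∀ t, Measurable (X t)) (hG : IsCenteredGaussianProcess P X)
    (hd : ∀ t t', d t t' = Real.sqrt (∫ ω, (X t ω - X t' ω) ^ 2 ∂P)) 
    (hlog : Integrable (fun t => Real.log (μ.real {t})) μ) (hd2 : Integrable (fun q : T × T => d q.1 q.2 ^ 2) (μ.prod μ))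
    (g : Ω → ℝ) (hg : Measurable g) (hga : ∀ x, P (g ⁻¹' {x}) = 0) :
    cRD * ∫ σ in Ioi (0 : ℝ), Real.sqrt (iSelf d μ σ) ≤ complexity P X μ := by
  classical
  obtain ⟨C, hC, hCi⟩ := exp_sq_const
  set c0 := ∫ x, Real.exp (C * x ^ 2) ∂(gaussianReal 0 1) with hc0
  have hc00 : 0 ≤ c0 := integral_nonneg fun _ => (Real.exp_pos _).le
  have hd0 : ∀ t t', 0 ≤ d t t' := fun t t' => by rw [hd]; exact Real.sqrt_nonneg _
  obtain ⟨t0, ht0i, ht0⟩ : ∃ t0, Integrable (fun t => d t t0 ^ 2) μ ∧ μ {t0} ≠ 0 := by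
    have h1 : ∀ᵐ y ∂μ, Integrable (fun x => d x y ^ 2) μ := hd2.prod_left_ae
    have h2 : ∀ᵐ y ∂μ, μ {y} ≠ 0 := by rw [ae_iff_of_countable]; exact fun x h => h
    exact (h1.and h2).exists
  have hs : Summable (bt C c0 d μ t0) := by
    have : Integrable (fun t => d t t0 ^ 2 / (4 * C) - Real.log (μ.real {t}) + c0) μ :=
      ((ht0i.div_const _).sub hlog).add (integrable_const _)
    exact int_summable this
  have hs2 : Summable (fun t => μ.real {t} * d t t0 ^ 2) := int_summable ht0i
  -- boundedness of the value set
  have hXm := X_mean (P := P) hm hG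
  have hbdd : BddAbove {r : ℝ | ∃ Z : Ω → T, Measurable Z ∧ P.map Z = μ ∧ r = ∫ ω, X (Z ω) ω ∂P} := by
    refine ⟨∑' t, (∅ : Set T)ᶜ.indicator (bt C c0 d μ t0) t, ?_⟩
    rintro r ⟨Z, hZ, hZμ, rfl⟩
    obtain ⟨h1, h2⟩ := tail hm hG hd hC hCi t0 hs (fun _ => t0) ∅ (fun t ht => ht.elim) (fun _ _ => rfl) hZ hZμ
    refine le_trans ?_ ((le_abs_self _).trans h2)
    have e : ∫ ω, X (Z ω) ω ∂P = ∫ ω, ((X (Z ω) ω - X t0 ω) + X t0 ω) ∂P := by simp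
    rw [e, integral_add h1 (hXm t0).1, (hXm t0).2, add_zero]
  set B := √(∫ t, - Real.log (μ.real {t}) ∂μ) with hB
  have key : ∀ ε : ℝ, 0 < ε → cRD * ∫ σ in Ioi (0 : ℝ), Real.sqrt (iSelf d μ σ) ≤ complexity P X μ + ε * (2 * cRD * B + 2) := by
    intro ε hε
    set F : T → ℝ := fun t => bt C c0 d μ t0 t + μ.real {t} * d t t0 ^ 2 with hF
    have hFs : Summable F := hs.add hs2
    have hF1 : ∀ t, bt C c0 d μ t0 t ≤ F t := fun t => le_add_of_nonneg_right (mul_nonneg measureReal_nonneg (sq_nonneg _))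
    have hF2 : ∀ t, μ.real {t} * d t t0 ^ 2 ≤ F t := fun t => le_add_of_nonneg_left (bt_nonneg hC hc00 d μ t0 t)
    have hF0 : ∀ t, 0 ≤ F t := fun t => (bt_nonneg hC hc00 d μ t0 t).trans (hF1 t)
    obtain ⟨s0, hs0⟩ := ((tendsto_order.1 (tendsto_tsum_compl_atTop_zero F)).2 (min ε (ε ^ 2)) (by positivity)).exists
    set s : Finset T := (insert t0 s0).filter (fun t => μ {t} ≠ 0) with hsdef
    have ht0s : t0 ∈ s := by simp [hsdef, ht0]
    have hst : ∑' t, (s : Set T)ᶜ.indicator F t ≤ min ε (ε ^ 2) := by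
      have e : ∑' b : {x // x ∉ s0}, F b = ∑' t, (s0 : Set T)ᶜ.indicator F t := tsum_subtype ((s0 : Set T)ᶜ) F
      rw [e] at hs0
      refine le_trans (Summable.tsum_le_tsum (fun t => ?_) (hFs.indicator _) (hFs.indicator _)) hs0.le
      by_cases h1 : t ∈ (s : Set T)ᶜ
      · by_cases h2 : t ∈ (s0 : Set T)ᶜ
        · rw [indicator_of_mem h1, indicator_of_mem h2]
        · rw [indicator_of_mem h1, indicator_of_notMem h2]
          have h3 : t ∈ s0 := by simpa using h2
          have h4 : t ∉ s := by simpa using h1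
          have h5 : μ {t} = 0 := by
            by_contra h5
            exact h4 (by simp [hsdef, h3, h5])
          have h6 : μ.real {t} = 0 := by rw [measureReal_def, h5]; rfl
          simp [hF, bt, h6]
      · rw [indicator_of_notMem h1]
        exact indicator_nonneg (fun t _ => hF0 t) t
    have hmin1 : ∑' t, (s : Set T)ᶜ.indicator F t ≤ ε := hst.trans (min_le_left _ _)
    have hmin2 : ∑' t, (s : Set T)ᶜ.indicator F t ≤ ε ^ 2 := hst.trans (min_le_right _ _)
    set f : T → {t // t ∈ s} := fun t => if h : t ∈ s then ⟨t, h⟩ else ⟨t0, ht0s⟩ with hfdef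
    have hf1 : ∀ t ∈ s, (f t : T) = t := fun t ht => by simp [hfdef, ht]
    have hf2 : ∀ t, t ∉ s → (f t : T) = t0 := fun t ht => by simp [hfdef, ht]
    have hfne : ∀ z, μ (f ⁻¹' {z}) ≠ 0 := by
      intro z h
      have hz : μ {(z : T)} ≠ 0 := (Finset.mem_filter.1 z.2).2
      refine hz (measure_mono_null ?_ h)
      rw [singleton_subset_iff]
      exact Subtype.ext (hf1 z z.2)
    have hpm := pmf_f μ f
    have hdf : ∀ t, d t (f t) ^ 2 = (s : Set T)ᶜ.indicator (fun t => d t t0 ^ 2) t := by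
      intro t
      by_cases ht : t ∈ s
      · rw [indicator_of_notMem (by simpa using ht), hf1 t ht, d_self hd]; simp
      · rw [indicator_of_mem (by simpa using ht), hf2 t ht]
    have hfi : Integrable (fun t => d t (f t) ^ 2) μ := by
      simp_rw [hdf]
      exact ht0i.indicator (Set.to_countable _).measurableSet
    have hfle : ∫ t, d t (f t) ^ 2 ∂μ ≤ ε ^ 2 := by
      rw [integral_countable' hfi]
      refine le_trans (Summable.tsum_le_tsum (fun t => ?_) (int_summable hfi) (hFs.indicator _)) hmin2
      rw [hdf, smul_eq_mul]
      by_cases ht : t ∈ (s : Set T)ᶜ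
      · rw [indicator_of_mem ht, indicator_of_mem ht]; exact hF2 t
      · rw [indicator_of_notMem ht, indicator_of_notMem ht, mul_zero]
    have gv := gv_of (X := fun z : {t // t ∈ s} => X z) (fun z => hm z) (gp_restrict hG _)
    set φ := pe (X := fun z : {t // t ∈ s} => X z) (fun z => hm z) (gp_restrict hG _) with hφ
    have hφd : ∀ v w, ‖φ v - φ w‖ ^ 2 = d v w ^ 2 := fun v w => by
      rw [← d_pe hm hG hd (fun z : {t // t ∈ s} => (z : T)) v w]
    have hsh := int_shift (d := d) (μ := μ) (fun t => d_self hd t) hε (φ := φ) hpm (fun σ hσ =>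
      iS_le_iF hd0 (d_sym hd) (d_tri hm hG hd) f (fun z => (z : T)) hfne hpm hφd hε hσ hfi hfle)
    have hcore := gv.core hpm (fun z => ENNReal.toReal_pos (hfne z) (measure_ne_top _ _)) (W := complexity P X μ + ε + ε) (by
      intro p hp hk
      obtain ⟨Z, hZ, hZμ, hle⟩ := derand (X := fun z : {t // t ∈ s} => X z) (fun z => hm z) (gp_restrict hG _) g hg hga f μ hfne hp hk ε hε
      obtain ⟨h1, h2⟩ := tail hm hG hd hC hCi t0 hs (fun t => (f t : T)) s (fun t ht => hf1 t ht) (fun t ht => hf2 t ht) hZ hZμ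
      have h3 : ∑' t, (s : Set T)ᶜ.indicator (bt C c0 d μ t0) t ≤ ε := by
        refine le_trans (Summable.tsum_le_tsum (fun t => ?_) (hs.indicator _) (hFs.indicator _)) hmin1
        exact indicator_le_indicator (hF1 t)
      have iB : Integrable (fun ω => ∑ z : {t // t ∈ s}, |X z ω|) P := integrable_finsetSum _ fun z _ => (hXm z).1.abs
      have iXf : Integrable (fun ω => X (f (Z ω)) ω) P := by
        refine iB.mono' (mXZ hm hZ (fun t => (f t : T))).aestronglyMeasurable (Filter.Eventually.of_forall fun ω => ?_)
        rw [Real.norm_eq_abs]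
        exact Finset.single_le_sum (f := fun z : {t // t ∈ s} => |X z ω|) (fun _ _ => abs_nonneg _) (Finset.mem_univ (f (Z ω)))
      have e : ∫ ω, X (Z ω) ω ∂P = ∫ ω, (X (Z ω) ω - X (f (Z ω)) ω) ∂P + ∫ ω, X (f (Z ω)) ω ∂P := by
        rw [← integral_add h1 iXf]; simp
      have h4 : ∫ ω, X (Z ω) ω ∂P ≤ complexity P X μ := le_csSup hbdd ⟨Z, hZ, hZμ, rfl⟩
      have h5 := (neg_abs_le (∫ ω, (X (Z ω) ω - X (f (Z ω)) ω) ∂P))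
      linarith)
    set I := ∫ σ in Ioi (0 : ℝ), √(iF φ (fun z => μ.real (f ⁻¹' {z})) σ) with hI
    have hI0 : 0 ≤ I := integral_nonneg fun _ => Real.sqrt_nonneg _
    have hl : 0 < Real.log 64 := Real.log_pos (by norm_num)
    have h1 : cRD * I ≤ complexity P X μ + ε + ε := by
      have := mul_le_mul_of_nonneg_right cRD_le hI0
      refine le_of_mul_le_mul_right ?_ hl
      linarith
    have h2 := mul_le_mul_of_nonneg_left hsh cRD_nonneg
    refine h2.trans ?_
    rw [mul_add, ← hB]
    linarith
  refine le_of_forall_pos_le_add fun e he => ?_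
  have hB0 : 0 ≤ B := Real.sqrt_nonneg _
  have hK : 0 < 2 * cRD * B + 2 := by have := cRD_nonneg; positivity
  have := key (e / (2 * cRD * B + 2)) (by positivity)
  rwa [div_mul_cancel₀ _ hK.ne'] at this
end

/-- sharpness of the rate-distortion integral for Gaussian processes:
`w(μ) ≥ c ∫₀^∞ √(i(σ)) dσ ≥ c ∫₀^{σ_m(μ)} √(R_μ(σ²)) dσ`. -/
theorem statement2 {Ω T : Type*} [MeasurableSpace Ω] [MeasurableSpace T]
    [MeasurableSingletonClass T] [Countable T] [Nonempty T]
    (P : Measure Ω) [IsProbabilityMeasure P]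
    (X : T → Ω → ℝ) (hmeas : ∀ t, Measurable (X t))
    (hgauss : IsCenteredGaussianProcess P X)
    (d : T → T → ℝ)
    (hd : ∀ t t', d t t' = Real.sqrt (∫ ω, (X t ω - X t' ω) ^ 2 ∂P))
    (μ : Measure T) [IsProbabilityMeasure μ] :
    cRD * ∫ σ in Ioi (0 : ℝ), Real.sqrt (iSelf d μ σ) ≤ complexity P X μ ∧
    cRD * ∫ σ in Ioc 0 (sigmaM d μ), Real.sqrt (rateDistortion d μ (σ ^ 2)) ≤
      cRD * ∫ σ in Ioi (0 : ℝ), Real.sqrt (iSelf d μ σ) := by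
  refine ⟨?_, second_ineq (d_self hd)⟩
  by_cases hlog : Integrable (fun t => Real.log (μ.real {t})) μ
  swap
  · refine triv_case hmeas hgauss fun σ => le_antisymm ?_ (iS_nonneg σ)
    refine (iS_le_diag (d_self hd) σ).trans (le_of_eq ?_)
    rw [integral_neg, integral_undef hlog, neg_zero]
  by_cases hd2 : Integrable (fun q : T × T => d q.1 q.2 ^ 2) (μ.prod μ)
  swap
  · exact triv_case hmeas hgauss fun σ => iS_zero (by rw [integral_undef hd2]; positivity)
  rcases nondeg hmeas hgauss with h | ⟨t1, h⟩
  · refine triv_case hmeas hgauss fun σ => iS_zero ?_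
    have hz : ∀ t t', d t t' = 0 := fun t t' => by
      rw [hd, integral_eq_zero_of_ae, Real.sqrt_zero]
      filter_upwards [h t, h t'] with ω h1 h2
      simp [h1, h2]
    simp only [hz]; simp; positivity
  · exact main_case hmeas hgauss hd hlog hd2 (X t1) (hmeas t1) h

end
end

section
/- Let y : (0,∞) → (0,∞) be a decreasing function of x. Then 2·∫₀^∞ y(x) dx ≤ ∫₀^∞ inf_{x∈(0,∞)} { α^{−2}·x² + y(x)² } dα ≤ 4·∫₀^∞ y(x) dx. -/
open MeasureTheory Set

noncomputable section

def kk (y : ℝ → ℝ) (α x : ℝ) : ENNReal :=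
  {p : ℝ × ℝ | p.2 ≤ p.1 * y p.2}.indicator
    (fun p => ENNReal.ofReal (2 * p.2 * (p.1 ^ 2)⁻¹)) (α, x)

lemma kk_swap (y : ℝ → ℝ) (hdec : AntitoneOn y (Ioi (0 : ℝ))) :
    ∫⁻ α in Ioi (0 : ℝ), ∫⁻ x in Ioi (0 : ℝ), kk y α x =
    ∫⁻ x in Ioi (0 : ℝ), ∫⁻ α in Ioi (0 : ℝ), kk y α x := by
  apply lintegral_lintegral_swap
  have hy : AEMeasurable y (volume.restrict (Ioi (0 : ℝ))) :=
    aemeasurable_restrict_of_antitoneOn measurableSet_Ioi hdec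
  have h2 : AEMeasurable (fun p : ℝ × ℝ => y p.2)
      ((volume.restrict (Ioi (0 : ℝ))).prod (volume.restrict (Ioi (0 : ℝ)))) :=
    hy.comp_snd
  have : Function.uncurry (kk y) = {p : ℝ × ℝ | p.2 ≤ p.1 * y p.2}.indicator
    (fun p => ENNReal.ofReal (2 * p.2 * (p.1 ^ 2)⁻¹)) := by
    ext ⟨a, b⟩; rfl
  rw [this]
  apply AEMeasurable.indicator₀
  · fun_prop
  · exact nullMeasurableSet_le (by fun_prop) (by fun_prop)

lemma kk_inner (y : ℝ → ℝ) (x : ℝ) (hx : 0 < x) (hy : 0 < y x) :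
    ∫⁻ α in Ioi (0 : ℝ), kk y α x = ENNReal.ofReal (2 * y x) := by
  have hc : 0 < x / y x := by positivity
  have h1 : ∫⁻ α in Ioi (0 : ℝ), kk y α x =
      ∫⁻ α in Ioi (0 : ℝ), (Ici (x / y x)).indicator
        (fun α => ENNReal.ofReal (2 * x * α ^ (-2 : ℝ))) α := by
    apply setLIntegral_congr_fun measurableSet_Ioi
    intro α hα
    have hα : 0 < α := hα
    simp only [kk, indicator, mem_ofPred_eq, mem_Ici, div_le_iff₀ hy]
    rw [Real.rpow_neg hα.le]
    norm_num
  rw [h1, setLIntegral_indicator measurableSet_Ici]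
  have h2 : Ici (x / y x) ∩ Ioi 0 = Ici (x / y x) := by
    apply inter_eq_left.2
    intro a ha
    exact lt_of_lt_of_le hc ha
  rw [h2, setLIntegral_congr Ioi_ae_eq_Ici.symm, ← ofReal_integral_eq_lintegral_ofReal]
  · rw [integral_const_mul, integral_Ioi_rpow_of_lt (by norm_num) hc]
    congr 1
    norm_num
    rw [Real.rpow_neg_one]
    field_simp
  · exact (integrableOn_Ioi_rpow_of_lt (by norm_num) hc).const_mul _
  · filter_upwards [ae_restrict_mem measurableSet_Ioi] with a ha
    have : 0 < a := lt_trans hc ha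
    simp only [Pi.zero_apply]
    positivity

lemma kk_total (y : ℝ → ℝ) (hpos : ∀ x : ℝ, 0 < x → 0 < y x)
    (hdec : AntitoneOn y (Ioi (0 : ℝ))) :
    ∫⁻ α in Ioi (0 : ℝ), ∫⁻ x in Ioi (0 : ℝ), kk y α x =
    2 * ∫⁻ x in Ioi (0 : ℝ), ENNReal.ofReal (y x) := by
  rw [kk_swap y hdec, ← lintegral_const_mul' _ _ (by simp)]
  apply setLIntegral_congr_fun measurableSet_Ioi
  intro x hx
  simp only
  rw [kk_inner y x hx (hpos x hx), ENNReal.ofReal_mul (by norm_num)]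
  simp

lemma kk_m (y : ℝ → ℝ) (hpos : ∀ x : ℝ, 0 < x → 0 < y x)
    (hdec : AntitoneOn y (Ioi (0 : ℝ))) (α : ℝ) (hα : 0 < α) :
    ∃ m : ℝ, 0 < m ∧ (∀ x, 0 < x → x < m → m ≤ α * y x) ∧ (∀ x, m < x → α * y x < x) := by
  let S : Set ℝ := {x | 0 < x ∧ x ≤ α * y x}
  have hy1 := hpos 1 one_pos
  have hb : BddAbove S := by
    refine ⟨max 1 (α * y 1), ?_⟩
    rintro x ⟨hx, h⟩
    by_cases h1 : x ≤ 1
    · exact le_max_of_le_left h1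
    · apply le_max_of_le_right
      refine h.trans ?_
      gcongr
      exact hdec (by simp) hx (by linarith)
  have hm0 : min 1 (α * y 1) ∈ S := by
    have h0 : 0 < min 1 (α * y 1) := by positivity
    refine ⟨h0, (min_le_right _ _).trans ?_⟩
    gcongr
    exact hdec h0 (by simp) (min_le_left _ _)
  refine ⟨sSup S, lt_of_lt_of_le hm0.1 (le_csSup hb hm0), ?_, ?_⟩
  · intro x hx hxm
    apply csSup_le ⟨_, hm0⟩
    intro z hz
    obtain ⟨w, hw, hxw⟩ := exists_lt_of_lt_csSup ⟨_, hm0⟩ hxm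
    rcases le_total z x with h | h
    · have : α * y w ≤ α * y x := by
        gcongr
        exact hdec hx hw.1 hxw.le
      linarith [hw.2]
    · have : α * y z ≤ α * y x := by
        gcongr
        exact hdec hx hz.1 h
      linarith [hz.2]
  · intro x hx
    by_contra! h
    have h0 : 0 < x := lt_trans (lt_of_lt_of_le hm0.1 (le_csSup hb hm0)) hx
    exact absurd (le_csSup hb (show x ∈ S from ⟨h0, h⟩)) (not_le.2 hx)

lemma kk_alpha (y : ℝ → ℝ) (α m : ℝ) (hα : 0 < α) (hm : 0 < m)
    (h1 : ∀ x, 0 < x → x < m → m ≤ α * y x) (h2 : ∀ x, m < x → α * y x < x) :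
    ∫⁻ x in Ioi (0 : ℝ), kk y α x = ENNReal.ofReal (m ^ 2 * (α ^ 2)⁻¹) := by
  have e1 : ∫⁻ x in Ioi (0 : ℝ), kk y α x = ∫⁻ x in Ioi (0 : ℝ), (Ioc 0 m).indicator
      (fun x => ENNReal.ofReal (2 * x * (α ^ 2)⁻¹)) x := by
    apply lintegral_congr_ae
    have hne : ∀ᵐ x ∂(volume.restrict (Ioi (0 : ℝ))), x ≠ m :=
      ae_restrict_of_ae (Measure.ae_ne volume m)
    filter_upwards [ae_restrict_mem measurableSet_Ioi, hne] with x hx hxm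
    have hx : 0 < x := hx
    simp only [kk, indicator, mem_ofPred_eq, mem_Ioc]
    have : x ≤ α * y x ↔ 0 < x ∧ x ≤ m := by
      constructor
      · intro h
        refine ⟨hx, ?_⟩
        by_contra! h'
        linarith [h2 x h']
      · rintro ⟨_, h⟩
        exact h.trans (h1 x hx (lt_of_le_of_ne h hxm))
    simp only [this]
  rw [e1, setLIntegral_indicator measurableSet_Ioc]
  have e2 : Ioc 0 m ∩ Ioi 0 = Ioc 0 m := inter_eq_left.2 (fun a ha => ha.1)
  rw [e2, ← ofReal_integral_eq_lintegral_ofReal]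
  · rw [← intervalIntegral.integral_of_le hm.le]
    rw [intervalIntegral.integral_mul_const, intervalIntegral.integral_const_mul, integral_id]
    congr 1
    ring
  · exact (Continuous.integrableOn_Ioc (by fun_prop))
  · filter_upwards [ae_restrict_mem measurableSet_Ioc] with a ha
    have : 0 < a := ha.1
    simp only [Pi.zero_apply]
    positivity

lemma F_bounds (y : ℝ → ℝ) (hpos : ∀ x : ℝ, 0 < x → 0 < y x) (α m : ℝ) (hα : 0 < α) (hm : 0 < m)
    (h1 : ∀ x, 0 < x → x < m → m ≤ α * y x) (h2 : ∀ x, m < x → α * y x < x) :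
    m ^ 2 * (α ^ 2)⁻¹ ≤ sInf {v : ℝ | ∃ x : ℝ, 0 < x ∧ v = (α ^ 2)⁻¹ * x ^ 2 + y x ^ 2} ∧
    sInf {v : ℝ | ∃ x : ℝ, 0 < x ∧ v = (α ^ 2)⁻¹ * x ^ 2 + y x ^ 2} ≤
      2 * (m ^ 2 * (α ^ 2)⁻¹) := by
  constructor
  · refine le_csInf ⟨(α ^ 2)⁻¹ * 1 ^ 2 + y 1 ^ 2, 1, one_pos, rfl⟩ ?_
    rintro v ⟨x, hx, rfl⟩
    by_cases h : x < m
    · have h3 : m ^ 2 ≤ (α * y x) ^ 2 := by gcongr; exact h1 x hx h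
      have h4 : m ^ 2 * (α ^ 2)⁻¹ ≤ y x ^ 2 := by
        rw [← div_eq_mul_inv, div_le_iff₀ (by positivity)]
        linarith [mul_pow α (y x) 2]
      have : 0 ≤ (α ^ 2)⁻¹ * x ^ 2 := by positivity
      linarith
    · push Not at h
      have h3 : (α ^ 2)⁻¹ * m ^ 2 ≤ (α ^ 2)⁻¹ * x ^ 2 := by gcongr
      nlinarith [sq_nonneg (y x)]
  · have hb : BddBelow {v : ℝ | ∃ x : ℝ, 0 < x ∧ v = (α ^ 2)⁻¹ * x ^ 2 + y x ^ 2} := by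
      refine ⟨0, ?_⟩
      rintro v ⟨x, hx, rfl⟩
      positivity
    have key : ∀ x, m < x →
        sInf {v : ℝ | ∃ x : ℝ, 0 < x ∧ v = (α ^ 2)⁻¹ * x ^ 2 + y x ^ 2} ≤
          2 * (x ^ 2 * (α ^ 2)⁻¹) := by
      intro x hx
      have hx0 := hm.trans hx
      refine (csInf_le hb ⟨x, hx0, rfl⟩).trans ?_
      have hy := hpos x hx0
      have h3 : (α * y x) ^ 2 ≤ x ^ 2 := by gcongr; exact (h2 x hx).le
      have h4 : y x ^ 2 ≤ x ^ 2 * (α ^ 2)⁻¹ := by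
        rw [← div_eq_mul_inv, le_div_iff₀ (by positivity)]
        linarith [mul_pow α (y x) 2]
      linarith
    have ht : Filter.Tendsto (fun x : ℝ => 2 * (x ^ 2 * (α ^ 2)⁻¹)) (nhdsWithin m (Ioi m))
        (nhds (2 * (m ^ 2 * (α ^ 2)⁻¹))) :=
      (Continuous.tendsto (by fun_prop) m).mono_left nhdsWithin_le_nhds
    apply ge_of_tendsto ht
    filter_upwards [self_mem_nhdsWithin] with x hx
    exact key x hx

/-- penalized form of an integral of a decreasing function: for decreasing
`y : (0,∞) → (0,∞)`,
`2∫₀^∞ y dx ≤ ∫₀^∞ inf_{x>0} {α⁻²x² + y(x)²} dα ≤ 4∫₀^∞ y dx` (Lebesgue integrals). -/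
theorem statement16 (y : ℝ → ℝ) (hpos : ∀ x : ℝ, 0 < x → 0 < y x)
    (hdec : AntitoneOn y (Ioi (0 : ℝ))) :
    2 * ∫⁻ x in Ioi (0 : ℝ), ENNReal.ofReal (y x) ≤
      (∫⁻ α in Ioi (0 : ℝ), ENNReal.ofReal
        (sInf {v : ℝ | ∃ x : ℝ, 0 < x ∧ v = (α ^ 2)⁻¹ * x ^ 2 + y x ^ 2})) ∧
    (∫⁻ α in Ioi (0 : ℝ), ENNReal.ofReal
        (sInf {v : ℝ | ∃ x : ℝ, 0 < x ∧ v = (α ^ 2)⁻¹ * x ^ 2 + y x ^ 2})) ≤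
      4 * ∫⁻ x in Ioi (0 : ℝ), ENNReal.ofReal (y x) := by
  rw [show (4 : ENNReal) = 2 * 2 by norm_num, mul_assoc, ← kk_total y hpos hdec]
  constructor
  · apply setLIntegral_mono' measurableSet_Ioi
    intro α hα
    obtain ⟨m, hm, h1, h2⟩ := kk_m y hpos hdec α hα
    rw [kk_alpha y α m hα hm h1 h2]
    exact ENNReal.ofReal_le_ofReal (F_bounds y hpos α m hα hm h1 h2).1
  · rw [← lintegral_const_mul' _ _ (by simp)]
    apply setLIntegral_mono' measurableSet_Ioi
    intro α hα
    obtain ⟨m, hm, h1, h2⟩ := kk_m y hpos hdec α hα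
    rw [kk_alpha y α m hα hm h1 h2]
    refine (ENNReal.ofReal_le_ofReal (F_bounds y hpos α m hα hm h1 h2).2).trans ?_
    rw [ENNReal.ofReal_mul (by norm_num)]
    simp
end
end
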